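/- Assume condition (C). Suppose either (K,c) ∈ D₁ with μ_b(K,c) < μ_f(K,c) (equivalently, by Proposition BMBF, c₁(K) < c < c_*(K), i.e. (K,c) ∈ D_{1,2}), or (K,c) ∈ D₂. Then there exists a unique real number μ²_pul = μ²_pul(K,c) such that the system (TV) with parameter μ has a solution with u > 0 satisfying condition (HO) with level ū = u₂ if and only if μ = μ²_pul. -/

import Mathlib

open Set Filter MeasureTheory

noncomputable section

namespace TrafficTW

/-- `f(u) = (K u - V(u) - c)/K`. -/
def fTV (V : ℝ → ℝ) (K c u : ℝ) : ℝ := (K * u - V u - c) / K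

/-- `f'(u) = (K - V'(u))/K`. -/
def fdTV (V' : ℝ → ℝ) (K u : ℝ) : ℝ := (K - V' u) / K

/-- `h(u,μ) = f'(u) + μ`. -/
def hTV (V' : ℝ → ℝ) (K μ u : ℝ) : ℝ := fdTV V' K u + μ

/-- `g₁(u) = 1/(τ κ(1/u))`. -/
def g1TV (κ : ℝ → ℝ) (τ u : ℝ) : ℝ := 1 / (τ * κ (1 / u))

/-- `g₂(u) = u/(2 τ κ(1/u))`. -/
def g2TV (κ : ℝ → ℝ) (τ u : ℝ) : ℝ := u / (2 * τ * κ (1 / u))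

/-- The traveling-wave system (TV): `u' = w`, `w' = g₁ f + g₂ h w`. -/
def IsTVSol (V V' κ : ℝ → ℝ) (τ K c μ : ℝ) (u w : ℝ → ℝ) : Prop :=
  (∀ z, HasDerivAt u (w z) z) ∧
  (∀ z, HasDerivAt w
    (g1TV κ τ (u z) * fTV V K c (u z) + g2TV κ τ (u z) * hTV V' K μ (u z) * w z) z)

/-- Assumption (A1), where `V'` and `V''` are the first and second derivatives of `V`. -/
def A1 (V V' V'' : ℝ → ℝ) (UM : ℝ) : Prop :=
  (∀ u ∈ Ici (0:ℝ), HasDerivWithinAt V (V' u) (Ici 0) u) ∧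
  ContinuousOn V' (Ici 0) ∧
  (∀ u ∈ Ioi (0:ℝ), HasDerivAt V' (V'' u) u) ∧
  ContinuousOn V'' (Ioi 0) ∧
  (∀ u, 0 < u → 0 < V' u) ∧ (∃ M, ∀ u, 0 < u → V' u ≤ M) ∧
  Tendsto V' atTop (nhds 0) ∧
  0 < UM ∧ (∀ u, 0 < u → V' u ≤ V' UM) ∧
  (∀ u, 0 < u → (V'' u = 0 ↔ u = UM))

/-- Assumption (A2). -/
def A2 (κ : ℝ → ℝ) : Prop :=
  ContDiffOn ℝ 1 κ (Ioi 0) ∧ ∀ ρ, 0 < ρ → 0 < κ ρ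

/-- `c₀ = -V(0)`. -/
def c0v (V : ℝ → ℝ) : ℝ := - V 0

/-- `c_M(K) = K u_M(K) - V(u_M(K))`, where `uMx` is the function `K ↦ u_M(K)`. -/
def cMf (V : ℝ → ℝ) (uMx : ℝ → ℝ) (K : ℝ) : ℝ := K * uMx K - V (uMx K)

/-- `c_m(K) = K u_m(K) - V(u_m(K))`, where `umx` is the function `K ↦ u_m(K)`. -/
def cmf (V : ℝ → ℝ) (umx : ℝ → ℝ) (K : ℝ) : ℝ := K * umx K - V (umx K)

/-- `c₁(K) = max (c₀, c_m(K))`. -/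
def c1f (V : ℝ → ℝ) (umx : ℝ → ℝ) (K : ℝ) : ℝ := max (c0v V) (cmf V umx K)

/-- `uMx K = u_M(K)` is the unique local maximum point of `u ↦ K u - V(u)`, characterized
by `u_M(K) ∈ (0, U_M)` and `V'(u_M(K)) = K`, for `K ∈ (K₀, K_M)`. -/
def UMaxHyp (V' : ℝ → ℝ) (UM : ℝ) (uMx : ℝ → ℝ) : Prop :=
  ∀ K, V' 0 < K → K < V' UM → uMx K ∈ Ioo 0 UM ∧ V' (uMx K) = K

/-- `umx K = u_m(K)` is the unique local minimum point of `u ↦ K u - V(u)`, characterized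
by `u_m(K) ∈ (U_M, ∞)` and `V'(u_m(K)) = K`, for `K ∈ (0, K_M)`. -/
def UMinHyp (V' : ℝ → ℝ) (UM : ℝ) (umx : ℝ → ℝ) : Prop :=
  ∀ K, 0 < K → K < V' UM → UM < umx K ∧ V' (umx K) = K

/-- Characterization of `K₁ ∈ (K₀, K_M)`: `c_m(K) < c₀` for `K < K₁` and `c_m(K) > c₀`
for `K > K₁`. -/
def K1Hyp (V V' : ℝ → ℝ) (UM : ℝ) (umx : ℝ → ℝ) (K₁ : ℝ) : Prop :=
  V' 0 < K₁ ∧ K₁ < V' UM ∧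
  (∀ K, 0 < K → K < K₁ → cmf V umx K < c0v V) ∧
  cmf V umx K₁ = c0v V ∧
  (∀ K, K₁ < K → K < V' UM → c0v V < cmf V umx K)

/-- The parameter region `D₁`. -/
def D1 (V V' : ℝ → ℝ) (UM : ℝ) (uMx umx : ℝ → ℝ) : Set (ℝ × ℝ) :=
  {p | V' 0 < p.1 ∧ p.1 < V' UM ∧ c1f V umx p.1 < p.2 ∧ p.2 < cMf V uMx p.1}

/-- The parameter region `D₂`. -/
def D2 (V V' : ℝ → ℝ) (umx : ℝ → ℝ) (K₁ : ℝ) : Set (ℝ × ℝ) :=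
  {p | (V' 0 < p.1 ∧ p.1 < K₁ ∧ p.2 = c0v V) ∨
       (0 < p.1 ∧ p.1 < K₁ ∧ cmf V umx p.1 < p.2 ∧ p.2 < c0v V)}

/-- For `(K,c) ∈ D₁`: `u₁ < u₀ < u₂` are the exactly three positive zeros of `f`. -/
def ZerosD1 (V : ℝ → ℝ) (K c u1 u0 u2 : ℝ) : Prop :=
  0 < u1 ∧ u1 < u0 ∧ u0 < u2 ∧
  fTV V K c u1 = 0 ∧ fTV V K c u0 = 0 ∧ fTV V K c u2 = 0 ∧
  ∀ u, 0 < u → fTV V K c u = 0 → u = u1 ∨ u = u0 ∨ u = u2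

/-- For `(K,c) ∈ D₂`: `u₀ < u₂` are the exactly two positive zeros of `f`. -/
def ZerosD2 (V : ℝ → ℝ) (K c u0 u2 : ℝ) : Prop :=
  0 < u0 ∧ u0 < u2 ∧ fTV V K c u0 = 0 ∧ fTV V K c u2 = 0 ∧
  ∀ u, 0 < u → fTV V K c u = 0 → u = u0 ∨ u = u2

/-- Condition (HE1). -/
def HE1 (u1 u2 : ℝ) (u w : ℝ → ℝ) : Prop :=
  Tendsto u atBot (nhds u1) ∧ Tendsto u atTop (nhds u2) ∧
  Tendsto w atBot (nhds 0) ∧ Tendsto w atTop (nhds 0) ∧ ∀ z, 0 < w z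

/-- Condition (HE2). -/
def HE2 (u1 u2 : ℝ) (u w : ℝ → ℝ) : Prop :=
  Tendsto u atBot (nhds u2) ∧ Tendsto u atTop (nhds u1) ∧
  Tendsto w atBot (nhds 0) ∧ Tendsto w atTop (nhds 0) ∧ ∀ z, w z < 0

/-- Condition (HO) with level `ub`. -/
def HO (ub : ℝ) (u w : ℝ → ℝ) : Prop :=
  Tendsto u atBot (nhds ub) ∧ Tendsto u atTop (nhds ub) ∧
  Tendsto w atBot (nhds 0) ∧ Tendsto w atTop (nhds 0) ∧
  ¬ (∀ z, u z = ub ∧ w z = 0)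

/-- (TV) with parameter `μ` has a positive solution satisfying (HE1). -/
def HasHE1 (V V' κ : ℝ → ℝ) (τ K c μ u1 u2 : ℝ) : Prop :=
  ∃ u w : ℝ → ℝ, IsTVSol V V' κ τ K c μ u w ∧ (∀ z, 0 < u z) ∧ HE1 u1 u2 u w

/-- (TV) with parameter `μ` has a positive solution satisfying (HE2). -/
def HasHE2 (V V' κ : ℝ → ℝ) (τ K c μ u1 u2 : ℝ) : Prop :=
  ∃ u w : ℝ → ℝ, IsTVSol V V' κ τ K c μ u w ∧ (∀ z, 0 < u z) ∧ HE2 u1 u2 u w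

/-- (TV) with parameter `μ` has a positive solution satisfying (HO) with level `ub`. -/
def HasHO (V V' κ : ℝ → ℝ) (τ K c μ ub : ℝ) : Prop :=
  ∃ u w : ℝ → ℝ, IsTVSol V V' κ τ K c μ u w ∧ (∀ z, 0 < u z) ∧ HO ub u w

/-- Condition (H): `∫₁^∞ dρ/(ρ³ κ(ρ)) = ∞`. -/
def CondH (κ : ℝ → ℝ) : Prop :=
  ¬ IntegrableOn (fun ρ => 1 / (ρ ^ 3 * κ ρ)) (Ioi 1)

/-- Condition (C). -/
def CondC (V' κ : ℝ → ℝ) (UM K₁ K : ℝ) : Prop :=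
  (K₁ < K ∧ K < V' UM) ∨ (CondH κ ∧ V' 0 < K ∧ K ≤ K₁)

/-- Periodic solution. -/
def IsPeriodicSol (u w : ℝ → ℝ) : Prop :=
  ∃ Z, 0 < Z ∧ ∀ z, u (z + Z) = u z ∧ w (z + Z) = w z

/-- Nonconstant pair of functions. -/
def Nonconst (u w : ℝ → ℝ) : Prop := ∃ z, u z ≠ u 0 ∨ w z ≠ w 0

/-- Discriminant of the Jacobian at an equilibrium `(u,0)`. -/
def discTV (V' κ : ℝ → ℝ) (τ K u μ : ℝ) : ℝ :=
  (g2TV κ τ u) ^ 2 * (hTV V' K μ u) ^ 2 + 4 * g1TV κ τ u * fdTV V' K u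

/-- The eigenvalue `λ₊(u)`. -/
def lamP (V' κ : ℝ → ℝ) (τ K u μ : ℝ) : ℝ :=
  (g2TV κ τ u * hTV V' K μ u + Real.sqrt (discTV V' κ τ K u μ)) / 2

/-- The eigenvalue `λ₋(u)`. -/
def lamM (V' κ : ℝ → ℝ) (τ K u μ : ℝ) : ℝ :=
  (g2TV κ τ u * hTV V' K μ u - Real.sqrt (discTV V' κ τ K u μ)) / 2

/-- `Z` is the minimal period of `(u,w)`. -/
def IsMinPeriod (u w : ℝ → ℝ) (Z : ℝ) : Prop :=
  0 < Z ∧ (∀ z, u (z + Z) = u z ∧ w (z + Z) = w z) ∧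
  ∀ Z', 0 < Z' → (∀ z, u (z + Z') = u z ∧ w (z + Z') = w z) → Z ≤ Z'

/-! ### Scalar problem `E' = P + R √E`, `E 0 = 0` -/

/-- Solutions of the scalar problem on `[0,T]`. -/
def Sol (P R : ℝ → ℝ) (T : ℝ) (E : ℝ → ℝ) : Prop :=
  ContinuousOn E (Icc 0 T) ∧ E 0 = 0 ∧
    ∀ s ∈ Ioo 0 T, HasDerivAt E (P s + R s * Real.sqrt (E s)) s

/-- Sign conditions on the forcing `P`. -/
structure Setup (P : ℝ → ℝ) (s0 T : ℝ) : Prop where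
  s0pos : 0 < s0
  s0T : s0 < T
  cont : ContinuousOn P (Icc 0 T)
  pos : ∀ s ∈ Ioo 0 s0, 0 < P s
  neg : ∀ s ∈ Ioo s0 T, P s < 0
  slope : ∃ g > 0, ∃ r > 0, ∀ s ∈ Ioo (s0 - r) s0, g * (s0 - s) ≤ P s

lemma Sol.mono {P R E : ℝ → ℝ} {T T' : ℝ} (h : Sol P R T E) (hT : T' ≤ T) : Sol P R T' E :=
  ⟨h.1.mono (Icc_subset_Icc_right hT), h.2.1, fun s hs => h.2.2 s ⟨hs.1, hs.2.trans_le hT⟩⟩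

lemma Setup.mono {P : ℝ → ℝ} {s0 T T' : ℝ} (h : Setup P s0 T) (h0 : s0 < T') (hT : T' ≤ T) :
    Setup P s0 T' :=
  ⟨h.s0pos, h0, h.cont.mono (Icc_subset_Icc_right hT), h.pos,
    fun s hs => h.neg s ⟨hs.1, hs.2.trans_le hT⟩, h.slope⟩

/-- A positive derivative forces smaller values on the left. -/
lemma left_lt_of_deriv_pos {f : ℝ → ℝ} {d x a : ℝ} (h : HasDerivAt f d x) (hd : 0 < d)
    (ha : a < x) : ∃ y ∈ Ioo a x, f y < f x := by
  have h1 := hasDerivAt_iff_tendsto_slope.1 h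
  have h2 : ∀ᶠ y in nhdsWithin x {x}ᶜ, 0 < slope f x y := h1.eventually (lt_mem_nhds hd)
  have h3 : ∀ᶠ y in nhdsWithin x (Iio x), 0 < slope f x y :=
    h2.filter_mono (nhdsWithin_mono _ (fun y hy => ne_of_lt hy))
  have h4 : ∀ᶠ y in nhdsWithin x (Iio x), y ∈ Ioo a x := Ioo_mem_nhdsLT ha
  obtain ⟨y, hy1, hy2⟩ := (h3.and h4).exists
  refine ⟨y, hy2, ?_⟩
  rw [slope_def_field] at hy1
  have : y - x < 0 := by linarith [hy2.2]
  have := (div_pos_iff.1 hy1).resolve_left (by rintro ⟨_, h⟩; linarith)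
  linarith [this.1]

/-- A positive derivative forces larger values on the right. -/
lemma right_gt_of_deriv_pos {f : ℝ → ℝ} {d x a : ℝ} (h : HasDerivAt f d x) (hd : 0 < d)
    (ha : x < a) : ∃ y ∈ Ioo x a, f x < f y := by
  have h1 := hasDerivAt_iff_tendsto_slope.1 h
  have h2 : ∀ᶠ y in nhdsWithin x {x}ᶜ, 0 < slope f x y := h1.eventually (lt_mem_nhds hd)
  have h3 : ∀ᶠ y in nhdsWithin x (Ioi x), 0 < slope f x y :=
    h2.filter_mono (nhdsWithin_mono _ (fun y hy => ne_of_gt hy))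
  have h4 : ∀ᶠ y in nhdsWithin x (Ioi x), y ∈ Ioo x a := Ioo_mem_nhdsGT ha
  obtain ⟨y, hy1, hy2⟩ := (h3.and h4).exists
  refine ⟨y, hy2, ?_⟩
  rw [slope_def_field] at hy1
  have : 0 < y - x := by linarith [hy2.1]
  have := (div_pos_iff.1 hy1).resolve_right (by rintro ⟨_, h⟩; linarith)
  linarith [this.1]

/-- Minimum principle, weak form. -/
lemma min_nonneg {f : ℝ → ℝ} {s : ℝ} (hs : 0 < s) (hf : ContinuousOn f (Icc 0 s)) (h0 : 0 ≤ f 0)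
    (hd : ∀ x ∈ Ioc 0 s, f x < 0 → ∃ d, 0 < d ∧ HasDerivAt f d x) :
    ∀ x ∈ Icc 0 s, 0 ≤ f x := by
  obtain ⟨m, hm, hmin⟩ := isCompact_Icc.exists_isMinOn (nonempty_Icc.2 hs.le) hf
  by_cases hneg : f m < 0
  · exfalso
    have hm0 : m ≠ 0 := by rintro rfl; linarith
    have hm' : m ∈ Ioc 0 s := ⟨lt_of_le_of_ne hm.1 (Ne.symm hm0), hm.2⟩
    obtain ⟨d, hd0, hd1⟩ := hd m hm' hneg
    obtain ⟨y, hy, hy2⟩ := left_lt_of_deriv_pos hd1 hd0 hm'.1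
    have := hmin (show y ∈ Icc 0 s from ⟨hy.1.le, hy.2.le.trans hm.2⟩)
    simp only [mem_setOf_eq] at this
    linarith
  · intro x hx
    have := hmin hx
    simp only [mem_setOf_eq] at this
    linarith

/-- Minimum principle, strict form. -/
lemma min_pos {f : ℝ → ℝ} {s : ℝ} (hs : 0 < s) (hf : ContinuousOn f (Icc 0 s)) (h0 : 0 ≤ f 0)
    (hd : ∀ x ∈ Ioc 0 s, f x ≤ 0 → ∃ d, 0 < d ∧ HasDerivAt f d x) :
    ∀ x ∈ Ioc 0 s, 0 < f x := by
  have h := min_nonneg hs hf h0 (fun x hx h => hd x hx h.le)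
  intro x hx
  by_contra hneg
  obtain ⟨d, hd0, hd1⟩ := hd x hx (not_lt.1 hneg)
  obtain ⟨y, hy, hy2⟩ := left_lt_of_deriv_pos hd1 hd0 hx.1
  linarith [h y ⟨hy.1.le, hy.2.le.trans hx.2⟩]

/-- Forward barrier. -/
lemma barrier {f f' : ℝ → ℝ} {a b : ℝ} (hf : ContinuousOn f (Icc a b)) (h0 : 0 ≤ f a)
    (hd : ∀ x ∈ Ico a b, HasDerivAt f (f' x) x) (hb : ∀ x ∈ Ico a b, f x = 0 → 0 < f' x) :
    ∀ x ∈ Icc a b, 0 ≤ f x := by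
  intro x hx
  have := image_le_of_deriv_right_lt_deriv_boundary' (f := fun _ => (0:ℝ)) (f' := fun _ => 0)
    (B := f) (B' := f') (a := a) (b := b) continuousOn_const
    (fun x _ => (hasDerivAt_const x (0:ℝ)).hasDerivWithinAt) h0 hf
    (fun x hx => (hd x hx).hasDerivWithinAt) (fun x hx h => hb x hx h.symm) hx
  exact this

/-- Forward barrier with derivative only in the open interval. -/
lemma barrier' {f f' : ℝ → ℝ} {a b : ℝ} (hf : ContinuousOn f (Icc a b)) (h0 : 0 < f a)
    (hd : ∀ x ∈ Ioo a b, HasDerivAt f (f' x) x) (hb : ∀ x ∈ Ioo a b, f x = 0 → 0 < f' x) :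
    ∀ x ∈ Icc a b, 0 ≤ f x := by
  intro x hx
  rcases eq_or_lt_of_le hx.1 with rfl | hax
  · exact h0.le
  have hab : a < b := hax.trans_le hx.2
  have h1 : ∀ᶠ y in nhdsWithin a (Ioi a), 0 < f y := by
    have := (hf a (left_mem_Icc.2 hab.le)).eventually (lt_mem_nhds h0)
    rw [eventually_nhdsWithin_iff] at this ⊢
    filter_upwards [this, Iio_mem_nhds hab] with y hy hyb hya
    exact hy ⟨le_of_lt hya, le_of_lt hyb⟩
  obtain ⟨y, hy1, hy2⟩ := (h1.and (Ioo_mem_nhdsGT hax)).exists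
  refine barrier (a := y) (b := b) (f' := f') (hf.mono (Icc_subset_Icc_left hy2.1.le)) hy1.le
    (fun z hz => hd z ⟨hy2.1.trans_le hz.1, hz.2⟩)
    (fun z hz => hb z ⟨hy2.1.trans_le hz.1, hz.2⟩) x ⟨hy2.2.le, hx.2⟩

lemma Setup.P_s0 {P : ℝ → ℝ} {s0 T : ℝ} (h : Setup P s0 T) : P s0 = 0 := by
  have hs0 : s0 ∈ Icc 0 T := ⟨h.s0pos.le, h.s0T.le⟩
  have hc : ContinuousAt P s0 := (h.cont s0 hs0).continuousAt (Icc_mem_nhds h.s0pos h.s0T)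
  apply le_antisymm
  · refine le_of_tendsto (hc.tendsto.mono_left (nhdsWithin_le_nhds (s := Ioi s0))) ?_
    filter_upwards [Ioo_mem_nhdsGT h.s0T] with y hy using (h.neg y hy).le
  · refine ge_of_tendsto (hc.tendsto.mono_left (nhdsWithin_le_nhds (s := Iio s0))) ?_
    filter_upwards [Ioo_mem_nhdsLT h.s0pos] with y hy using (h.pos y hy).le

/-- Positivity before `s0`. -/
lemma Sol.pos {P R E : ℝ → ℝ} {s0 T : ℝ} (hS : Setup P s0 T) (h : Sol P R T E) :
    ∀ s ∈ Ioo 0 s0, 0 < E s := by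
  intro s hs
  refine min_pos hs.1 (h.1.mono (Icc_subset_Icc_right (hs.2.trans hS.s0T).le)) h.2.1.ge ?_ s
    ⟨hs.1, le_rfl⟩
  intro x hx hE
  refine ⟨_, ?_, h.2.2 x ⟨hx.1, hx.2.trans_lt (hs.2.trans hS.s0T)⟩⟩
  rw [Real.sqrt_eq_zero_of_nonpos hE, mul_zero, add_zero]
  exact hS.pos x ⟨hx.1, hx.2.trans_lt hs.2⟩

lemma Sol.nonneg_s0 {P R E : ℝ → ℝ} {s0 T : ℝ} (hS : Setup P s0 T) (h : Sol P R T E) :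
    0 ≤ E s0 := by
  have hs0 : s0 ∈ Ioo 0 T := ⟨hS.s0pos, hS.s0T⟩
  refine ge_of_tendsto ((h.2.2 s0 hs0).continuousAt.tendsto.mono_left
    (nhdsWithin_le_nhds (s := Iio s0))) ?_
  filter_upwards [Ioo_mem_nhdsLT hS.s0pos] with y hy using (h.pos hS y hy).le

/-- derivative of `√E` -/
lemma Sol.sqrt_deriv {P R E : ℝ → ℝ} {T s : ℝ} (h : Sol P R T E) (hs : s ∈ Ioo 0 T)
    (hE : 0 < E s) :
    HasDerivAt (fun x => Real.sqrt (E x)) (P s / (2 * Real.sqrt (E s)) + R s / 2) s := by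
  have h1 := (h.2.2 s hs).sqrt hE.ne'
  convert h1 using 1
  have : 0 < Real.sqrt (E s) := Real.sqrt_pos.2 hE
  field_simp

lemma Sol.sqrt_cont {P R E : ℝ → ℝ} {T : ℝ} (h : Sol P R T E) :
    ContinuousOn (fun x => Real.sqrt (E x)) (Icc 0 T) := h.1.sqrt

/-- If `R s0 ≥ 0` then `E s0 > 0`. -/
lemma Sol.pos_s0 {P R E : ℝ → ℝ} {s0 T : ℝ} (hS : Setup P s0 T) (h : Sol P R T E)
    (hR : ContinuousOn R (Icc 0 T)) (hR0 : 0 ≤ R s0) : 0 < E s0 := by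
  by_contra hneg
  have hE0 : E s0 = 0 := le_antisymm (not_lt.1 hneg) (h.nonneg_s0 hS)
  obtain ⟨g, hg, r, hr, hslope⟩ := hS.slope
  have hs0 : s0 ∈ Ioo 0 T := ⟨hS.s0pos, hS.s0T⟩
  have hRc : ContinuousAt R s0 := (hR s0 (Ioo_subset_Icc_self hs0)).continuousAt
    (Icc_mem_nhds hs0.1 hs0.2)
  obtain ⟨η, hη, hηg⟩ : ∃ η : ℝ, 0 < η ∧ η * η < g := by
    refine ⟨min (g/2) (1/2), by positivity, ?_⟩
    have h1 := min_le_left (g/2) (1/2)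
    have h2 := min_le_right (g/2) (1/2)
    have h3 : 0 < min (g/2) (1/2) := by positivity
    nlinarith
  have hev : ∀ᶠ x in nhdsWithin s0 (Iio s0), -η < R x :=
    (hRc.tendsto.mono_left nhdsWithin_le_nhds).eventually (lt_mem_nhds (by linarith))
  obtain ⟨l, hl, hlR⟩ := (mem_nhdsLT_iff_exists_Ioo_subset' hS.s0pos).1 hev
  have hl' : l < s0 := hl
  obtain ⟨a, ha, has0⟩ : ∃ a, max (max l 0) (s0 - r) < a ∧ a < s0 := by
    apply exists_between
    refine max_lt (max_lt hl' hS.s0pos) (by linarith)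
  have ha1 : l < a := lt_of_le_of_lt ((le_max_left _ _).trans (le_max_left _ _)) ha
  have ha2 : 0 < a := lt_of_le_of_lt ((le_max_right _ _).trans (le_max_left _ _)) ha
  have ha3 : s0 - r < a := lt_of_le_of_lt (le_max_right _ _) ha
  have hsub : Icc a s0 ⊆ Icc 0 T := Icc_subset_Icc ha2.le hS.s0T.le
  -- √E ≤ η (s0 - s)
  have hmono : MonotoneOn (fun x => Real.sqrt (E x) + η * x) (Icc a s0) := by
    refine monotoneOn_of_hasDerivWithinAt_nonneg (convex_Icc _ _)
      (f' := fun x => P x / (2 * Real.sqrt (E x)) + R x / 2 + η * 1)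
      ((h.sqrt_cont.mono hsub).add (by fun_prop)) ?_ ?_
    · intro x hx
      rw [interior_Icc] at hx
      exact ((h.sqrt_deriv ⟨ha2.trans hx.1, hx.2.trans hS.s0T⟩
        (h.pos hS x ⟨ha2.trans hx.1, hx.2⟩)).add ((hasDerivAt_id x).const_mul η)).hasDerivWithinAt
    · intro x hx
      rw [interior_Icc] at hx
      have h1 : -η < R x := hlR ⟨ha1.trans hx.1, hx.2⟩
      have h2 := hS.pos x ⟨ha2.trans hx.1, hx.2⟩
      have h3 : 0 < Real.sqrt (E x) := Real.sqrt_pos.2 (h.pos hS x ⟨ha2.trans hx.1, hx.2⟩)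
      have : 0 < P x / (2 * Real.sqrt (E x)) := by positivity
      linarith
  have hle : ∀ x ∈ Icc a s0, Real.sqrt (E x) ≤ η * (s0 - x) := by
    intro x hx
    have := hmono hx (right_mem_Icc.2 has0.le) hx.2
    simp only [hE0, Real.sqrt_zero] at this
    linarith
  have hmono2 : MonotoneOn E (Icc a s0) := by
    refine monotoneOn_of_hasDerivWithinAt_nonneg (convex_Icc _ _)
      (f' := fun x => P x + R x * Real.sqrt (E x)) (h.1.mono hsub) ?_ ?_
    · intro x hx
      rw [interior_Icc] at hx
      exact (h.2.2 x ⟨ha2.trans hx.1, hx.2.trans hS.s0T⟩).hasDerivWithinAt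
    · intro x hx
      have hx' := interior_subset hx
      rw [interior_Icc] at hx
      have h1 : -η < R x := hlR ⟨ha1.trans hx.1, hx.2⟩
      have h2 := hslope x ⟨ha3.trans hx.1, hx.2⟩
      have h3 := hle x hx'
      have h4 := Real.sqrt_nonneg (E x)
      have h5 : 0 < s0 - x := by linarith [hx.2]
      have h6 : -η * Real.sqrt (E x) ≤ R x * Real.sqrt (E x) :=
        mul_le_mul_of_nonneg_right h1.le h4
      have h7 : η * Real.sqrt (E x) ≤ η * (η * (s0 - x)) := mul_le_mul_of_nonneg_left h3 hη.le
      nlinarith [mul_pos h5 (sub_pos.2 hηg)]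
  have := hmono2 (left_mem_Icc.2 has0.le) (right_mem_Icc.2 has0.le) has0.le
  linarith [h.pos hS a ⟨ha2, has0⟩]

/-- Negativity persists after `s0`. -/
lemma Sol.neg_after {P R E : ℝ → ℝ} {s0 T : ℝ} (hS : Setup P s0 T) (h : Sol P R T E)
    {s t : ℝ} (hs : s0 < s) (hst : s < t) (htT : t ≤ T) (hE : E s ≤ 0) : E t < 0 := by
  have hsub : Icc s T ⊆ Icc 0 T := Icc_subset_Icc_left (hS.s0pos.trans hs).le
  have h0 : ∀ x ∈ Icc s T, E x ≤ 0 := by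
    intro x hx
    have := barrier (f := fun x => - E x) (f' := fun x => -(P x + R x * Real.sqrt (E x)))
      (a := s) (b := T) (h.1.mono hsub).neg (by simpa using hE)
      (fun y hy => (h.2.2 y ⟨(hS.s0pos.trans hs).trans_le hy.1, hy.2⟩).neg)
      (fun y hy h0 => by
        have : E y = 0 := by simpa using h0
        rw [this, Real.sqrt_zero, mul_zero, add_zero]
        linarith [hS.neg y ⟨hs.trans_le hy.1, hy.2⟩]) x hx
    simpa using this
  have hanti : StrictAntiOn E (Icc s T) := by
    refine strictAntiOn_of_hasDerivWithinAt_neg (convex_Icc _ _)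
      (f' := fun x => P x + R x * Real.sqrt (E x)) (h.1.mono hsub) ?_ ?_
    · intro x hx
      rw [interior_Icc] at hx
      exact (h.2.2 x ⟨(hS.s0pos.trans hs).trans hx.1, hx.2⟩).hasDerivWithinAt
    · intro x hx
      have hx' := interior_subset hx
      rw [interior_Icc] at hx
      rw [Real.sqrt_eq_zero_of_nonpos (h0 x hx'), mul_zero, add_zero]
      exact hS.neg x ⟨hs.trans hx.1, hx.2⟩
  have := hanti (left_mem_Icc.2 (hst.le.trans htT)) (⟨hst.le, htT⟩ : t ∈ Icc s T) hst
  linarith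

/-- If `E s ≤ 0` for some `s ≥ s0`, then `E < 0` afterwards. -/
lemma Sol.neg_after' {P R E : ℝ → ℝ} {s0 T : ℝ} (hS : Setup P s0 T) (h : Sol P R T E)
    (hR : ContinuousOn R (Icc 0 T))
    {s t : ℝ} (hs : 0 < s) (hst : s < t) (htT : t ≤ T) (hE : E s ≤ 0) : E t < 0 := by
  rcases lt_trichotomy s s0 with hlt | rfl | hlt
  · linarith [h.pos hS s ⟨hs, hlt⟩]
  · have hR0 : R s < 0 := by
      by_contra hcon
      linarith [h.pos_s0 hS hR (not_lt.1 hcon)]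
    have hRc : ContinuousAt R s := (hR s ⟨hs.le, hst.le.trans htT⟩).continuousAt
      (Icc_mem_nhds hs hS.s0T)
    have hev : ∀ᶠ x in nhdsWithin s (Ioi s), R x < 0 :=
      (hRc.tendsto.mono_left nhdsWithin_le_nhds).eventually (gt_mem_nhds hR0)
    obtain ⟨l, hl, hlR⟩ := (mem_nhdsGT_iff_exists_Ioo_subset' hst).1 hev
    have hl' : s < l := hl
    obtain ⟨b, hb1, hb2⟩ := exists_between (lt_min hl' hst)
    have hbl := hb2.trans_le (min_le_left _ _)
    have hbt := hb2.trans_le (min_le_right _ _)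
    have hanti : StrictAntiOn E (Icc s b) := by
      refine strictAntiOn_of_hasDerivWithinAt_neg (convex_Icc _ _)
        (f' := fun x => P x + R x * Real.sqrt (E x))
        (h.1.mono (Icc_subset_Icc hs.le (hbt.le.trans htT))) ?_ ?_
      · intro x hx
        rw [interior_Icc] at hx
        exact (h.2.2 x ⟨hs.trans hx.1, (hx.2.trans hbt).trans_le htT⟩).hasDerivWithinAt
      · intro x hx
        rw [interior_Icc] at hx
        have h1 : R x < 0 := hlR ⟨hx.1, hx.2.trans hbl⟩
        have h2 := hS.neg x ⟨hx.1, (hx.2.trans hbt).trans_le htT⟩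
        nlinarith [Real.sqrt_nonneg (E x)]
    have := hanti (left_mem_Icc.2 hb1.le) (right_mem_Icc.2 hb1.le) hb1
    exact h.neg_after hS hb1 hbt htT (by linarith)
  · exact h.neg_after hS hlt hst htT hE

/-- Strict comparison. -/
lemma Sol.compare {P R1 R2 E1 E2 : ℝ → ℝ} {s0 T : ℝ} (hS : Setup P s0 T) (h1 : Sol P R1 T E1)
    (h2 : Sol P R2 T E2) (hlt : ∀ s ∈ Ioo 0 T, R1 s < R2 s) (hpos : ∀ s ∈ Ioo 0 T, 0 < E1 s) :
    0 < E2 T := by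
  have hT : 0 < T := hS.s0pos.trans hS.s0T
  have ha : ∀ s ∈ Ioo 0 s0, 0 < Real.sqrt (E2 s) - Real.sqrt (E1 s) := by
    intro s hs
    have hsub : Icc 0 s ⊆ Icc 0 T := Icc_subset_Icc_right (hs.2.trans hS.s0T).le
    refine min_pos (f := fun s => Real.sqrt (E2 s) - Real.sqrt (E1 s)) hs.1
      ((h2.sqrt_cont.mono hsub).sub (h1.sqrt_cont.mono hsub))
      (by simp [h1.2.1, h2.2.1]) ?_ s ⟨hs.1, le_rfl⟩
    intro x hx hD
    have hx1 : x ∈ Ioo 0 s0 := ⟨hx.1, hx.2.trans_lt hs.2⟩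
    have hx2 : x ∈ Ioo 0 T := ⟨hx.1, hx1.2.trans hS.s0T⟩
    have e1 := h1.pos hS x hx1
    have e2 := h2.pos hS x hx1
    refine ⟨_, ?_, (h2.sqrt_deriv hx2 e2).sub (h1.sqrt_deriv hx2 e1)⟩
    have q2 := Real.sqrt_pos.2 e2
    have : P x / (2 * Real.sqrt (E1 x)) ≤ P x / (2 * Real.sqrt (E2 x)) :=
      div_le_div_of_nonneg_left (hS.pos x hx1).le (by positivity) (by linarith)
    linarith [hlt x hx2]
  have hs0 : s0 ∈ Ioo 0 T := ⟨hS.s0pos, hS.s0T⟩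
  have hb : 0 ≤ Real.sqrt (E2 s0) - Real.sqrt (E1 s0) := by
    refine ge_of_tendsto (f := fun s => Real.sqrt (E2 s) - Real.sqrt (E1 s))
      ((((h2.2.2 s0 hs0).continuousAt.sqrt).sub
      ((h1.2.2 s0 hs0).continuousAt.sqrt)).tendsto.mono_left (nhdsWithin_le_nhds (s := Iio s0))) ?_
    filter_upwards [Ioo_mem_nhdsLT hS.s0pos] with y hy using (ha y hy).le
  have hb' : E1 s0 ≤ E2 s0 :=
    (Real.sqrt_le_sqrt_iff (h2.nonneg_s0 hS)).1 (by linarith)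
  have hsub : Icc s0 T ⊆ Icc 0 T := Icc_subset_Icc_left hS.s0pos.le
  have hc := barrier (f := fun x => E2 x - E1 x)
    (f' := fun x => (P x + R2 x * Real.sqrt (E2 x)) - (P x + R1 x * Real.sqrt (E1 x)))
    ((h2.1.mono hsub).sub (h1.1.mono hsub)) (by linarith)
    (fun x hx => (h2.2.2 x ⟨hS.s0pos.trans_le hx.1, hx.2⟩).sub
      (h1.2.2 x ⟨hS.s0pos.trans_le hx.1, hx.2⟩))
    (fun x hx h0 => by
      have hx' : x ∈ Ioo 0 T := ⟨hS.s0pos.trans_le hx.1, hx.2⟩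
      have e : E2 x = E1 x := by linarith
      rw [e]
      have := mul_pos (sub_pos.2 (hlt x hx')) (Real.sqrt_pos.2 (hpos x hx'))
      nlinarith)
  have hd : StrictMonoOn (fun s => Real.sqrt (E2 s) - Real.sqrt (E1 s)) (Icc s0 T) := by
    refine strictMonoOn_of_hasDerivWithinAt_pos (convex_Icc _ _)
      (f' := fun x => (P x / (2 * Real.sqrt (E2 x)) + R2 x / 2) -
        (P x / (2 * Real.sqrt (E1 x)) + R1 x / 2))
      ((h2.sqrt_cont.mono hsub).sub (h1.sqrt_cont.mono hsub)) ?_ ?_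
    · intro x hx
      have hx3 := interior_subset hx
      rw [interior_Icc] at hx
      have hx' : x ∈ Ioo 0 T := ⟨hS.s0pos.trans hx.1, hx.2⟩
      have := hc x hx3
      exact ((h2.sqrt_deriv hx' (by linarith [hpos x hx'])).sub
        (h1.sqrt_deriv hx' (hpos x hx'))).hasDerivWithinAt
    · intro x hx
      have hx3 := interior_subset hx
      rw [interior_Icc] at hx
      have hx' : x ∈ Ioo 0 T := ⟨hS.s0pos.trans hx.1, hx.2⟩
      have h12 := hc x hx3
      have q1 := Real.sqrt_pos.2 (hpos x hx')
      have q12 : Real.sqrt (E1 x) ≤ Real.sqrt (E2 x) := Real.sqrt_le_sqrt (by linarith)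
      have hP := hS.neg x hx
      have : -P x / (2 * Real.sqrt (E2 x)) ≤ -P x / (2 * Real.sqrt (E1 x)) :=
        div_le_div_of_nonneg_left (by linarith) (by positivity) (by linarith)
      rw [neg_div, neg_div] at this
      linarith [hlt x hx']
  have := hd (left_mem_Icc.2 hS.s0T.le) (right_mem_Icc.2 hS.s0T.le) hS.s0T
  simp only at this
  exact Real.sqrt_pos.1 (by linarith [Real.sqrt_nonneg (E1 T)])

lemma abs_sqrt_sub_le {x y δ : ℝ} (hδ : 0 < δ) (hx : δ ≤ x) :
    |Real.sqrt y - Real.sqrt x| ≤ (1 / Real.sqrt δ) * |y - x| := by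
  have hx0 : 0 < x := hδ.trans_le hx
  have hq : 0 < Real.sqrt δ := Real.sqrt_pos.2 hδ
  have hqx : Real.sqrt δ ≤ Real.sqrt x := Real.sqrt_le_sqrt hx
  rw [one_div, ← div_eq_inv_mul, le_div_iff₀ hq]
  have sx := Real.mul_self_sqrt hx0.le
  have hy0 := Real.sqrt_nonneg y
  rcases le_total y 0 with hy | hy
  · rw [Real.sqrt_eq_zero_of_nonpos hy, zero_sub, abs_neg, abs_of_pos (hq.trans_le hqx)]
    have : |y - x| = x - y := by rw [abs_of_nonpos (by linarith)]; ring
    rw [this]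
    nlinarith
  · have sy := Real.mul_self_sqrt hy
    have : y - x = (Real.sqrt y - Real.sqrt x) * (Real.sqrt y + Real.sqrt x) := by
      linear_combination sx - sy
    rw [this, abs_mul]
    apply mul_le_mul_of_nonneg_left _ (abs_nonneg _)
    rw [abs_of_pos (by linarith)]
    linarith

/-- one-sided uniqueness before `s0` -/
lemma Sol.le_before {P R E1 E2 : ℝ → ℝ} {s0 T : ℝ} (hS : Setup P s0 T) (h1 : Sol P R T E1)
    (h2 : Sol P R T E2) : ∀ s ∈ Ioo 0 s0, E1 s ≤ E2 s := by
  intro s hs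
  have hsub : Icc 0 s ⊆ Icc 0 T := Icc_subset_Icc_right (hs.2.trans hS.s0T).le
  have := min_nonneg (f := fun s => Real.sqrt (E2 s) - Real.sqrt (E1 s)) hs.1
    ((h2.sqrt_cont.mono hsub).sub (h1.sqrt_cont.mono hsub))
    (by simp [h1.2.1, h2.2.1]) (by
    intro x hx hD
    have hx1 : x ∈ Ioo 0 s0 := ⟨hx.1, hx.2.trans_lt hs.2⟩
    have hx2 : x ∈ Ioo 0 T := ⟨hx.1, hx1.2.trans hS.s0T⟩
    have e1 := h1.pos hS x hx1
    have e2 := h2.pos hS x hx1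
    refine ⟨_, ?_, (h2.sqrt_deriv hx2 e2).sub (h1.sqrt_deriv hx2 e1)⟩
    have q2 := Real.sqrt_pos.2 e2
    have : P x / (2 * Real.sqrt (E1 x)) < P x / (2 * Real.sqrt (E2 x)) :=
      div_lt_div_of_pos_left (hS.pos x hx1) (by positivity) (by linarith)
    linarith) s ⟨hs.1.le, le_rfl⟩
  simp only [sub_nonneg] at this
  exact (Real.sqrt_le_sqrt_iff (h2.pos hS s hs).le).1 this

/-- Uniqueness while positive. -/
lemma Sol.eq_of_pos {P R E1 E2 : ℝ → ℝ} {s0 T : ℝ} (hS : Setup P s0 T)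
    (hR : ContinuousOn R (Icc 0 T)) (h1 : Sol P R T E1)
    (h2 : Sol P R T E2) {t : ℝ} (htT : t ≤ T) (hpos : ∀ s ∈ Ioo 0 t, 0 < E1 s) :
    ∀ s ∈ Ico 0 t, E1 s = E2 s := by
  have hbef : ∀ s ∈ Ioo 0 s0, E1 s = E2 s := fun s hs =>
    le_antisymm (h1.le_before hS h2 s hs) (h2.le_before hS h1 s hs)
  intro s hs
  rcases eq_or_lt_of_le hs.1 with rfl | hs1
  · rw [h1.2.1, h2.2.1]
  obtain ⟨a, ha0, ha1⟩ := exists_between (lt_min hs1 hS.s0pos)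
  have has : a < s := ha1.trans_le (min_le_left _ _)
  have has0 : a < s0 := ha1.trans_le (min_le_right _ _)
  have hsub : Icc a s ⊆ Icc 0 T := Icc_subset_Icc ha0.le (hs.2.le.trans htT)
  obtain ⟨m, hm, hmin⟩ := isCompact_Icc.exists_isMinOn (nonempty_Icc.2 has.le) (h1.1.mono hsub)
  obtain ⟨B, hB⟩ := isCompact_Icc.exists_bound_of_continuousOn (hR.mono hsub)
  have hδ : 0 < E1 m := hpos m ⟨ha0.trans_le hm.1, hm.2.trans_lt hs.2⟩
  have key := eq_zero_of_abs_deriv_le_mul_abs_self_of_eq_zero_right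
    (f := fun x => E2 x - E1 x)
    (f' := fun x => (P x + R x * Real.sqrt (E2 x)) - (P x + R x * Real.sqrt (E1 x)))
    (K := B * (1 / Real.sqrt (E1 m))) (a := a) (b := s)
    ((h2.1.mono hsub).sub (h1.1.mono hsub))
    (fun x hx => ((h2.2.2 x ⟨ha0.trans_le hx.1, hx.2.trans (hs.2.trans_le htT)⟩).sub
      (h1.2.2 x ⟨ha0.trans_le hx.1, hx.2.trans (hs.2.trans_le htT)⟩)).hasDerivWithinAt)
    (by simp [hbef a ⟨ha0, has0⟩])
    (fun x hx => by
      have hx' : x ∈ Icc a s := Ico_subset_Icc_self hx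
      have h3 : E1 m ≤ E1 x := hmin hx'
      have h4 := abs_sqrt_sub_le (y := E2 x) hδ h3
      have h5 := hB x hx'
      rw [Real.norm_eq_abs] at h5 ⊢
      have : (P x + R x * Real.sqrt (E2 x)) - (P x + R x * Real.sqrt (E1 x))
        = R x * (Real.sqrt (E2 x) - Real.sqrt (E1 x)) := by ring
      rw [this, abs_mul, mul_assoc]
      exact mul_le_mul h5 h4 (abs_nonneg _) ((abs_nonneg _).trans h5))
    s (right_mem_Icc.2 has.le)
  linarith

/-- Uniqueness. -/
lemma Sol.unique {P R E1 E2 : ℝ → ℝ} {s0 T : ℝ} (hS : Setup P s0 T)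
    (hR : ContinuousOn R (Icc 0 T)) (h1 : Sol P R T E1)
    (h2 : Sol P R T E2) : ∀ s ∈ Icc 0 T, E1 s = E2 s := by
  have hT : 0 < T := hS.s0pos.trans hS.s0T
  -- extension of equality by continuity
  have hext : ∀ t ∈ Ioc 0 T, (∀ s ∈ Ico 0 t, E1 s = E2 s) → E1 t = E2 t := by
    intro t ht heq
    have hsub : Ico 0 t ⊆ Icc 0 T := fun x hx => ⟨hx.1, hx.2.le.trans ht.2⟩
    have c1 := ((h1.1 t ⟨ht.1.le, ht.2⟩).mono hsub).tendsto
    have c2 := ((h2.1 t ⟨ht.1.le, ht.2⟩).mono hsub).tendsto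
    have : (nhdsWithin t (Ico 0 t)).NeBot := by
      rw [← mem_closure_iff_nhdsWithin_neBot, closure_Ico ht.1.ne]
      exact right_mem_Icc.2 ht.1.le
    refine tendsto_nhds_unique (c1.congr' ?_) c2
    filter_upwards [self_mem_nhdsWithin] with x hx using heq x hx
  by_cases hall : ∀ s ∈ Ioo 0 T, 0 < E1 s
  · have := h1.eq_of_pos hS hR h2 le_rfl hall
    intro s hs
    rcases eq_or_lt_of_le hs.2 with rfl | hlt
    · exact hext s ⟨hT, le_rfl⟩ this
    · exact this s ⟨hs.1, hlt⟩
  · push Not at hall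
    obtain ⟨p, hp, hEp⟩ := hall
    -- first nonpositive time
    have hps0 : s0 ≤ p := by
      by_contra hcon
      linarith [h1.pos hS p ⟨hp.1, not_le.1 hcon⟩]
    let Z := {x | x ∈ Icc s0 p ∧ E1 x ≤ 0}
    have hZc : IsCompact Z := by
      have hcl : IsClosed (Icc s0 p ∩ E1 ⁻¹' Iic 0) :=
        (h1.1.mono (Icc_subset_Icc hS.s0pos.le hp.2.le)).preimage_isClosed_of_isClosed
          isClosed_Icc isClosed_Iic
      exact isCompact_Icc.of_isClosed_subset hcl inter_subset_left
    obtain ⟨t, ht, htmin⟩ := hZc.exists_isLeast ⟨p, ⟨hps0, le_rfl⟩, hEp⟩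
    have ht0 : 0 < t := hS.s0pos.trans_le ht.1.1
    have htT : t < T := ht.1.2.trans_lt hp.2
    have hpos : ∀ s ∈ Ioo 0 t, 0 < E1 s := by
      intro s hs
      by_contra hcon
      rcases lt_or_ge s s0 with h | h
      · exact hcon (h1.pos hS s ⟨hs.1, h⟩)
      · have := htmin (show s ∈ Z from ⟨⟨h, hs.2.le.trans ht.1.2⟩, not_lt.1 hcon⟩)
        linarith [hs.2]
    have heq1 := h1.eq_of_pos hS hR h2 htT.le hpos
    have heqt := hext t ⟨ht0, htT.le⟩ heq1
    intro s hs
    rcases lt_trichotomy s t with h | rfl | h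
    · exact heq1 s ⟨hs.1, h⟩
    · exact heqt
    · have hneg1 : ∀ x ∈ Ioc t T, E1 x < 0 := fun x hx =>
        h1.neg_after' hS hR ht0 hx.1 hx.2 ht.2
      have hneg2 : ∀ x ∈ Ioc t T, E2 x < 0 := fun x hx =>
        h2.neg_after' hS hR ht0 hx.1 hx.2 (heqt ▸ ht.2)
      have key := eq_zero_of_abs_deriv_le_mul_abs_self_of_eq_zero_right
        (f := fun x => E2 x - E1 x)
        (f' := fun x => (P x + R x * Real.sqrt (E2 x)) - (P x + R x * Real.sqrt (E1 x)))
        (K := 0) (a := t) (b := s)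
        ((h2.1.mono (Icc_subset_Icc ht0.le hs.2)).sub (h1.1.mono (Icc_subset_Icc ht0.le hs.2)))
        (fun x hx => ((h2.2.2 x ⟨ht0.trans_le hx.1, hx.2.trans_le hs.2⟩).sub
          (h1.2.2 x ⟨ht0.trans_le hx.1, hx.2.trans_le hs.2⟩)).hasDerivWithinAt)
        (by simp [heqt])
        (fun x hx => by
          have : Real.sqrt (E1 x) = Real.sqrt (E2 x) := by
            rcases eq_or_lt_of_le hx.1 with rfl | hlt
            · rw [heqt]
            · rw [Real.sqrt_eq_zero_of_nonpos (hneg1 x ⟨hlt, hx.2.le.trans hs.2⟩).le,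
                Real.sqrt_eq_zero_of_nonpos (hneg2 x ⟨hlt, hx.2.le.trans hs.2⟩).le]
          simp [this])
        s (right_mem_Icc.2 h.le)
      linarith

/-- For very large `R` the solution stays positive. -/
lemma Sol.large {P : ℝ → ℝ} {s0 T : ℝ} (hS : Setup P s0 T) :
    ∃ N, ∀ R E : ℝ → ℝ, Sol P R T E → (∀ s ∈ Icc 0 T, N ≤ R s) → 0 < E T := by
  have hs0 := hS.s0pos
  have hs0T := hS.s0T
  obtain ⟨M, hM⟩ := isCompact_Icc.exists_bound_of_continuousOn hS.cont
  have hM0 : 0 ≤ M := (norm_nonneg _).trans (hM 0 ⟨le_rfl, (hs0.trans hs0T).le⟩)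
  have hsubI : Icc (s0/4) (s0/2) ⊆ Icc 0 T := Icc_subset_Icc (by linarith) (by linarith)
  obtain ⟨x0, hx0, hmin⟩ := isCompact_Icc.exists_isMinOn (nonempty_Icc.2
    (show s0/4 ≤ s0/2 by linarith)) (hS.cont.mono hsubI)
  have hm : 0 < P x0 := hS.pos x0 ⟨by linarith [hx0.1], by linarith [hx0.2]⟩
  set e := P x0 * (s0/4) with he
  have he0 : 0 < e := by positivity
  refine ⟨(M + 1) / Real.sqrt e, fun R E h hR => ?_⟩
  have hq : 0 < Real.sqrt e := Real.sqrt_pos.2 he0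
  have hR0 : ∀ s ∈ Icc 0 T, 0 ≤ R s := fun s hs => le_trans (by positivity) (hR s hs)
  have h1 : e ≤ E (s0/2) := by
    have hmono : MonotoneOn (fun x => E x - P x0 * x) (Icc (s0/4) (s0/2)) := by
      refine monotoneOn_of_hasDerivWithinAt_nonneg (convex_Icc _ _)
        (f' := fun x => P x + R x * Real.sqrt (E x) - P x0 * 1)
        ((h.1.mono hsubI).sub (by fun_prop)) ?_ ?_
      · intro x hx
        rw [interior_Icc] at hx
        exact ((h.2.2 x ⟨by linarith [hx.1], by linarith [hx.2]⟩).sub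
          ((hasDerivAt_id x).const_mul _)).hasDerivWithinAt
      · intro x hx
        have hx' := interior_subset hx
        have a1 : P x0 ≤ P x := hmin hx'
        have a2 := mul_nonneg (hR0 x (hsubI hx')) (Real.sqrt_nonneg (E x))
        linarith
    have := hmono (left_mem_Icc.2 (by linarith)) (right_mem_Icc.2 (by linarith))
      (by linarith : s0/4 ≤ s0/2)
    simp only at this
    have h4 := h.pos hS (s0/4) ⟨by linarith, by linarith⟩
    rw [he]; linarith
  have h2 := barrier (f := fun x => E x - e) (f' := fun x => P x + R x * Real.sqrt (E x))
    (a := s0/2) (b := T) ((h.1.mono (Icc_subset_Icc_left (by linarith))).sub continuousOn_const)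
    (by linarith)
    (fun x hx => (h.2.2 x ⟨by linarith [hx.1], hx.2⟩).sub_const e)
    (fun x hx h0 => by
      have hx' : x ∈ Icc 0 T := ⟨by linarith [hx.1], hx.2.le⟩
      have e1 : E x = e := by linarith
      have a1 := hM x hx'
      rw [Real.norm_eq_abs, abs_le] at a1
      have a2 := mul_le_mul_of_nonneg_right (hR x hx') hq.le
      rw [div_mul_cancel₀ _ hq.ne'] at a2
      rw [e1]; linarith [a1.1]) T (right_mem_Icc.2 (by linarith))
  linarith

/-- For very negative `R` the solution becomes negative. -/
lemma Sol.small {P : ℝ → ℝ} {s0 T : ℝ} (hS : Setup P s0 T) (hPT : P T < 0) :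
    ∃ N, ∀ R E : ℝ → ℝ, Sol P R T E → (∀ s ∈ Icc 0 T, R s ≤ -N) → E T < 0 := by
  have hs0 := hS.s0pos
  have hs0T := hS.s0T
  obtain ⟨M, hM⟩ := isCompact_Icc.exists_bound_of_continuousOn hS.cont
  have hM0 : 0 ≤ M := (norm_nonneg _).trans (hM 0 ⟨le_rfl, (hs0.trans hs0T).le⟩)
  set s1 := (s0 + T) / 2 with hs1
  have hsubI : Icc s1 T ⊆ Icc 0 T := Icc_subset_Icc (by linarith) (by linarith)
  obtain ⟨x0, hx0, hmax⟩ := isCompact_Icc.exists_isMaxOn (nonempty_Icc.2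
    (show s1 ≤ T by linarith)) (hS.cont.mono hsubI)
  have hm : P x0 < 0 := by
    rcases eq_or_lt_of_le hx0.2 with h | h
    · rw [h]; exact hPT
    · exact hS.neg x0 ⟨by linarith [hx0.1], h⟩
  set e := -P x0 * (T - s1) / 2 with he
  have hTs : 0 < T - s1 := by linarith
  have he0 : 0 < e := by
    have := mul_pos (neg_pos.2 hm) hTs
    linarith
  refine ⟨(M + 1) / Real.sqrt e, fun R E h hR => ?_⟩
  have hq : 0 < Real.sqrt e := Real.sqrt_pos.2 he0
  have hN : 0 ≤ (M + 1) / Real.sqrt e := by positivity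
  have h2 := barrier' (f := fun x => e - E x) (f' := fun x => -(P x + R x * Real.sqrt (E x)))
    (a := 0) (b := T) (continuousOn_const.sub h.1)
    (by rw [h.2.1]; linarith)
    (fun x hx => (h.2.2 x hx).const_sub e)
    (fun x hx h0 => by
      have hx' : x ∈ Icc 0 T := Ioo_subset_Icc_self hx
      have e1 : E x = e := by linarith
      have a1 := hM x hx'
      rw [Real.norm_eq_abs, abs_le] at a1
      have a2 := mul_le_mul_of_nonneg_right (hR x hx') hq.le
      rw [neg_mul, div_mul_cancel₀ _ hq.ne'] at a2
      rw [e1]; linarith [a1.2])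
  have hanti : AntitoneOn (fun x => E x - P x0 * x) (Icc s1 T) := by
    refine antitoneOn_of_hasDerivWithinAt_nonpos (convex_Icc _ _)
      (f' := fun x => P x + R x * Real.sqrt (E x) - P x0 * 1)
      ((h.1.mono hsubI).sub (by fun_prop)) ?_ ?_
    · intro x hx
      rw [interior_Icc] at hx
      exact ((h.2.2 x ⟨by linarith [hx.1], by linarith [hx.2]⟩).sub
        ((hasDerivAt_id x).const_mul _)).hasDerivWithinAt
    · intro x hx
      have hx' := interior_subset hx
      have a1 : P x ≤ P x0 := hmax hx'
      have a3 := hR x (hsubI hx')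
      have a2 := mul_nonneg (show 0 ≤ -R x by linarith) (Real.sqrt_nonneg (E x))
      linarith
  have h3 := hanti (left_mem_Icc.2 (by linarith)) (right_mem_Icc.2 (by linarith))
      (by linarith : s1 ≤ T)
  have h4 := h2 s1 ⟨by linarith, by linarith⟩
  simp only at h3 h4
  have : -P x0 * (T - s1) = 2 * e := by rw [he]; ring
  nlinarith

/-- Linear bound near `0`. -/
lemma Sol.linear_bound {P R E : ℝ → ℝ} {s0 T g M : ℝ} (hS : Setup P s0 T) (h : Sol P R T E)
    (hg : 0 < g) (hM : 0 < M) {r : ℝ} (hrs : r < s0) (hP : ∀ s ∈ Ioc 0 r, P s ≤ g * s)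
    (hR : ∀ s ∈ Ioc 0 r, R s ≤ M) : ∀ s ∈ Ioc 0 r, Real.sqrt (E s) < (g + M + 1) * s := by
  intro s hs
  have hr : 0 < r := hs.1.trans_le hs.2
  have hsub : Icc 0 r ⊆ Icc 0 T := Icc_subset_Icc_right (hrs.trans hS.s0T).le
  have := min_pos (f := fun s => (g + M + 1) * s - Real.sqrt (E s)) hr
    ((by fun_prop : ContinuousOn (fun s : ℝ => (g + M + 1) * s) (Icc 0 r)).sub
      (h.sqrt_cont.mono hsub)) (by simp [h.2.1]) (by
    intro x hx hD
    have hx1 : x ∈ Ioo 0 s0 := ⟨hx.1, hx.2.trans_lt hrs⟩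
    have hx2 : x ∈ Ioo 0 T := ⟨hx.1, hx1.2.trans hS.s0T⟩
    have e1 := h.pos hS x hx1
    refine ⟨_, ?_, ((hasDerivAt_id x).const_mul (g + M + 1)).sub (h.sqrt_deriv hx2 e1)⟩
    have q := Real.sqrt_pos.2 e1
    have b1 := hP x hx
    have b2 := hR x hx
    have b3 : P x / (2 * Real.sqrt (E x)) < g + 1/2 := by
      rw [div_lt_iff₀ (by positivity)]
      have hq2 : x ≤ Real.sqrt (E x) := by nlinarith [hx.1]
      nlinarith [hx.1]
    linarith) s hs
  linarith

lemma apriori {E d : ℝ → ℝ} {T A B : ℝ} (hT : 0 < T) (hA : 0 ≤ A) (hB : 0 ≤ B)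
    (hc : ContinuousOn E (Icc 0 T)) (h0 : E 0 = 0) (hd : ∀ s ∈ Ioo 0 T, HasDerivAt E (d s) s)
    (hb : ∀ s ∈ Ioo 0 T, |d s| ≤ A + B * Real.sqrt |E s|) :
    ∀ s ∈ Icc 0 T, |E s| ≤ ((A + B) * T + 1) ^ 2 := by
  obtain ⟨m, hm, hmax⟩ := isCompact_Icc.exists_isMaxOn (nonempty_Icc.2 hT.le) hc.abs
  have hmax' : ∀ s ∈ Icc 0 T, |E s| ≤ |E m| := fun s hs => hmax hs
  have hAB : 0 ≤ (A + B) * T := by positivity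
  suffices |E m| ≤ ((A + B) * T + 1) ^ 2 from fun s hs => (hmax' s hs).trans this
  rcases eq_or_lt_of_le hm.1 with h | hm0
  · rw [← h, h0, abs_zero]; positivity
  obtain ⟨x, hx, hxe⟩ := exists_hasDerivAt_eq_slope E d hm0 (hc.mono (Icc_subset_Icc_right hm.2))
    (fun y hy => hd y ⟨hy.1, hy.2.trans_le hm.2⟩)
  have hxT : x ∈ Ioo 0 T := ⟨hx.1, hx.2.trans_le hm.2⟩
  have e1 : E m = d x * m := by
    rw [hxe, h0]; field_simp; ring
  have e2 : |E m| ≤ (A + B * Real.sqrt |E m|) * T := by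
    have e3 : |E m| = |d x| * m := by rw [e1, abs_mul, abs_of_pos hm0]
    have : |d x| ≤ A + B * Real.sqrt |E m| := (hb x hxT).trans (by
      have := Real.sqrt_le_sqrt (hmax' x ⟨hxT.1.le, hxT.2.le⟩)
      have := mul_le_mul_of_nonneg_left this hB
      linarith)
    have := mul_le_mul this hm.2 hm0.le ((abs_nonneg _).trans this)
    linarith
  have hq := Real.mul_self_sqrt (abs_nonneg (E m))
  set q := Real.sqrt |E m| with hqd
  have hq0 : 0 ≤ q := Real.sqrt_nonneg _
  rw [← hq] at e2 ⊢
  have : q ≤ (A + B) * T + 1 := by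
    by_contra hcon
    push Not at hcon
    have h1 : 1 < q := by linarith
    have : (A + B * q) * T ≤ (A + B) * T * q := by
      have : A * T ≤ A * T * q := by
        have : 0 ≤ A * T := by positivity
        nlinarith
      nlinarith
    nlinarith
  nlinarith

lemma compact_seq {P R : ℝ → ℝ} {T C : ℝ} (hT : 0 < T) (hP : ContinuousOn P (Icc 0 T))
    (hR : ContinuousOn R (Icc 0 T)) (U : Ultrafilter ℕ) (E d : ℕ → ℝ → ℝ) (ε : ℕ → ℝ)
    (hε : Tendsto ε U (nhds 0)) (hε1 : ∀ n, ε n ≤ 1)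
    (hc : ∀ n, ContinuousOn (E n) (Icc 0 T)) (h0 : ∀ n, E n 0 = 0)
    (hd : ∀ n, ∀ s ∈ Ioo 0 T, HasDerivAt (E n) (d n s) s)
    (hb : ∀ n, ∀ s ∈ Ioo 0 T, |d n s - (P s + R s * Real.sqrt (E n s))| ≤ ε n)
    (hC : ∀ n, ∀ s ∈ Icc 0 T, |E n s| ≤ C) :
    ∃ F, Sol P R T F ∧ ∀ s ∈ Icc 0 T, Tendsto (fun n => E n s) U (nhds (F s)) := by
  have hlim : ∀ s ∈ Icc 0 T, ∃ y, Tendsto (fun n => E n s) U (nhds y) := by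
    intro s hs
    have hcomp : IsCompact (Icc (-C) C) := isCompact_Icc
    obtain ⟨y, _, hy⟩ := hcomp.ultrafilter_le_nhds (U.map (fun n => E n s)) (by
      rw [le_principal_iff]
      exact Ultrafilter.mem_map.2 (Filter.univ_mem' (fun n => abs_le.1 (hC n s hs))))
    exact ⟨y, hy⟩
  choose! F hF using hlim
  -- joint uniform continuity
  have hK : IsCompact (Icc 0 T ×ˢ Icc (-C) C) := isCompact_Icc.prod isCompact_Icc
  have hG : ContinuousOn (fun p : ℝ × ℝ => P p.1 + R p.1 * Real.sqrt p.2)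
      (Icc 0 T ×ˢ Icc (-C) C) := by
    refine (hP.comp continuousOn_fst (fun p hp => hp.1)).add
      ((hR.comp continuousOn_fst (fun p hp => hp.1)).mul ?_)
    exact (Real.continuous_sqrt.comp continuous_snd).continuousOn
  have hUC := hK.uniformContinuousOn_of_continuous hG
  obtain ⟨M, hM⟩ := hK.exists_bound_of_continuousOn hG
  have hmem : ∀ n, ∀ s ∈ Icc 0 T, ((s, E n s) : ℝ × ℝ) ∈ Icc 0 T ×ˢ Icc (-C) C :=
    fun n s hs => ⟨hs, abs_le.1 (hC n s hs)⟩
  have hdM : ∀ n, ∀ s ∈ Ioo 0 T, |d n s| ≤ M + 1 := by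
    intro n s hs
    have h1 := hM _ (hmem n s (Ioo_subset_Icc_self hs))
    rw [Real.norm_eq_abs] at h1
    have h2 := hb n s hs
    have h3 := abs_add_le (d n s - (P s + R s * Real.sqrt (E n s))) (P s + R s * Real.sqrt (E n s))
    rw [sub_add_cancel] at h3
    linarith [hε1 n]
  -- mean value
  have hmv : ∀ n, ∀ a b, 0 ≤ a → a < b → b ≤ T → ∃ x ∈ Ioo a b, E n b - E n a = d n x * (b - a) := by
    intro n a b ha hab hbT
    obtain ⟨x, hx, hxe⟩ := exists_hasDerivAt_eq_slope (E n) (d n) hab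
      ((hc n).mono (Icc_subset_Icc ha hbT))
      (fun y hy => hd n y ⟨ha.trans_lt hy.1, hy.2.trans_le hbT⟩)
    refine ⟨x, hx, ?_⟩
    rw [hxe]; field_simp [sub_ne_zero.2 hab.ne']
  have hmv' : ∀ n, ∀ a ∈ Icc 0 T, ∀ b ∈ Icc 0 T, a ≠ b →
      ∃ x ∈ Ioo 0 T, |x - a| ≤ |b - a| ∧ E n b - E n a = d n x * (b - a) := by
    intro n a ha b hb hab
    rcases lt_or_gt_of_ne hab with h | h
    · obtain ⟨x, hx, hxe⟩ := hmv n a b ha.1 h hb.2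
      refine ⟨x, ⟨ha.1.trans_lt hx.1, hx.2.trans_le hb.2⟩, ?_, hxe⟩
      rw [abs_of_pos (by linarith [hx.1]), abs_of_pos (by linarith)]; linarith [hx.2]
    · obtain ⟨x, hx, hxe⟩ := hmv n b a hb.1 h ha.2
      refine ⟨x, ⟨hb.1.trans_lt hx.1, hx.2.trans_le ha.2⟩, ?_, by linarith⟩
      rw [abs_of_neg (by linarith [hx.2]), abs_of_neg (by linarith)]; linarith [hx.1]
  have hM0 : 0 ≤ M := (norm_nonneg _).trans
    (hM _ (hmem 0 0 ⟨le_rfl, hT.le⟩))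
  have hLip : ∀ n, ∀ a ∈ Icc 0 T, ∀ b ∈ Icc 0 T, |E n b - E n a| ≤ (M + 1) * |b - a| := by
    intro n a ha b hb
    by_cases hab : a = b
    · subst hab; simp
    obtain ⟨x, hx, _, hxe⟩ := hmv' n a ha b hb hab
    rw [hxe, abs_mul]
    gcongr
    exact hdM n x hx
  have hLipF : ∀ a ∈ Icc 0 T, ∀ b ∈ Icc 0 T, |F b - F a| ≤ (M + 1) * |b - a| := by
    intro a ha b hb
    exact le_of_tendsto ((hF b hb).sub (hF a ha)).abs (Filter.univ_mem' fun n => hLip n a ha b hb)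
  refine ⟨F, ⟨?_, ?_, ?_⟩, hF⟩
  · have : LipschitzOnWith (Real.toNNReal (M + 1)) F (Icc 0 T) := by
      refine LipschitzOnWith.of_dist_le_mul ?_
      intro a ha b hb
      rw [Real.dist_eq, Real.dist_eq, Real.coe_toNNReal _ (by linarith)]
      exact hLipF b hb a ha
    exact this.continuousOn
  · refine tendsto_nhds_unique (hF 0 ⟨le_rfl, hT.le⟩) ?_
    simp only [h0]; exact tendsto_const_nhds
  · intro s hs
    have hs' := Ioo_subset_Icc_self hs
    rw [hasDerivAt_iff_isLittleO, Asymptotics.isLittleO_iff]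
    intro η hη
    obtain ⟨δ, hδ, hδU⟩ := Metric.uniformContinuousOn_iff.1 hUC η hη
    have hr : 0 < δ / (M + 2) := by positivity
    filter_upwards [Ioo_mem_nhds hs.1 hs.2, Metric.ball_mem_nhds s hr] with x hx hxb
    have hx' := Ioo_subset_Icc_self hx
    rw [Metric.mem_ball, Real.dist_eq] at hxb
    have hxb' : |x - s| * (M + 2) < δ := by rwa [lt_div_iff₀ (by linarith)] at hxb
    have hlimn : Tendsto (fun n => |E n x - E n s - (x - s) * (P s + R s * Real.sqrt (E n s))|) U
        (nhds |F x - F s - (x - s) * (P s + R s * Real.sqrt (F s))|) := by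
      refine Tendsto.abs (((hF x hx').sub (hF s hs')).sub ?_)
      exact ((((Real.continuous_sqrt.tendsto _).comp (hF s hs')).const_mul _).const_add _).const_mul _
    have hlim2 : Tendsto (fun n => (η + ε n) * |x - s|) U (nhds ((η + 0) * |x - s|)) :=
      (hε.const_add η).mul_const _
    rw [add_zero] at hlim2
    rw [Real.norm_eq_abs, Real.norm_eq_abs, smul_eq_mul]
    refine le_of_tendsto_of_tendsto hlimn hlim2 (Filter.univ_mem' fun n => ?_)
    by_cases hxs : s = x
    · subst hxs; simp
    obtain ⟨y, hy, hys, hye⟩ := hmv' n s hs' x hx' hxs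
    have hy' := Ioo_subset_Icc_self hy
    have e : E n x - E n s - (x - s) * (P s + R s * Real.sqrt (E n s)) =
      (d n y - (P s + R s * Real.sqrt (E n s))) * (x - s) := by rw [hye]; ring
    show |E n x - E n s - (x - s) * (P s + R s * Real.sqrt (E n s))| ≤ (η + ε n) * |x - s|
    rw [e, abs_mul]
    refine mul_le_mul_of_nonneg_right ?_ (abs_nonneg _)
    have h1 := hb n y hy
    have h2 : |(P y + R y * Real.sqrt (E n y)) - (P s + R s * Real.sqrt (E n s))| < η := by
      have := hδU (y, E n y) (hmem n y hy') (s, E n s) (hmem n s hs') (by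
        rw [Prod.dist_eq, max_lt_iff, Real.dist_eq, Real.dist_eq]
        have a1 := hLip n s hs' y hy'
        have a0 := abs_nonneg (x - s)
        constructor
        · nlinarith
        · have : (M + 1) * |y - s| ≤ (M + 1) * |x - s| := by gcongr
          simp only
          nlinarith)
      rwa [Real.dist_eq] at this
    calc |d n y - (P s + R s * Real.sqrt (E n s))|
        ≤ |d n y - (P y + R y * Real.sqrt (E n y))| +
          |(P y + R y * Real.sqrt (E n y)) - (P s + R s * Real.sqrt (E n s))| := by
          have := abs_add_le (d n y - (P y + R y * Real.sqrt (E n y)))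
            ((P y + R y * Real.sqrt (E n y)) - (P s + R s * Real.sqrt (E n s)))
          rwa [sub_add_sub_cancel] at this
      _ ≤ η + ε n := by linarith

lemma sqrt_reg {x δ : ℝ} (hδ : 0 ≤ δ) :
    |Real.sqrt (max x 0 + δ) - Real.sqrt x| ≤ Real.sqrt δ := by
  have h1 : Real.sqrt x = Real.sqrt (max x 0) := by
    rcases le_total x 0 with h | h
    · rw [max_eq_right h, Real.sqrt_zero, Real.sqrt_eq_zero_of_nonpos h]
    · rw [max_eq_left h]
  rw [h1]
  have h2 : 0 ≤ max x 0 := le_max_right _ _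
  have h3 : Real.sqrt (max x 0) ≤ Real.sqrt (max x 0 + δ) := Real.sqrt_le_sqrt (by linarith)
  rw [abs_of_nonneg (by linarith)]
  have a1 := Real.mul_self_sqrt h2
  have a2 := Real.mul_self_sqrt hδ
  have : Real.sqrt (max x 0 + δ) ≤ Real.sqrt (max x 0) + Real.sqrt δ := by
    rw [Real.sqrt_le_left (by positivity)]
    nlinarith [mul_nonneg (Real.sqrt_nonneg (max x 0)) (Real.sqrt_nonneg δ)]
  linarith

lemma exists_sol_reg {P R : ℝ → ℝ} {T A B δ : ℝ} (hT : 0 < T) (hP : ContinuousOn P (Icc 0 T))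
    (hR : ContinuousOn R (Icc 0 T)) (hA : ∀ s ∈ Icc 0 T, |P s| ≤ A)
    (hB : ∀ s ∈ Icc 0 T, |R s| ≤ B) (hδ : 0 < δ) (hδ1 : δ ≤ 1) :
    ∃ E : ℝ → ℝ, E 0 = 0 ∧ ContinuousOn E (Icc 0 T) ∧
      ∀ s ∈ Ioo 0 T, HasDerivAt E (P s + R s * Real.sqrt (max (E s) 0 + δ)) s := by
  have hA0 : 0 ≤ A := (abs_nonneg _).trans (hA 0 ⟨le_rfl, hT.le⟩)
  have hB0 : 0 ≤ B := (abs_nonneg _).trans (hB 0 ⟨le_rfl, hT.le⟩)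
  have hsδ : 0 < Real.sqrt δ := Real.sqrt_pos.2 hδ
  set q : ℝ := (A + 2 * B) * T + 1 with hq
  have hq1 : 1 ≤ q := by
    have : 0 ≤ (A + 2 * B) * T := by positivity
    linarith
  have hPL : IsPicardLindelof (fun t x => P t + R t * Real.sqrt (max x 0 + δ))
      (tmin := 0) (tmax := T) (⟨0, le_rfl, hT.le⟩ : Icc 0 T) (0:ℝ)
      (NNReal.mk (q ^ 2) (by positivity)) 0 (NNReal.mk ((A + 2 * B) * q) (by positivity))
      (NNReal.mk (B * (1 / Real.sqrt δ)) (by positivity)) := by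
    constructor
    · intro t ht
      refine LipschitzOnWith.of_dist_le_mul ?_
      intro x _ y _
      rw [Real.dist_eq, Real.dist_eq]
      have e : P t + R t * Real.sqrt (max x 0 + δ) - (P t + R t * Real.sqrt (max y 0 + δ)) =
        R t * (Real.sqrt (max x 0 + δ) - Real.sqrt (max y 0 + δ)) := by ring
      rw [e, abs_mul, NNReal.coe_mk, mul_assoc]
      have h1 := abs_sqrt_sub_le (x := max y 0 + δ) (y := max x 0 + δ) hδ
        (by linarith [le_max_right y 0])
      have h2 : |max x 0 + δ - (max y 0 + δ)| ≤ |x - y| := by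
        rw [add_sub_add_right_eq_sub]
        exact abs_max_sub_max_le_abs x y 0
      have h3 : (1 / Real.sqrt δ) * |max x 0 + δ - (max y 0 + δ)| ≤ (1 / Real.sqrt δ) * |x - y| := by
        gcongr
      exact mul_le_mul (hB t ht) (h1.trans h3) (abs_nonneg _) hB0
    · intro x _
      exact hP.add (hR.mul continuousOn_const)
    · intro t ht x hx
      rw [Metric.mem_closedBall, Real.dist_eq, sub_zero, NNReal.coe_mk] at hx
      rw [Real.norm_eq_abs, NNReal.coe_mk]
      have h1 : Real.sqrt (max x 0 + δ) ≤ 2 * q := by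
        rw [Real.sqrt_le_left (by positivity)]
        have : max x 0 ≤ q ^ 2 := max_le ((le_abs_self x).trans hx) (by positivity)
        nlinarith
      have h2 := abs_add_le (P t) (R t * Real.sqrt (max x 0 + δ))
      rw [abs_mul, abs_of_nonneg (Real.sqrt_nonneg _)] at h2
      have h3 : |R t| * Real.sqrt (max x 0 + δ) ≤ B * (2 * q) :=
        mul_le_mul (hB t ht) h1 (Real.sqrt_nonneg _) hB0
      have h4 : A ≤ A * q := by nlinarith
      linarith [hA t ht]
    · simp only [NNReal.coe_mk, NNReal.coe_zero, sub_zero, zero_sub, sub_self]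
      rw [max_eq_left hT.le]
      nlinarith
  obtain ⟨E, hE0, hE⟩ := hPL.exists_eq_forall_mem_Icc_hasDerivWithinAt₀
  refine ⟨E, hE0, fun s hs => (hE s hs).continuousWithinAt, fun s hs => ?_⟩
  exact (hE s (Ioo_subset_Icc_self hs)).hasDerivAt (Icc_mem_nhds hs.1 hs.2)

lemma sqrt_le_sqrt_abs (x : ℝ) : Real.sqrt x ≤ Real.sqrt |x| := Real.sqrt_le_sqrt (le_abs_self x)

lemma exists_sol {P R : ℝ → ℝ} {T : ℝ} (hT : 0 < T) (hP : ContinuousOn P (Icc 0 T))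
    (hR : ContinuousOn R (Icc 0 T)) : ∃ E, Sol P R T E := by
  obtain ⟨A, hA⟩ := isCompact_Icc.exists_bound_of_continuousOn hP
  obtain ⟨B, hB⟩ := isCompact_Icc.exists_bound_of_continuousOn hR
  have hA0 : 0 ≤ A := (abs_nonneg _).trans (hA 0 ⟨le_rfl, hT.le⟩)
  have hB0 : 0 ≤ B := (abs_nonneg _).trans (hB 0 ⟨le_rfl, hT.le⟩)
  have hδ : ∀ n : ℕ, ∃ δ : ℝ, 0 < δ ∧ δ ≤ 1 ∧ B * Real.sqrt δ ≤ 1 / ((n:ℝ) + 1) := by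
    intro n
    have hn : (0:ℝ) < 1 / ((n:ℝ) + 1) := by positivity
    have ht : Tendsto (fun δ : ℝ => B * Real.sqrt δ) (nhdsWithin 0 (Ioi 0)) (nhds 0) := by
      have : Continuous (fun δ : ℝ => B * Real.sqrt δ) := by fun_prop
      have := this.tendsto 0
      rw [Real.sqrt_zero, mul_zero] at this
      exact this.mono_left nhdsWithin_le_nhds
    obtain ⟨δ, h1, h2⟩ := ((ht.eventually (gt_mem_nhds hn)).and
      (Ioo_mem_nhdsGT (zero_lt_one (α := ℝ)))).exists
    exact ⟨δ, h2.1, h2.2.le, h1.le⟩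
  choose δ hδ0 hδ1 hδB using hδ
  have := fun n => exists_sol_reg hT hP hR hA hB (hδ0 n) (hδ1 n)
  choose E hE0 hEc hEd using this
  have hε : Tendsto (fun n : ℕ => 1 / ((n:ℝ) + 1)) atTop (nhds 0) :=
    tendsto_one_div_add_atTop_nhds_zero_nat
  have key : ∀ n, ∀ s ∈ Icc 0 T, |E n s| ≤ ((A + B + B) * T + 1) ^ 2 := by
    intro n
    refine apriori (A := A + B) (B := B) hT (by linarith) hB0 (hEc n) (hE0 n) (hEd n) ?_
    intro s hs
    have h1 := sqrt_reg (x := E n s) (hδ0 n).le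
    have h2 : Real.sqrt (δ n) ≤ 1 := Real.sqrt_le_one.2 (hδ1 n)
    have h3 := (abs_le.1 h1).2
    have h4 := sqrt_le_sqrt_abs (E n s)
    have h5 : Real.sqrt (max (E n s) 0 + δ n) ≤ 1 + Real.sqrt |E n s| := by linarith
    have h6 := abs_add_le (P s) (R s * Real.sqrt (max (E n s) 0 + δ n))
    rw [abs_mul, abs_of_nonneg (Real.sqrt_nonneg _)] at h6
    have h7 : |R s| * Real.sqrt (max (E n s) 0 + δ n) ≤ B * (1 + Real.sqrt |E n s|) :=
      mul_le_mul (hB s (Ioo_subset_Icc_self hs)) h5 (Real.sqrt_nonneg _) hB0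
    have h8 := hA s (Ioo_subset_Icc_self hs)
    rw [Real.norm_eq_abs] at h8
    linarith
  obtain ⟨F, hF, _⟩ := compact_seq hT hP hR (hyperfilter ℕ) E _ (fun n : ℕ => 1 / ((n:ℝ) + 1))
    (hε.mono_left Nat.hyperfilter_le_atTop)
    (fun n => by rw [div_le_one (by positivity)]; linarith [(Nat.cast_nonneg n : (0:ℝ) ≤ n)])
    hEc hE0 hEd (fun n s hs => by
      have h1 := sqrt_reg (x := E n s) (hδ0 n).le
      have e : P s + R s * Real.sqrt (max (E n s) 0 + δ n) - (P s + R s * Real.sqrt (E n s)) =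
        R s * (Real.sqrt (max (E n s) 0 + δ n) - Real.sqrt (E n s)) := by ring
      rw [e, abs_mul]
      exact (mul_le_mul (hB s (Ioo_subset_Icc_self hs)) h1 (abs_nonneg _) hB0).trans (hδB n)) key
  exact ⟨F, hF⟩

/-- Continuous dependence on the coefficient `R` for the family `R + μ k`. -/
lemma stability {P R k E : ℝ → ℝ} {s0 T : ℝ} (hS : Setup P s0 T)
    (hR : ContinuousOn R (Icc 0 T)) (hk : ContinuousOn k (Icc 0 T)) (h : Sol P R T E)
    {ε : ℝ} (hε : 0 < ε) :
    ∃ δ > 0, ∀ ν, |ν| < δ → ∀ F, Sol P (fun s => R s + ν * k s) T F → |F T - E T| < ε := by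
  have hT : 0 < T := hS.s0pos.trans hS.s0T
  by_contra hcon
  push Not at hcon
  obtain ⟨A, hA⟩ := isCompact_Icc.exists_bound_of_continuousOn hS.cont
  obtain ⟨B, hB⟩ := isCompact_Icc.exists_bound_of_continuousOn hR
  obtain ⟨D, hD⟩ := isCompact_Icc.exists_bound_of_continuousOn hk
  have hA0 : 0 ≤ A := (abs_nonneg _).trans (hA 0 ⟨le_rfl, hT.le⟩)
  have hB0 : 0 ≤ B := (abs_nonneg _).trans (hB 0 ⟨le_rfl, hT.le⟩)
  have hD0 : 0 ≤ D := (abs_nonneg _).trans (hD 0 ⟨le_rfl, hT.le⟩)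
  set C := ((A + (B + 1)) * T + 1) ^ 2 with hCdef
  have hC0 : 0 ≤ C := by positivity
  have hδ : ∀ n : ℕ, ∃ δ : ℝ, 0 < δ ∧ δ * D ≤ 1 ∧ δ * (D * Real.sqrt C) ≤ 1 / ((n:ℝ) + 1) := by
    intro n
    refine ⟨1 / (((n:ℝ) + 1) * (D + 1) * (Real.sqrt C + 1)), by positivity, ?_, ?_⟩
    · rw [div_mul_eq_mul_div, div_le_one (by positivity), one_mul]
      have h1 : (0:ℝ) ≤ n := Nat.cast_nonneg n
      have h2 := Real.sqrt_nonneg C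
      have : D + 1 ≤ ((n:ℝ) + 1) * (D + 1) := by nlinarith
      nlinarith
    · rw [div_mul_eq_mul_div, div_le_div_iff₀ (by positivity) (by positivity)]
      have h1 : (0:ℝ) ≤ n := Nat.cast_nonneg n
      have h2 := Real.sqrt_nonneg C
      have h3 : D * Real.sqrt C ≤ (D + 1) * (Real.sqrt C + 1) := by nlinarith
      have h4 : (0:ℝ) ≤ (n:ℝ) + 1 := by linarith
      nlinarith [mul_le_mul_of_nonneg_left h3 h4]
  choose δ hδ0 hδD hδC using hδ
  choose ν hν F hF hFE using fun n => hcon (δ n) (hδ0 n)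
  have hνk : ∀ n, ∀ s ∈ Icc 0 T, |ν n * k s| ≤ δ n * D := by
    intro n s hs
    rw [abs_mul]
    exact mul_le_mul (hν n).le (hD s hs) (abs_nonneg _) (hδ0 n).le
  have key : ∀ n, ∀ s ∈ Icc 0 T, |F n s| ≤ C := by
    intro n
    refine apriori (A := A) (B := B + 1) hT hA0 (by linarith) (hF n).1 (hF n).2.1 (hF n).2.2 ?_
    intro s hs
    have hs' := Ioo_subset_Icc_self hs
    have h2 := abs_add_le (P s) ((R s + ν n * k s) * Real.sqrt (F n s))
    rw [abs_mul, abs_of_nonneg (Real.sqrt_nonneg _)] at h2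
    have h3 := abs_add_le (R s) (ν n * k s)
    have h4 := hB s hs'
    have h5 := hA s hs'
    rw [Real.norm_eq_abs] at h4 h5
    have h6 : |R s + ν n * k s| ≤ B + 1 := by linarith [hνk n s hs', hδD n]
    have h7 : |R s + ν n * k s| * Real.sqrt (F n s) ≤ (B + 1) * Real.sqrt |F n s| :=
      mul_le_mul h6 (sqrt_le_sqrt_abs _) (Real.sqrt_nonneg _) (by linarith)
    linarith
  have hεt : Tendsto (fun n : ℕ => 1 / ((n:ℝ) + 1)) atTop (nhds 0) :=
    tendsto_one_div_add_atTop_nhds_zero_nat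
  obtain ⟨G, hG, hGlim⟩ := compact_seq hT hS.cont hR (hyperfilter ℕ) F _
    (fun n : ℕ => 1 / ((n:ℝ) + 1))
    (hεt.mono_left Nat.hyperfilter_le_atTop)
    (fun n => by rw [div_le_one (by positivity)]; linarith [(Nat.cast_nonneg n : (0:ℝ) ≤ n)])
    (fun n => (hF n).1) (fun n => (hF n).2.1) (fun n => (hF n).2.2) (fun n s hs => by
      have hs' := Ioo_subset_Icc_self hs
      have e : P s + (R s + ν n * k s) * Real.sqrt (F n s) - (P s + R s * Real.sqrt (F n s)) =
        (ν n * k s) * Real.sqrt (F n s) := by ring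
      rw [e, abs_mul, abs_of_nonneg (Real.sqrt_nonneg _)]
      have h1 : Real.sqrt (F n s) ≤ Real.sqrt C :=
        Real.sqrt_le_sqrt ((le_abs_self _).trans (key n s hs'))
      have := mul_le_mul (hνk n s hs') h1 (Real.sqrt_nonneg _) (by have := (hδ0 n).le; positivity)
      linarith [hδC n]) key
  have hTm : T ∈ Icc 0 T := ⟨hT.le, le_rfl⟩
  have h1 := hGlim T hTm
  rw [hG.unique hS hR h T hTm] at h1
  have h2 := (h1.sub_const (E T)).abs
  rw [sub_self, abs_zero] at h2
  have h3 : ε ≤ 0 := ge_of_tendsto h2 (Filter.univ_mem' hFE)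
  linarith

/-- Solution with coefficient `R` has become negative while that with `-R` is still positive. -/
def QQ (P R : ℝ → ℝ) (s0 L : ℝ) : Prop :=
  ∃ T ∈ Ioo s0 L, ∃ E F, Sol P R T E ∧ Sol P (fun s => - R s) T F ∧ E T < 0 ∧ 0 < F T

lemma Sol.neg_at {P R E : ℝ → ℝ} {s0 T : ℝ} (hS : Setup P s0 T) (h : Sol P R T E)
    (hR : ContinuousOn R (Icc 0 T)) (hE : 0 < E T) : ∀ s ∈ Ioc 0 T, 0 < E s := by
  intro s hs
  by_contra hcon
  rcases eq_or_lt_of_le hs.2 with rfl | hlt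
  · exact hcon hE
  · linarith [h.neg_after' hS hR hs.1 hlt le_rfl (not_lt.1 hcon)]

/-- helper: sign clash for the same coefficient. -/
lemma sign_clash {P R E F : ℝ → ℝ} {s0 L T T' : ℝ} (hS : ∀ T, s0 < T → T < L → Setup P s0 T)
    (hR : ContinuousOn R (Ico 0 L)) (hT : T ∈ Ioo s0 L) (hT' : T' ∈ Ioo s0 L) (hTT : T ≤ T')
    (hE : Sol P R T E) (hF : Sol P R T' F) (h1 : E T < 0) (h2 : 0 < F T') : False := by
  have hs := hS T hT.1 hT.2
  have hs' := hS T' hT'.1 hT'.2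
  have h0 : 0 < T := hs.s0pos.trans hT.1
  have hR' : ContinuousOn R (Icc 0 T') := hR.mono (fun x hx => ⟨hx.1, hx.2.trans_lt hT'.2⟩)
  have e := hE.unique hs (hR'.mono (Icc_subset_Icc_right hTT)) (hF.mono hTT) T ⟨h0.le, le_rfl⟩
  have := hF.neg_at hs' hR' h2 T ⟨h0, hTT⟩
  linarith

lemma QQ.disj {P R : ℝ → ℝ} {s0 L : ℝ} (hS : ∀ T, s0 < T → T < L → Setup P s0 T)
    (hR : ContinuousOn R (Ico 0 L)) (h1 : QQ P R s0 L) (h2 : QQ P (fun s => - R s) s0 L) :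
    False := by
  obtain ⟨T, hT, E, F, hE, hF, hE1, hF1⟩ := h1
  obtain ⟨T', hT', E', F', hE', hF', hE1', hF1'⟩ := h2
  simp only [neg_neg] at hF'
  rcases le_total T T' with h | h
  · exact sign_clash hS hR hT hT' h hE hF' hE1 hF1'
  · exact sign_clash hS hR.neg hT' hT h hE' hF hE1' hF1

lemma QQ.isOpen {P r k : ℝ → ℝ} {s0 L : ℝ} (hS : ∀ T, s0 < T → T < L → Setup P s0 T)
    (hr : ContinuousOn r (Ico 0 L)) (hk : ContinuousOn k (Ico 0 L)) :
    IsOpen {μ : ℝ | QQ P (fun s => r s + μ * k s) s0 L} := by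
  rw [Metric.isOpen_iff]
  rintro μ ⟨T, hT, E, F, hE, hF, hE1, hF1⟩
  have hs := hS T hT.1 hT.2
  have hsub : Icc 0 T ⊆ Ico 0 L := fun x hx => ⟨hx.1, hx.2.trans_lt hT.2⟩
  have hk' := hk.mono hsub
  have hR : ContinuousOn (fun s => r s + μ * k s) (Icc 0 T) :=
    (hr.mono hsub).add (continuousOn_const.mul hk')
  obtain ⟨δ1, hδ1, H1⟩ := stability hs hR hk' hE (ε := - E T) (by linarith)
  obtain ⟨δ2, hδ2, H2⟩ := stability hs hR.neg hk'.neg hF hF1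
  refine ⟨min δ1 δ2, lt_min hδ1 hδ2, ?_⟩
  intro μ' hμ'
  rw [Metric.mem_ball, Real.dist_eq, lt_min_iff] at hμ'
  have hT0 : 0 < T := hs.s0pos.trans hT.1
  have hR' : ContinuousOn (fun s => r s + μ' * k s) (Icc 0 T) :=
    (hr.mono hsub).add (continuousOn_const.mul hk')
  obtain ⟨E', hE'⟩ := exists_sol hT0 hs.cont hR'
  obtain ⟨F', hF'⟩ := exists_sol hT0 hs.cont hR'.neg
  refine ⟨T, hT, E', F', hE', hF', ?_, ?_⟩
  · have := H1 (μ' - μ) hμ'.1 E' (by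
      convert hE' using 1; funext s; ring)
    linarith [(abs_lt.1 this).2]
  · have := H2 (μ' - μ) hμ'.2 F' (by
      convert hF' using 1; funext s; simp only [Pi.neg_apply]; ring)
    linarith [(abs_lt.1 this).1]

lemma exists_mid {P r k : ℝ → ℝ} {s0 L : ℝ} (hS : ∀ T, s0 < T → T < L → Setup P s0 T)
    (hr : ContinuousOn r (Ico 0 L)) (hk : ContinuousOn k (Ico 0 L)) {M : Set ℝ}
    (hM : IsPreconnected M) {a b : ℝ} (ha : a ∈ M) (hb : b ∈ M)
    (hA : QQ P (fun s => r s + a * k s) s0 L) (hB : QQ P (fun s => -(r s + b * k s)) s0 L) :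
    ∃ μ ∈ M, ¬ QQ P (fun s => r s + μ * k s) s0 L ∧ ¬ QQ P (fun s => -(r s + μ * k s)) s0 L := by
  by_contra hcon
  push Not at hcon
  have o1 := QQ.isOpen hS hr hk
  have o2 : IsOpen {μ : ℝ | QQ P (fun s => -(r s + μ * k s)) s0 L} := by
    convert QQ.isOpen hS hr.neg hk.neg using 3 with μ
    apply iff_of_eq
    congr 1
    funext s
    simp only [Pi.neg_apply]; ring
  obtain ⟨μ, _, h1, h2⟩ := hM _ _ o1 o2 (fun μ hμ => by
    by_cases h : QQ P (fun s => r s + μ * k s) s0 L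
    · exact Or.inl h
    · exact Or.inr (hcon μ hμ h)) ⟨a, ha, hA⟩ ⟨b, hb, hB⟩
  exact QQ.disj hS (hr.add (continuousOn_const.mul hk)) h1 h2

lemma mid_closed_aux {P R : ℝ → ℝ} {s0 L : ℝ} (hS : ∀ T, s0 < T → T < L → Setup P s0 T)
    (hR : ContinuousOn R (Ico 0 L)) (h1 : ¬ QQ P R s0 L) (h2 : ¬ QQ P (fun s => - R s) s0 L)
    {T : ℝ} {E : ℝ → ℝ} (hT : T ∈ Ioo s0 L) (hE : Sol P R T E) (hET : E T ≤ 0) :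
    ∃ p ∈ Ioo s0 L, ∃ E F, Sol P R p E ∧ Sol P (fun s => - R s) p F ∧
      (∀ s ∈ Ioo 0 p, 0 < E s) ∧ (∀ s ∈ Ioo 0 p, 0 < F s) ∧ E p = 0 ∧ F p = 0 := by
  obtain ⟨T', hTT', hT'L⟩ := exists_between hT.2
  have hs' := hS T' (hT.1.trans hTT') hT'L
  have hs0 := hs'.s0pos
  have hsub : Icc 0 T' ⊆ Ico 0 L := fun x hx => ⟨hx.1, hx.2.trans_lt hT'L⟩
  have hR' := hR.mono hsub
  have hT0 : 0 < T := hs0.trans hT.1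
  obtain ⟨G, hG⟩ := exists_sol (hT0.trans hTT') hs'.cont hR'
  obtain ⟨F, hF⟩ := exists_sol (hT0.trans hTT') hs'.cont hR'.neg
  have hF : Sol P (fun s => - R s) T' F := hF
  have hGT : G T ≤ 0 := by
    rw [← hE.unique (hS T hT.1 hT.2) (hR'.mono (Icc_subset_Icc_right hTT'.le)) (hG.mono hTT'.le)
      T ⟨hT0.le, le_rfl⟩]
    exact hET
  have hGs : 0 < G (s0/2) := hG.pos hs' _ ⟨by linarith, by linarith⟩
  obtain ⟨p, hp, hGp⟩ : ∃ p ∈ Icc (s0/2) T, G p = 0 := by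
    have := intermediate_value_Icc' (by linarith [hT.1] : s0/2 ≤ T)
      (hG.1.mono (Icc_subset_Icc (by linarith) hTT'.le))
    obtain ⟨p, hp, h⟩ := this ⟨hGT, hGs.le⟩
    exact ⟨p, hp, h⟩
  have hp0 : 0 < p := by linarith [hp.1]
  have hpT' : p < T' := hp.2.trans_lt hTT'
  have hpL : p < L := hpT'.trans hT'L
  have hps0 : s0 ≤ p := by
    by_contra hc
    linarith [hG.pos hs' p ⟨hp0, not_le.1 hc⟩]
  have hGpos : ∀ s ∈ Ioo 0 p, 0 < G s := by
    intro s hs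
    by_contra hc
    linarith [hG.neg_after' hs' hR' hs.1 hs.2 hpT'.le (not_lt.1 hc)]
  have hFcp : ContinuousAt F p := (hF.2.2 p ⟨hp0, hpT'⟩).continuousAt
  have hFp : F p = 0 := by
    rcases lt_trichotomy (F p) 0 with h | h | h
    · exfalso
      have hlt : s0 < p := by
        refine lt_of_le_of_ne hps0 ?_
        rintro rfl
        linarith [hF.nonneg_s0 hs']
      have h3 : ∀ᶠ t in nhdsWithin p (Iio p), F t < 0 :=
        (hFcp.tendsto.mono_left nhdsWithin_le_nhds).eventually (gt_mem_nhds h)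
      obtain ⟨t, ht1, ht2⟩ := (h3.and (Ioo_mem_nhdsLT hlt)).exists
      refine h2 ⟨t, ⟨ht2.1, ht2.2.trans hpL⟩, F, G, hF.mono (ht2.2.trans hpT').le, ?_, ht1,
        hGpos t ⟨hs0.trans ht2.1, ht2.2⟩⟩
      simpa only [neg_neg] using hG.mono (ht2.2.trans hpT').le
    · exact h
    · exfalso
      have h3 : ∀ᶠ t in nhdsWithin p (Ioi p), 0 < F t :=
        (hFcp.tendsto.mono_left nhdsWithin_le_nhds).eventually (lt_mem_nhds h)
      obtain ⟨t, ht1, ht2⟩ := (h3.and (Ioo_mem_nhdsGT hpT')).exists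
      exact h1 ⟨t, ⟨hps0.trans_lt ht2.1, ht2.2.trans hT'L⟩, G, F, hG.mono ht2.2.le, hF.mono ht2.2.le,
        hG.neg_after' hs' hR' hp0 ht2.1 ht2.2.le hGp.le, ht1⟩
  have hlt : s0 < p := by
    refine lt_of_le_of_ne hps0 ?_
    rintro rfl
    rcases le_total 0 (R s0) with h | h
    · linarith [hG.pos_s0 hs' hR' h]
    · linarith [hF.pos_s0 hs' hR'.neg (by simpa using h)]
  refine ⟨p, ⟨hlt, hpL⟩, G, F, hG.mono hpT'.le, hF.mono hpT'.le, hGpos, ?_, hGp, hFp⟩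
  intro s hs
  by_contra hc
  linarith [hF.neg_after' hs' hR'.neg hs.1 hs.2 hpT'.le (not_lt.1 hc)]

lemma mid_closed {P R : ℝ → ℝ} {s0 L : ℝ} (hS : ∀ T, s0 < T → T < L → Setup P s0 T)
    (hR : ContinuousOn R (Ico 0 L)) (h1 : ¬ QQ P R s0 L) (h2 : ¬ QQ P (fun s => - R s) s0 L)
    (h : ∃ T ∈ Ioo s0 L, ∃ E, (Sol P R T E ∨ Sol P (fun s => - R s) T E) ∧ E T ≤ 0) :
    ∃ p ∈ Ioo s0 L, ∃ E F, Sol P R p E ∧ Sol P (fun s => - R s) p F ∧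
      (∀ s ∈ Ioo 0 p, 0 < E s) ∧ (∀ s ∈ Ioo 0 p, 0 < F s) ∧ E p = 0 ∧ F p = 0 := by
  obtain ⟨T, hT, E, hE | hE, hET⟩ := h
  · exact mid_closed_aux hS hR h1 h2 hT hE hET
  · obtain ⟨p, hp, E, F, a1, a2, a3, a4, a5, a6⟩ :=
      mid_closed_aux hS hR.neg h2 (by simpa only [Pi.neg_apply, neg_neg] using h1) hT hE hET
    simp only [Pi.neg_apply, neg_neg] at a2
    exact ⟨p, hp, F, E, a2, a1, a4, a3, a6, a5⟩

/-- Scalar form of the desired conclusion. -/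
def Closed (P R : ℝ → ℝ) (p : ℝ) : Prop :=
  ∃ E F, Sol P R p E ∧ Sol P (fun s => - R s) p F ∧
      (∀ s ∈ Ioo 0 p, 0 < E s) ∧ (∀ s ∈ Ioo 0 p, 0 < F s) ∧ E p = 0 ∧ F p = 0

lemma becomes_neg {P R1 R2 E E2 : ℝ → ℝ} {s0 L : ℝ} (hS : Setup P s0 L)
    (hR : ContinuousOn R1 (Icc 0 L)) (h1 : Sol P R1 L E) (h2 : Sol P R2 L E2) (h2L : E2 L = 0)
    (hlt : ∀ s ∈ Ioo 0 L, R1 s < R2 s) : ∃ T ∈ Ioo s0 L, E T < 0 := by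
  by_contra hcon
  push Not at hcon
  have := h1.compare hS h2 hlt (fun s hs => by
    by_contra hc
    obtain ⟨t, ht1, ht2⟩ := exists_between (max_lt hs.2 hS.s0T)
    have := h1.neg_after' hS hR hs.1 ((le_max_left _ _).trans_lt ht1) ht2.le (not_lt.1 hc)
    linarith [hcon t ⟨(le_max_right _ _).trans_lt ht1, ht2⟩])
  linarith

lemma existence_D1 {P r k Eb Ef : ℝ → ℝ} {s0 L μb μf : ℝ} (hS : Setup P s0 L)
    (hr : ContinuousOn r (Icc 0 L)) (hk : ContinuousOn k (Icc 0 L))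
    (hk0 : ∀ s ∈ Ioo 0 L, 0 < k s) (hlt : μb < μf)
    (hEb : Sol P (fun s => -(r s + μb * k s)) L Eb) (hEbpos : ∀ s ∈ Ioo 0 L, 0 < Eb s)
    (hEbL : Eb L = 0)
    (hEf : Sol P (fun s => r s + μf * k s) L Ef) (hEfpos : ∀ s ∈ Ioo 0 L, 0 < Ef s)
    (hEfL : Ef L = 0) :
    ∃ μ, ∃ p ∈ Ioo s0 L, Closed P (fun s => r s + μ * k s) p := by
  have hSS : ∀ T, s0 < T → T < L → Setup P s0 T := fun T h1 h2 => hS.mono h1 h2.le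
  have hL : 0 < L := hS.s0pos.trans hS.s0T
  have hs0 := hS.s0pos
  have hRμ : ∀ μ, ContinuousOn (fun s => r s + μ * k s) (Icc 0 L) := fun μ =>
    hr.add (continuousOn_const.mul hk)
  have hRμ' : ∀ μ, ContinuousOn (fun s => -(r s + μ * k s)) (Icc 0 L) := fun μ => (hRμ μ).neg
  have hA : QQ P (fun s => r s + μb * k s) s0 L := by
    obtain ⟨E, hE⟩ := exists_sol hL hS.cont (hRμ μb)
    obtain ⟨T, hT, hET⟩ := becomes_neg hS (hRμ μb) hE hEf hEfL (fun s hs => by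
      have := mul_lt_mul_of_pos_right hlt (hk0 s hs); linarith)
    exact ⟨T, hT, E, Eb, hE.mono hT.2.le, hEb.mono hT.2.le, hET, hEbpos T ⟨hs0.trans hT.1, hT.2⟩⟩
  have hB : QQ P (fun s => -(r s + μf * k s)) s0 L := by
    obtain ⟨E, hE⟩ := exists_sol hL hS.cont (hRμ' μf)
    obtain ⟨T, hT, hET⟩ := becomes_neg hS (hRμ' μf) hE hEb hEbL (fun s hs => by
      have := mul_lt_mul_of_pos_right hlt (hk0 s hs); linarith)
    refine ⟨T, hT, E, Ef, hE.mono hT.2.le, ?_, hET, hEfpos T ⟨hs0.trans hT.1, hT.2⟩⟩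
    simpa only [neg_neg] using hEf.mono hT.2.le
  obtain ⟨μ, hμ, h1, h2⟩ := exists_mid hSS (hr.mono Ico_subset_Icc_self)
    (hk.mono Ico_subset_Icc_self) isPreconnected_Icc (left_mem_Icc.2 hlt.le)
    (right_mem_Icc.2 hlt.le) hA hB
  have hμb : μb < μ := by
    refine lt_of_le_of_ne hμ.1 ?_
    rintro rfl
    exact h1 hA
  refine ⟨μ, mid_closed hSS ((hRμ μ).mono Ico_subset_Icc_self) h1 h2 ?_⟩
  obtain ⟨E, hE⟩ := exists_sol hL hS.cont (hRμ' μ)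
  obtain ⟨T, hT, hET⟩ := becomes_neg hS (hRμ' μ) hE hEb hEbL (fun s hs => by
      have := mul_lt_mul_of_pos_right hμb (hk0 s hs); linarith)
  exact ⟨T, hT, E, Or.inr (hE.mono hT.2.le), hET.le⟩

/-- If both branches stay positive then `∫ -P` stays bounded. -/
lemma bounded_of_pos {P R W W' : ℝ → ℝ} {s0 s1 L : ℝ} (hS : ∀ T, s0 < T → T < L → Setup P s0 T)
    (hR : ContinuousOn R (Ico 0 L)) (hs1 : s1 ∈ Ioo s0 L)
    (hpos : ∀ T ∈ Ioo s0 L, ∀ E, (Sol P R T E ∨ Sol P (fun s => - R s) T E) → 0 < E T)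
    (hW : ∀ s ∈ Ico s1 L, HasDerivAt W (W' s) s) (hWP : ∀ s ∈ Ico s1 L, W' s ≤ - P s) :
    ∃ C, ∀ s ∈ Ioo s1 L, W s ≤ C := by
  have hs := hS s1 hs1.1 hs1.2
  have hs10 : 0 < s1 := hs.s0pos.trans hs1.1
  have hRT : ∀ T, T < L → ContinuousOn R (Icc 0 T) := fun T hT =>
    hR.mono (fun x hx => ⟨hx.1, hx.2.trans_lt hT⟩)
  obtain ⟨E1, hE1⟩ := exists_sol hs10 hs.cont (hRT s1 hs1.2)
  obtain ⟨F1, hF1⟩ := exists_sol hs10 hs.cont (hRT s1 hs1.2).neg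
  have hF1 : Sol P (fun s => - R s) s1 F1 := hF1
  refine ⟨W s1 + (Real.sqrt (E1 s1) + Real.sqrt (F1 s1)) ^ 2, ?_⟩
  intro t ht
  obtain ⟨T, htT, hTL⟩ := exists_between ht.2
  have hs0T : s0 < T := hs1.1.trans (ht.1.trans htT)
  have hsT := hS T hs0T hTL
  have hT0 : 0 < T := hsT.s0pos.trans hs0T
  obtain ⟨E, hE⟩ := exists_sol hT0 hsT.cont (hRT T hTL)
  obtain ⟨F, hF⟩ := exists_sol hT0 hsT.cont (hRT T hTL).neg
  have hF : Sol P (fun s => - R s) T F := hF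
  have hs1T : s1 ≤ T := (ht.1.trans htT).le
  have e1 : E s1 = E1 s1 :=
    (hE.mono hs1T).unique hs (hRT s1 hs1.2) hE1 s1 ⟨hs10.le, le_rfl⟩
  have e2 : F s1 = F1 s1 :=
    (hF.mono hs1T).unique hs (hRT s1 hs1.2).neg hF1 s1 ⟨hs10.le, le_rfl⟩
  have hEpos : ∀ x ∈ Icc s1 t, 0 < E x := fun x hx =>
    hpos x ⟨hs1.1.trans_le hx.1, hx.2.trans_lt ht.2⟩ E (Or.inl (hE.mono (hx.2.trans htT.le)))
  have hFpos : ∀ x ∈ Icc s1 t, 0 < F x := fun x hx =>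
    hpos x ⟨hs1.1.trans_le hx.1, hx.2.trans_lt ht.2⟩ F (Or.inr (hF.mono (hx.2.trans htT.le)))
  have hd : ∀ x ∈ Icc s1 t, HasDerivAt
      (fun s => W s + (Real.sqrt (E s) + Real.sqrt (F s)) ^ 2)
      (W' x + 2 * (Real.sqrt (E x) + Real.sqrt (F x)) *
        ((P x / (2 * Real.sqrt (E x)) + R x / 2) +
          (P x / (2 * Real.sqrt (F x)) + (- R x) / 2))) x := by
    intro x hx
    have hx0 : x ∈ Ioo 0 T := ⟨hs10.trans_le hx.1, hx.2.trans_lt htT⟩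
    have a1 := hE.sqrt_deriv hx0 (hEpos x hx)
    have a2 := hF.sqrt_deriv hx0 (hFpos x hx)
    have a3 := (hW x ⟨hx.1, hx.2.trans_lt ht.2⟩).add ((a1.add a2).pow 2)
    refine a3.congr_deriv ?_
    simp only [Pi.add_apply]
    push_cast
    ring
  have hanti : AntitoneOn (fun s => W s + (Real.sqrt (E s) + Real.sqrt (F s)) ^ 2) (Icc s1 t) := by
    refine antitoneOn_of_deriv_nonpos (convex_Icc _ _)
      (fun x hx => (hd x hx).continuousAt.continuousWithinAt)
      (fun x hx => (hd x (interior_subset hx)).differentiableAt.differentiableWithinAt) ?_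
    intro x hx
    have hx' := interior_subset hx
    rw [(hd x hx').deriv]
    have a0 := hWP x ⟨hx'.1, hx'.2.trans_lt ht.2⟩
    have hP : P x < 0 := hsT.neg x ⟨hs1.1.trans_le hx'.1, hx'.2.trans_lt htT⟩
    have b1 := Real.sqrt_pos.2 (hEpos x hx')
    have b2 := Real.sqrt_pos.2 (hFpos x hx')
    set y := Real.sqrt (E x)
    set w := Real.sqrt (F x)
    have e : 2 * (y + w) * ((P x / (2 * y) + R x / 2) + (P x / (2 * w) + (- R x) / 2)) =
      P x * ((y + w) ^ 2 / (y * w)) := by field_simp; ring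
    rw [e]
    have : 1 ≤ (y + w) ^ 2 / (y * w) := by
      rw [le_div_iff₀ (by positivity)]; nlinarith
    nlinarith
  have := hanti (left_mem_Icc.2 ht.1.le) (right_mem_Icc.2 ht.1.le) ht.1.le
  simp only [e1, e2] at this
  have h5 : 0 ≤ (Real.sqrt (E t) + Real.sqrt (F t)) ^ 2 := by positivity
  linarith

lemma existence_D2 {P r k W W' : ℝ → ℝ} {s0 s1 L : ℝ} (hS : ∀ T, s0 < T → T < L → Setup P s0 T)
    (hs0L : s0 < L) (hPneg : ∀ s ∈ Ioo s0 L, P s < 0)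
    (hr : ContinuousOn r (Ico 0 L)) (hk : ContinuousOn k (Ico 0 L))
    (hk0 : ∀ s ∈ Ico 0 L, 0 < k s) (hs1 : s1 ∈ Ioo s0 L)
    (hW : ∀ s ∈ Ico s1 L, HasDerivAt W (W' s) s) (hWP : ∀ s ∈ Ico s1 L, W' s ≤ - P s)
    (hunb : ¬ ∃ C, ∀ s ∈ Ioo s1 L, W s ≤ C) :
    ∃ μ, ∃ p ∈ Ioo s0 L, Closed P (fun s => r s + μ * k s) p := by
  have hRμ : ∀ μ, ContinuousOn (fun s => r s + μ * k s) (Ico 0 L) := fun μ =>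
    hr.add (continuousOn_const.mul hk)
  obtain ⟨T, hT0, hTL⟩ := exists_between hs0L
  have hsT := hS T hT0 hTL
  have hTpos : 0 < T := hsT.s0pos.trans hT0
  have hsub : Icc 0 T ⊆ Ico 0 L := fun x hx => ⟨hx.1, hx.2.trans_lt hTL⟩
  obtain ⟨N1, hN1⟩ := Sol.large hsT
  obtain ⟨N2, hN2⟩ := Sol.small hsT (hPneg T ⟨hT0, hTL⟩)
  obtain ⟨B, hB⟩ := isCompact_Icc.exists_bound_of_continuousOn (hr.mono hsub)
  obtain ⟨x0, hx0, hmin⟩ := isCompact_Icc.exists_isMinOn (nonempty_Icc.2 hTpos.le) (hk.mono hsub)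
  have hm0 : 0 < k x0 := hk0 x0 (hsub hx0)
  have hm : ∀ s ∈ Icc 0 T, k x0 ≤ k s := fun s hs => hmin hs
  set N := max 0 (max N1 N2) with hNdef
  have hN0 : 0 ≤ N := le_max_left _ _
  have hNN1 : N1 ≤ N := (le_max_left _ _).trans (le_max_right _ _)
  have hNN2 : N2 ≤ N := (le_max_right _ _).trans (le_max_right _ _)
  have hB0 : 0 ≤ B := (abs_nonneg _).trans (hB 0 ⟨le_rfl, hTpos.le⟩)
  set a := (N + B) / k x0 with ha
  have ha0 : 0 ≤ a := by positivity
  have hak : ∀ s ∈ Icc 0 T, N + B ≤ a * k s := by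
    intro s hs
    have : N + B = a * k x0 := by rw [ha]; field_simp
    rw [this]
    exact mul_le_mul_of_nonneg_left (hm s hs) ha0
  have hrB : ∀ s ∈ Icc 0 T, -B ≤ r s ∧ r s ≤ B := fun s hs => abs_le.1 (hB s hs)
  have hA : QQ P (fun s => r s + (-a) * k s) s0 L := by
    obtain ⟨E, hE⟩ := exists_sol hTpos hsT.cont ((hRμ (-a)).mono hsub)
    obtain ⟨F, hF⟩ := exists_sol hTpos hsT.cont ((hRμ (-a)).mono hsub).neg
    refine ⟨T, ⟨hT0, hTL⟩, E, F, hE, hF, ?_, ?_⟩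
    · refine hN2 _ E hE (fun s hs => ?_)
      linarith [hrB s hs, hak s hs]
    · refine hN1 _ F hF (fun s hs => ?_)
      simp only [Pi.neg_apply]
      linarith [hrB s hs, hak s hs]
  have hBB : QQ P (fun s => -(r s + a * k s)) s0 L := by
    obtain ⟨F, hF⟩ := exists_sol hTpos hsT.cont ((hRμ a).mono hsub)
    obtain ⟨E, hE⟩ := exists_sol hTpos hsT.cont ((hRμ a).mono hsub).neg
    refine ⟨T, ⟨hT0, hTL⟩, E, F, hE, by simpa only [neg_neg] using hF, ?_, ?_⟩
    · refine hN2 _ E hE (fun s hs => ?_)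
      simp only [Pi.neg_apply]
      linarith [hrB s hs, hak s hs]
    · refine hN1 _ F hF (fun s hs => ?_)
      linarith [hrB s hs, hak s hs]
  obtain ⟨μ, _, h1, h2⟩ := exists_mid hS hr hk isPreconnected_univ (mem_univ (-a)) (mem_univ a) hA hBB
  refine ⟨μ, mid_closed hS (hRμ μ) h1 h2 ?_⟩
  by_contra hcon
  push Not at hcon
  exact hunb (bounded_of_pos hS (hRμ μ) hs1 (fun T hT E hE => hcon T hT E hE) hW hWP)

/-- Uniqueness of the closing parameter. -/
lemma closed_unique {P r k : ℝ → ℝ} {s0 L μ1 μ2 p1 p2 : ℝ}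
    (hS : ∀ T, s0 < T → T < L → Setup P s0 T) (hk0 : ∀ s ∈ Ico 0 L, 0 < k s)
    (hp1 : p1 ∈ Ioo s0 L) (hp2 : p2 ∈ Ioo s0 L)
    (h1 : Closed P (fun s => r s + μ1 * k s) p1) (h2 : Closed P (fun s => r s + μ2 * k s) p2) :
    ¬ μ1 < μ2 := by
  intro hlt
  obtain ⟨E1, F1, a1, b1, c1, d1, e1, f1⟩ := h1
  obtain ⟨E2, F2, a2, b2, c2, d2, e2, f2⟩ := h2
  rcases le_total p1 p2 with h | h
  · have := (b2.mono h).compare (hS p1 hp1.1 hp1.2) b1 (fun s hs => by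
      have := mul_lt_mul_of_pos_right hlt (hk0 s ⟨hs.1.le, hs.2.trans hp1.2⟩)
      linarith) (fun s hs => d2 s ⟨hs.1, hs.2.trans_le h⟩)
    linarith
  · have := (a1.mono h).compare (hS p2 hp2.1 hp2.2) a2 (fun s hs => by
      have := mul_lt_mul_of_pos_right hlt (hk0 s ⟨hs.1.le, hs.2.trans hp2.2⟩)
      linarith) (fun s hs => c1 s ⟨hs.1, hs.2.trans_le h⟩)
    linarith

lemma antideriv {a b c : ℝ} {f : ℝ → ℝ} (hc : c ∈ Ioo a b) (hf : ContinuousOn f (Ioo a b)) :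
    ∃ Z : ℝ → ℝ, ∀ x ∈ Ioo a b, HasDerivAt Z (f x) x := by
  refine ⟨fun u => ∫ x in c..u, f x, fun x hx => ?_⟩
  refine intervalIntegral.integral_hasDerivAt_right ?_ ?_ ?_
  · refine ContinuousOn.intervalIntegrable (hf.mono ?_)
    exact ordConnected_Ioo.uIcc_subset hc hx
  · exact hf.stronglyMeasurableAtFilter isOpen_Ioo x hx
  · exact hf.continuousAt (Ioo_mem_nhds hx.1 hx.2)

lemma strictMonoOn_of_hasDerivAt {I : Set ℝ} {Z φ : ℝ → ℝ} (hI : Convex ℝ I)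
    (hZ : ∀ x ∈ I, HasDerivAt Z (φ x) x) (hφ : ∀ x ∈ I, 0 < φ x) : StrictMonoOn Z I :=
  strictMonoOn_of_deriv_pos hI (fun x hx => (hZ x hx).continuousAt.continuousWithinAt)
    (fun x hx => by rw [(hZ x (interior_subset hx)).deriv]; exact hφ x (interior_subset hx))

lemma inverse_fun {I : Set ℝ} {Z φ : ℝ → ℝ} (hIo : IsOpen I) (hI : Convex ℝ I)
    (hZ : ∀ x ∈ I, HasDerivAt Z (φ x) x) (hφ : ∀ x ∈ I, 0 < φ x) :
    ∃ U : ℝ → ℝ, (∀ z ∈ Z '' I, U z ∈ I ∧ Z (U z) = z ∧ HasDerivAt U (φ (U z))⁻¹ z) ∧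
      (∀ x ∈ I, U (Z x) = x) ∧ StrictMonoOn U (Z '' I) ∧ IsOpen (Z '' I) := by
  have hmono := strictMonoOn_of_hasDerivAt hI hZ hφ
  have hcont : ContinuousOn Z I := fun x hx => (hZ x hx).continuousAt.continuousWithinAt
  have hJ : IsOpen (Z '' I) := by
    rw [isOpen_iff_mem_nhds]
    rintro z ⟨x, hx, rfl⟩
    obtain ⟨l, r, hlr, hsub⟩ := mem_nhds_iff_exists_Ioo_subset.1 (hIo.mem_nhds hx)
    obtain ⟨l', hl1, hl2⟩ := exists_between hlr.1
    obtain ⟨r', hr1, hr2⟩ := exists_between hlr.2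
    have hsub' : Icc l' r' ⊆ I := fun y hy => hsub ⟨hl1.trans_le hy.1, hy.2.trans_lt hr2⟩
    have h1 := intermediate_value_Icc (hl2.trans hr1).le (hcont.mono hsub')
    have hl : l' ∈ I := hsub' ⟨le_rfl, (hl2.trans hr1).le⟩
    have hr : r' ∈ I := hsub' ⟨(hl2.trans hr1).le, le_rfl⟩
    exact mem_of_superset (Icc_mem_nhds (hmono hl hx hl2) (hmono hx hr hr1))
      (h1.trans (image_mono hsub'))
  have hex : ∀ z ∈ Z '' I, ∃ x, x ∈ I ∧ Z x = z := fun z hz => hz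
  choose! U hU using hex
  have hUZ : ∀ x ∈ I, U (Z x) = x := fun x hx =>
    hmono.injOn (hU (Z x) ⟨x, hx, rfl⟩).1 hx (hU (Z x) ⟨x, hx, rfl⟩).2
  have hUm : StrictMonoOn U (Z '' I) := by
    intro a ha b hb hab
    by_contra hcon
    have := hmono.monotoneOn (hU b hb).1 (hU a ha).1 (not_lt.1 hcon)
    rw [(hU a ha).2, (hU b hb).2] at this
    linarith
  have hUim : U '' (Z '' I) = I := by
    ext x
    constructor
    · rintro ⟨z, hz, rfl⟩; exact (hU z hz).1
    · intro hx; exact ⟨Z x, ⟨x, hx, rfl⟩, hUZ x hx⟩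
  refine ⟨U, fun z hz => ⟨(hU z hz).1, (hU z hz).2, ?_⟩, hUZ, hUm, hJ⟩
  have hc : ContinuousAt U z := hUm.continuousAt_of_image_mem_nhds (hJ.mem_nhds hz)
    (by rw [hUim]; exact hIo.mem_nhds (hU z hz).1)
  refine HasDerivAt.of_local_left_inverse hc (hZ _ (hU z hz).1) (hφ _ (hU z hz).1).ne' ?_
  filter_upwards [hJ.mem_nhds hz] with y hy using (hU y hy).2

/-- Scalar flow `u' = φ(u)` from `p` to `q`, with finite start time and infinite end time. -/
lemma scalar_flow {p q m D : ℝ} {φ : ℝ → ℝ} (hpq : p < q) (hφc : ContinuousOn φ (Ioo p q))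
    (hφ : ∀ x ∈ Ioo p q, 0 < φ x) (hm : 0 < m) (hD : 0 < D)
    {x1 : ℝ} (hx1 : x1 ∈ Ioo p q) (hlow : ∀ x ∈ Ioo p x1, m * Real.sqrt (x - p) ≤ φ x)
    {x2 : ℝ} (hx2 : x2 ∈ Ioo p q) (hup : ∀ x ∈ Ioo x2 q, φ x ≤ D * (q - x)) :
    ∃ U : ℝ → ℝ, (∀ z, 0 < z → U z ∈ Ioo p q ∧ HasDerivAt U (φ (U z)) z) ∧
      Tendsto U (nhdsWithin 0 (Ioi 0)) (nhds p) ∧ Tendsto U atTop (nhds q) := by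
  obtain ⟨Z0, hZ0⟩ := antideriv hx1 (f := fun x => (φ x)⁻¹)
    (hφc.inv₀ (fun x hx => (hφ x hx).ne'))
  have hpos : ∀ x ∈ Ioo p q, 0 < (φ x)⁻¹ := fun x hx => inv_pos.2 (hφ x hx)
  have hmono0 := strictMonoOn_of_hasDerivAt (convex_Ioo p q) hZ0 hpos
  -- bounded below
  have hbdd : BddBelow (Z0 '' Ioo p q) := by
    obtain ⟨x3, hx3, hx31⟩ := exists_between hx1.1
    have hx3q : x3 ∈ Ioo p q := ⟨hx3, hx31.trans hx1.2⟩
    have hanti : AntitoneOn (fun x => Z0 x - (2 / m) * Real.sqrt (x - p)) (Ioc p x3) := by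
      have hd : ∀ x ∈ Ioc p x3, HasDerivAt (fun x => Z0 x - (2 / m) * Real.sqrt (x - p))
          ((φ x)⁻¹ - (2 / m) * (1 / (2 * Real.sqrt (x - p)))) x := by
        intro x hx
        have h1 := hZ0 x ⟨hx.1, hx.2.trans_lt hx3q.2⟩
        have h2 : HasDerivAt (fun x => Real.sqrt (x - p)) (1 / (2 * Real.sqrt (x - p))) x :=
          ((hasDerivAt_id x).sub_const p).sqrt (by simp; linarith [hx.1])
        exact h1.sub (h2.const_mul _)
      refine antitoneOn_of_deriv_nonpos (convex_Ioc _ _)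
        (fun x hx => (hd x hx).continuousAt.continuousWithinAt)
        (fun x hx => (hd x (interior_subset hx)).differentiableAt.differentiableWithinAt) ?_
      intro x hx
      have hx' := interior_subset hx
      rw [(hd x hx').deriv]
      have h3 := hlow x ⟨hx'.1, hx'.2.trans_lt hx31⟩
      have h4 : 0 < Real.sqrt (x - p) := Real.sqrt_pos.2 (by linarith [hx'.1])
      have h5 : (φ x)⁻¹ ≤ (m * Real.sqrt (x - p))⁻¹ := inv_anti₀ (by positivity) h3
      have h6 : (2 / m) * (1 / (2 * Real.sqrt (x - p))) = (m * Real.sqrt (x - p))⁻¹ := by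
        field_simp
      rw [h6]; linarith
    refine ⟨Z0 x3 - (2 / m) * Real.sqrt (x3 - p), ?_⟩
    rintro _ ⟨x, hx, rfl⟩
    have hpos3 : 0 ≤ (2 / m) * Real.sqrt (x3 - p) := by positivity
    rcases le_total x x3 with h | h
    · have := hanti ⟨hx.1, h⟩ ⟨hx3, le_rfl⟩ h
      simp only at this
      have h7 : 0 ≤ (2 / m) * Real.sqrt (x - p) := by positivity
      linarith
    · have := hmono0.monotoneOn hx3q hx h
      linarith
  have hne : (Z0 '' Ioo p q).Nonempty := ⟨_, x1, hx1, rfl⟩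
  set α := sInf (Z0 '' Ioo p q) with hα
  set Z : ℝ → ℝ := fun x => Z0 x - α with hZdef
  have hZ : ∀ x ∈ Ioo p q, HasDerivAt Z ((φ x)⁻¹) x := fun x hx => (hZ0 x hx).sub_const _
  have hmono := strictMonoOn_of_hasDerivAt (convex_Ioo p q) hZ hpos
  have hcont : ContinuousOn Z (Ioo p q) := fun x hx => (hZ x hx).continuousAt.continuousWithinAt
  -- unbounded above
  have hunb : ∀ y, ∃ x ∈ Ioo p q, y < Z x := by
    intro y
    obtain ⟨x4, hx4, hx42⟩ := exists_between hx2.2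
    have hmon : MonotoneOn (fun x => Z x + (1 / D) * Real.log (q - x)) (Ico x4 q) := by
      have hd : ∀ x ∈ Ico x4 q, HasDerivAt (fun x => Z x + (1 / D) * Real.log (q - x))
          ((φ x)⁻¹ + (1 / D) * ((-1) / (q - x))) x := by
        intro x hx
        have h1 := hZ x ⟨hx2.1.trans (hx4.trans_le hx.1), hx.2⟩
        have h2 : HasDerivAt (fun x => Real.log (q - x)) ((-1) / (q - x)) x :=
          ((hasDerivAt_id x).const_sub q).log (by simp; linarith [hx.2])
        exact h1.add (h2.const_mul _)
      refine monotoneOn_of_deriv_nonneg (convex_Ico _ _)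
        (fun x hx => (hd x hx).continuousAt.continuousWithinAt)
        (fun x hx => (hd x (interior_subset hx)).differentiableAt.differentiableWithinAt) ?_
      intro x hx
      have hx' := interior_subset hx
      rw [(hd x hx').deriv]
      have h3 := hup x ⟨hx4.trans_le hx'.1, hx'.2⟩
      have h4 : 0 < q - x := by linarith [hx'.2]
      have h5 : (D * (q - x))⁻¹ ≤ (φ x)⁻¹ :=
        inv_anti₀ (hφ x ⟨hx2.1.trans (hx4.trans_le hx'.1), hx'.2⟩) h3
      have h6 : (1 / D) * ((-1) / (q - x)) = - (D * (q - x))⁻¹ := by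
        field_simp
      rw [h6]; linarith
    have hlog : Tendsto (fun x => Real.log (q - x)) (nhdsWithin q (Iio q)) atBot := by
      refine Real.tendsto_log_nhdsGT_zero.comp ?_
      refine tendsto_nhdsWithin_iff.2 ⟨?_, ?_⟩
      · have : Continuous (fun x : ℝ => q - x) := by fun_prop
        have h := this.tendsto q
        rw [sub_self] at h
        exact h.mono_left nhdsWithin_le_nhds
      · filter_upwards [self_mem_nhdsWithin] with x hx
        have : x < q := hx
        show 0 < q - x
        linarith
    have hev := (hlog.eventually (eventually_lt_atBot
      (D * (Z x4 + (1 / D) * Real.log (q - x4) - y)))).and (Ioo_mem_nhdsLT hx42)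
    obtain ⟨x, hxa, hxb⟩ := hev.exists
    refine ⟨x, ⟨hx2.1.trans (hx4.trans hxb.1), hxb.2⟩, ?_⟩
    have := hmon ⟨le_rfl, hx42⟩ ⟨hxb.1.le, hxb.2⟩ hxb.1.le
    simp only at this
    have h8 : (1 / D) * Real.log (q - x) < Z x4 + (1 / D) * Real.log (q - x4) - y := by
      have h9 := mul_lt_mul_of_pos_left hxa (by positivity : 0 < 1 / D)
      rw [← mul_assoc, one_div_mul_cancel hD.ne', one_mul] at h9
      exact h9
    linarith
  have himg : Z '' Ioo p q = Ioi 0 := by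
    ext z
    constructor
    · rintro ⟨x, hx, rfl⟩
      obtain ⟨y, hy1, hy2⟩ := exists_between hx.1
      have hy : y ∈ Ioo p q := ⟨hy1, hy2.trans hx.2⟩
      have h1 := hmono0 hy hx hy2
      have h2 := csInf_le hbdd ⟨y, hy, rfl⟩
      show 0 < Z0 x - α
      linarith
    · intro hz
      have hz : 0 < z := hz
      obtain ⟨_, ⟨x, hx, rfl⟩, hxz⟩ := exists_lt_of_csInf_lt hne (by linarith : α < z + α)
      obtain ⟨y, hy, hyz⟩ := hunb z
      have hxz' : Z x < z := by simp only [hZdef]; linarith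
      have hxy : x < y := by
        by_contra hc
        have := hmono.monotoneOn hy hx (not_lt.1 hc)
        linarith
      have hs : Icc x y ⊆ Ioo p q := fun t ht => ⟨hx.1.trans_le ht.1, ht.2.trans_lt hy.2⟩
      obtain ⟨t, ht, hte⟩ := intermediate_value_Icc hxy.le (hcont.mono hs) ⟨hxz'.le, hyz.le⟩
      exact ⟨t, hs ht, hte⟩
  obtain ⟨U, hU, hUZ, hUm, _⟩ := inverse_fun isOpen_Ioo (convex_Ioo p q) hZ hpos
  rw [himg] at hU hUm
  refine ⟨U, fun z hz => ⟨(hU z hz).1, by simpa using (hU z hz).2.2⟩, ?_, ?_⟩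
  · rw [tendsto_order]
    constructor
    · intro a ha
      filter_upwards [self_mem_nhdsWithin] with z hz using ha.trans (hU z hz).1.1
    · intro a ha
      obtain ⟨x, hx1', hx2'⟩ := exists_between (lt_min ha hpq)
      have hx : x ∈ Ioo p q := ⟨hx1', hx2'.trans_le (min_le_right _ _)⟩
      have hZx : 0 < Z x := by
        have : Z x ∈ Z '' Ioo p q := ⟨x, hx, rfl⟩
        rw [himg] at this; exact this
      filter_upwards [Ioo_mem_nhdsGT hZx] with z hz
      have := hUm hz.1 hZx hz.2
      rw [hUZ x hx] at this
      exact this.trans (hx2'.trans_le (min_le_left _ _))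
  · rw [tendsto_order]
    constructor
    · intro a ha
      obtain ⟨x, hx1', hx2'⟩ := exists_between (max_lt ha hpq)
      have hx : x ∈ Ioo p q := ⟨(le_max_right _ _).trans_lt hx1', hx2'⟩
      have hZx : 0 < Z x := by
        have : Z x ∈ Z '' Ioo p q := ⟨x, hx, rfl⟩
        rw [himg] at this; exact this
      filter_upwards [eventually_gt_atTop (Z x)] with z hz
      have := hUm hZx (hZx.trans hz) hz
      rw [hUZ x hx] at this
      exact ((le_max_left _ _).trans_lt hx1').trans this
    · intro a ha
      filter_upwards [eventually_gt_atTop 0] with z hz using (hU z hz).1.2.trans ha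

/-- Half orbit reconstructed from the energy profile. -/
lemma half_orbit {G H F : ℝ → ℝ} {u2 p s0 g r : ℝ} (hp : p < u2)
    (hG : ContinuousOn G (Icc p u2)) (hH : ContinuousOn H (Icc p u2))
    (hS : Setup (fun s => -2 * G (u2 - s)) s0 (u2 - p))
    (hF : Sol (fun s => -2 * G (u2 - s)) (fun s => -2 * H (u2 - s)) (u2 - p) F)
    (hFpos : ∀ s ∈ Ioo 0 (u2 - p), 0 < F s) (hFT : F (u2 - p) = 0) (hGp : 0 < G p)
    (hg : 0 < g) (hr : 0 < r) (hPg : ∀ s ∈ Ioc 0 r, -2 * G (u2 - s) ≤ g * s) :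
    ∃ u w : ℝ → ℝ, u 0 = p ∧ w 0 = 0 ∧
      (∀ z, 0 < z → HasDerivAt u (w z) z ∧ HasDerivAt w (G (u z) + H (u z) * w z) z) ∧
      HasDerivWithinAt u 0 (Ici 0) 0 ∧ HasDerivWithinAt w (G p) (Ici 0) 0 ∧
      Tendsto u atTop (nhds u2) ∧ Tendsto w atTop (nhds 0) ∧ ∀ z, 0 ≤ z → p ≤ u z := by
  set T := u2 - p with hT
  have hT0 : 0 < T := by linarith
  set φ : ℝ → ℝ := fun x => Real.sqrt (F (u2 - x)) with hφdef
  have hmap : ∀ x ∈ Ioo p u2, u2 - x ∈ Ioo 0 T := fun x hx => ⟨by linarith [hx.2], by linarith [hx.1]⟩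
  have hmap' : ∀ x ∈ Icc p u2, u2 - x ∈ Icc 0 T := fun x hx => ⟨by linarith [hx.2], by linarith [hx.1]⟩
  have hφc : ContinuousOn φ (Icc p u2) :=
    (hF.1.comp (by fun_prop : ContinuousOn (fun x : ℝ => u2 - x) (Icc p u2)) hmap').sqrt
  have hφpos : ∀ x ∈ Ioo p u2, 0 < φ x := fun x hx => Real.sqrt_pos.2 (hFpos _ (hmap x hx))
  have hφp : φ p = 0 := by simp only [hφdef]; rw [← hT, hFT, Real.sqrt_zero]
  have hφu : φ u2 = 0 := by simp only [hφdef]; rw [sub_self, hF.2.1, Real.sqrt_zero]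
  have hφd : ∀ x ∈ Ioo p u2, HasDerivAt φ (G x / φ x + H x) x := by
    intro x hx
    have h1 := hF.sqrt_deriv (hmap x hx) (hFpos _ (hmap x hx))
    have h2 : HasDerivAt (fun x : ℝ => u2 - x) (-1) x := by
      simpa using (hasDerivAt_id x).const_sub u2
    have h3 := h1.comp x h2
    refine h3.congr_deriv ?_
    simp only [sub_sub_cancel]
    have := hφpos x hx
    simp only [hφdef] at this ⊢
    field_simp
    ring
  have hmapc : ContinuousOn (fun s : ℝ => u2 - s) (Icc 0 T) := by fun_prop
  have hmapm : MapsTo (fun s : ℝ => u2 - s) (Icc 0 T) (Icc p u2) := fun s hs =>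
    ⟨by have := hs.2; simp only; linarith, by have := hs.1; simp only; linarith⟩
  have hRc : ContinuousOn (fun s => -2 * H (u2 - s)) (Icc 0 T) :=
    continuousOn_const.mul (hH.comp hmapc hmapm)
  have hPc : ContinuousOn (fun s => -2 * G (u2 - s)) (Icc 0 T) :=
    continuousOn_const.mul (hG.comp hmapc hmapm)
  -- lower bound near p
  have hlow : ∃ x1 ∈ Ioo p u2, ∀ x ∈ Ioo p x1, Real.sqrt (G p) * Real.sqrt (x - p) ≤ φ x := by
    have hTm : T ∈ Icc 0 T := ⟨hT0.le, le_rfl⟩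
    have hc : ContinuousWithinAt (fun s => -2 * G (u2 - s) + -2 * H (u2 - s) * Real.sqrt (F s))
        (Icc 0 T) T := (hPc.add (hRc.mul hF.sqrt_cont)) T hTm
    have hval : -2 * G (u2 - T) + -2 * H (u2 - T) * Real.sqrt (F T) = -2 * G p := by
      rw [hFT, Real.sqrt_zero, mul_zero, add_zero, hT, sub_sub_cancel]
    have h1 : ∀ᶠ s in nhdsWithin T (Icc 0 T),
        -2 * G (u2 - s) + -2 * H (u2 - s) * Real.sqrt (F s) < - G p := by
      refine hc.eventually (gt_mem_nhds ?_)
      show -2 * G (u2 - T) + -2 * H (u2 - T) * Real.sqrt (F T) < - G p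
      rw [hval]; linarith
    have h2 : ∀ᶠ s in nhdsWithin T (Iio T),
        -2 * G (u2 - s) + -2 * H (u2 - s) * Real.sqrt (F s) < - G p := by
      refine h1.filter_mono ?_
      rw [← nhdsWithin_Ico_eq_nhdsLT hT0]
      exact nhdsWithin_mono _ Ico_subset_Icc_self
    obtain ⟨l, hl, hlsub⟩ := (mem_nhdsLT_iff_exists_Ioo_subset' hT0).1 h2
    have hl' : l < T := hl
    obtain ⟨s1, hs1, hs1T⟩ := exists_between (max_lt hl' hT0)
    have hs10 : 0 < s1 := (le_max_right _ _).trans_lt hs1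
    have hls1 : l < s1 := (le_max_left _ _).trans_lt hs1
    refine ⟨u2 - s1, ⟨by linarith, by linarith⟩, ?_⟩
    intro x hx
    have hsx : u2 - x ∈ Ioo s1 T := ⟨by linarith [hx.2], by linarith [hx.1]⟩
    obtain ⟨y, hy, hye⟩ := exists_hasDerivAt_eq_slope F
      (fun s => -2 * G (u2 - s) + -2 * H (u2 - s) * Real.sqrt (F s)) hsx.2
      (hF.1.mono (Icc_subset_Icc_left (hs10.trans hsx.1).le))
      (fun s hs => hF.2.2 s ⟨(hs10.trans hsx.1).trans hs.1, hs.2⟩)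
    have h3 : -2 * G (u2 - y) + -2 * H (u2 - y) * Real.sqrt (F y) < - G p :=
      hlsub ⟨hls1.trans (hsx.1.trans hy.1), hy.2⟩
    rw [hye, hFT, zero_sub, div_lt_iff₀ (by linarith [hsx.2])] at h3
    rw [← Real.sqrt_mul hGp.le]
    refine Real.sqrt_le_sqrt ?_
    have : T - (u2 - x) = x - p := by rw [hT]; ring
    rw [this] at h3
    linarith
  obtain ⟨x1, hx1, hlow⟩ := hlow
  -- upper bound near u2
  obtain ⟨M0, hM0⟩ := isCompact_Icc.exists_bound_of_continuousOn hRc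
  set M := max M0 1 with hM
  have hMpos : 0 < M := lt_of_lt_of_le one_pos (le_max_right _ _)
  set r' := min r (min (s0 / 2) (T / 2)) with hr'
  have hs0 := hS.s0pos
  have hr'0 : 0 < r' := lt_min hr (lt_min (by linarith) (by linarith))
  have hr's : r' < s0 := by
    have : r' ≤ s0 / 2 := (min_le_right _ _).trans (min_le_left _ _)
    linarith
  have hr'T : r' < T := by
    have : r' ≤ T / 2 := (min_le_right _ _).trans (min_le_right _ _)
    linarith
  have hlin := hF.linear_bound hS hg hMpos hr's
    (fun s hs => hPg s ⟨hs.1, hs.2.trans (min_le_left _ _)⟩)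
    (fun s hs => ((le_abs_self _).trans (hM0 s ⟨hs.1.le, hs.2.trans hr'T.le⟩)).trans (le_max_left _ _))
  obtain ⟨U, hU, hU0, hUinf⟩ := scalar_flow (p := p) (q := u2) (φ := φ) (m := Real.sqrt (G p))
    (D := g + M + 1) hp (hφc.mono Ioo_subset_Icc_self) hφpos (Real.sqrt_pos.2 hGp) (by positivity)
    hx1 hlow (x2 := u2 - r') ⟨by linarith, by linarith⟩
    (fun x hx => (hlin (u2 - x) ⟨by linarith [hx.2], by linarith [hx.1]⟩).le)
  -- the orbit
  set u : ℝ → ℝ := fun z => if 0 < z then U z else p with hu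
  set w : ℝ → ℝ := fun z => if 0 < z then φ (U z) else 0 with hw
  have hueq : ∀ z, 0 < z → u z = U z := fun z hz => by simp only [hu]; rw [if_pos hz]
  have hweq : ∀ z, 0 < z → w z = φ (U z) := fun z hz => by simp only [hw]; rw [if_pos hz]
  have hu00 : u 0 = p := by simp [hu]
  have hw00 : w 0 = 0 := by simp [hw]
  have huev : ∀ z, 0 < z → u =ᶠ[nhds z] U := fun z hz => by
    filter_upwards [lt_mem_nhds hz] with y hy using hueq y hy
  have hwev : ∀ z, 0 < z → w =ᶠ[nhds z] (fun z => φ (U z)) := fun z hz => by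
    filter_upwards [lt_mem_nhds hz] with y hy using hweq y hy
  have hud : ∀ z, 0 < z → HasDerivAt u (w z) z := fun z hz => by
    rw [hweq z hz]
    exact (hU z hz).2.congr_of_eventuallyEq (huev z hz)
  have hwd : ∀ z, 0 < z → HasDerivAt w (G (u z) + H (u z) * w z) z := fun z hz => by
    rw [hweq z hz, hueq z hz]
    have h1 := (hφd _ (hU z hz).1).comp z (hU z hz).2
    refine (h1.congr_deriv ?_).congr_of_eventuallyEq (hwev z hz)
    have := hφpos _ (hU z hz).1
    field_simp
  have hu_lim : Tendsto u (nhdsWithin 0 (Ioi 0)) (nhds p) :=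
    hU0.congr' (by filter_upwards [self_mem_nhdsWithin] with z hz using (hueq z hz).symm)
  have hUin : ∀ᶠ z in nhdsWithin (0:ℝ) (Ioi 0), U z ∈ Icc p u2 := by
    filter_upwards [self_mem_nhdsWithin] with z hz using Ioo_subset_Icc_self (hU z hz).1
  have hUw : Tendsto U (nhdsWithin 0 (Ioi 0)) (nhdsWithin p (Icc p u2)) :=
    tendsto_nhdsWithin_iff.2 ⟨hU0, hUin⟩
  have hpm : p ∈ Icc p u2 := ⟨le_rfl, hp.le⟩
  have hu2m : u2 ∈ Icc p u2 := ⟨hp.le, le_rfl⟩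
  have hw_lim : Tendsto w (nhdsWithin 0 (Ioi 0)) (nhds 0) := by
    have h1 := (hφc p hpm).tendsto.comp hUw
    rw [hφp] at h1
    exact h1.congr' (by filter_upwards [self_mem_nhdsWithin] with z hz using (hweq z hz).symm)
  have hGH_lim : Tendsto (fun z => G (u z) + H (u z) * w z) (nhdsWithin 0 (Ioi 0)) (nhds (G p)) := by
    have h1 := (hG p hpm).tendsto.comp hUw
    have h2 := (hH p hpm).tendsto.comp hUw
    have h3 := h1.add (h2.mul hw_lim)
    rw [mul_zero, add_zero] at h3
    refine h3.congr' ?_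
    filter_upwards [self_mem_nhdsWithin] with z hz
    simp only [Function.comp, hueq z hz]
  refine ⟨u, w, hu00, hw00, fun z hz => ⟨hud z hz, hwd z hz⟩, ?_, ?_, ?_, ?_, ?_⟩
  · refine hasDerivWithinAt_Ici_of_tendsto_deriv (s := Ioi 0)
      (fun z hz => (hud z hz).differentiableAt.differentiableWithinAt) ?_ self_mem_nhdsWithin ?_
    · rw [ContinuousWithinAt, hu00]; exact hu_lim
    · refine hw_lim.congr' ?_
      filter_upwards [self_mem_nhdsWithin] with z hz using (hud z hz).deriv.symm
  · refine hasDerivWithinAt_Ici_of_tendsto_deriv (s := Ioi 0)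
      (fun z hz => (hwd z hz).differentiableAt.differentiableWithinAt) ?_ self_mem_nhdsWithin ?_
    · rw [ContinuousWithinAt, hw00]; exact hw_lim
    · refine hGH_lim.congr' ?_
      filter_upwards [self_mem_nhdsWithin] with z hz using (hwd z hz).deriv.symm
  · exact hUinf.congr' (by filter_upwards [eventually_gt_atTop 0] with z hz using (hueq z hz).symm)
  · have h1 : Tendsto U atTop (nhdsWithin u2 (Icc p u2)) := tendsto_nhdsWithin_iff.2 ⟨hUinf, by
      filter_upwards [eventually_gt_atTop 0] with z hz using Ioo_subset_Icc_self (hU z hz).1⟩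
    have h2 := (hφc u2 hu2m).tendsto.comp h1
    rw [hφu] at h2
    exact h2.congr' (by filter_upwards [eventually_gt_atTop 0] with z hz using (hweq z hz).symm)
  · intro z hz
    rcases eq_or_lt_of_le hz with rfl | hz
    · rw [hu00]
    · rw [hueq z hz]; exact (hU z hz).1.1.le

/-- Gluing two half orbits. -/
lemma glue_orbit {G H E F : ℝ → ℝ} {u2 p s0 g r : ℝ} (hp : p < u2)
    (hG : ContinuousOn G (Icc p u2)) (hH : ContinuousOn H (Icc p u2))
    (hS : Setup (fun s => -2 * G (u2 - s)) s0 (u2 - p))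
    (hE : Sol (fun s => -2 * G (u2 - s)) (fun s => 2 * H (u2 - s)) (u2 - p) E)
    (hEpos : ∀ s ∈ Ioo 0 (u2 - p), 0 < E s) (hET : E (u2 - p) = 0)
    (hF : Sol (fun s => -2 * G (u2 - s)) (fun s => -(2 * H (u2 - s))) (u2 - p) F)
    (hFpos : ∀ s ∈ Ioo 0 (u2 - p), 0 < F s) (hFT : F (u2 - p) = 0) (hGp : 0 < G p)
    (hg : 0 < g) (hr : 0 < r) (hPg : ∀ s ∈ Ioc 0 r, -2 * G (u2 - s) ≤ g * s) :
    ∃ u w : ℝ → ℝ, (∀ z, HasDerivAt u (w z) z) ∧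
      (∀ z, HasDerivAt w (G (u z) + H (u z) * w z) z) ∧
      Tendsto u atBot (nhds u2) ∧ Tendsto u atTop (nhds u2) ∧
      Tendsto w atBot (nhds 0) ∧ Tendsto w atTop (nhds 0) ∧ u 0 = p ∧ ∀ z, p ≤ u z := by
  obtain ⟨a, b, a0, b0, hab, ad, bd, alim, blim, ap⟩ := half_orbit (H := H) hp hG hH hS
    (by simpa only [neg_mul] using hF) hFpos hFT hGp hg hr hPg
  obtain ⟨a', b', a0', b0', hab', ad', bd', alim', blim', ap'⟩ := half_orbit (H := fun x => - H x)
    hp hG hH.neg hS (by simpa only [neg_mul, mul_neg, neg_neg] using hE) hEpos hET hGp hg hr hPg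
  set u : ℝ → ℝ := fun z => if 0 ≤ z then a z else a' (-z) with hu
  set w : ℝ → ℝ := fun z => if 0 ≤ z then b z else - b' (-z) with hw
  have up : ∀ z, 0 ≤ z → u z = a z := fun z hz => by simp only [hu]; rw [if_pos hz]
  have wp : ∀ z, 0 ≤ z → w z = b z := fun z hz => by simp only [hw]; rw [if_pos hz]
  have un : ∀ z, z ≤ 0 → u z = a' (-z) := fun z hz => by
    rcases eq_or_lt_of_le hz with rfl | hz
    · rw [up 0 le_rfl, a0, neg_zero, a0']
    · simp only [hu]; rw [if_neg (not_le.2 hz)]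
  have wn : ∀ z, z ≤ 0 → w z = - b' (-z) := fun z hz => by
    rcases eq_or_lt_of_le hz with rfl | hz
    · rw [wp 0 le_rfl, b0, neg_zero, b0', neg_zero]
    · simp only [hw]; rw [if_neg (not_le.2 hz)]
  have u0 : u 0 = p := by rw [up 0 le_rfl, a0]
  have w0 : w 0 = 0 := by rw [wp 0 le_rfl, b0]
  have hneg : ∀ z : ℝ, HasDerivAt (fun z : ℝ => -z) (-1) z := fun z => hasDerivAt_neg z
  have hnegw : HasDerivWithinAt (fun z : ℝ => -z) (-1) (Iic 0) 0 := (hneg 0).hasDerivWithinAt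
  have hmaps : MapsTo (fun z : ℝ => -z) (Iic 0) (Ici 0) := fun z hz => by
    have : z ≤ 0 := hz
    show 0 ≤ -z
    linarith
  have huniv : (Ici (0:ℝ)) ∪ Iic 0 = univ := Ici_union_Iic
  refine ⟨u, w, ?_, ?_, ?_, ?_, ?_, ?_, u0, ?_⟩
  · intro z
    rcases lt_trichotomy z 0 with hz | rfl | hz
    · have h1 := (hab' (-z) (by linarith)).1.comp z (hneg z)
      refine (h1.congr_deriv ?_).congr_of_eventuallyEq ?_
      · rw [wn z hz.le]; ring
      · filter_upwards [gt_mem_nhds hz] with y hy using un y (le_of_lt hy)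
    · rw [w0, ← hasDerivWithinAt_univ, ← huniv]
      refine HasDerivWithinAt.union ?_ ?_
      · exact ad.congr (fun z hz => up z hz) (up 0 le_rfl)
      · have ad'' : HasDerivWithinAt a' 0 (Ici 0) (-(0:ℝ)) := by rw [neg_zero]; exact ad'
        have := HasDerivWithinAt.comp (0:ℝ) ad'' hnegw hmaps
        rw [zero_mul] at this
        exact this.congr (fun z hz => un z hz) (un 0 le_rfl)
    · rw [wp z hz.le]
      refine (hab z hz).1.congr_of_eventuallyEq ?_
      filter_upwards [lt_mem_nhds hz] with y hy using up y (le_of_lt hy)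
  · intro z
    rcases lt_trichotomy z 0 with hz | rfl | hz
    · have h1 := ((hab' (-z) (by linarith)).2.comp z (hneg z)).neg
      refine (h1.congr_deriv ?_).congr_of_eventuallyEq ?_
      · rw [wn z hz.le, un z hz.le]; ring
      · filter_upwards [gt_mem_nhds hz] with y hy using wn y (le_of_lt hy)
    · rw [w0, u0, mul_zero, add_zero, ← hasDerivWithinAt_univ, ← huniv]
      refine HasDerivWithinAt.union ?_ ?_
      · exact bd.congr (fun z hz => wp z hz) (wp 0 le_rfl)
      · have bd'' : HasDerivWithinAt b' (G p) (Ici 0) (-(0:ℝ)) := by rw [neg_zero]; exact bd'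
        have := (HasDerivWithinAt.comp (0:ℝ) bd'' hnegw hmaps).neg
        have := this.congr_deriv (by ring : -(G p * -1) = G p)
        exact this.congr (fun z hz => wn z hz) (wn 0 le_rfl)
    · rw [wp z hz.le, up z hz.le]
      refine (hab z hz).2.congr_of_eventuallyEq ?_
      filter_upwards [lt_mem_nhds hz] with y hy using wp y (le_of_lt hy)
  · refine (alim'.comp tendsto_neg_atBot_atTop).congr' ?_
    filter_upwards [eventually_le_atBot 0] with z hz using (un z hz).symm
  · refine alim.congr' ?_
    filter_upwards [eventually_ge_atTop 0] with z hz using (up z hz).symm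
  · have h1 := (blim'.comp tendsto_neg_atBot_atTop).neg
    rw [neg_zero] at h1
    refine h1.congr' ?_
    filter_upwards [eventually_le_atBot 0] with z hz using (wn z hz).symm
  · refine blim.congr' ?_
    filter_upwards [eventually_ge_atTop 0] with z hz using (wp z hz).symm
  · intro z
    rcases le_total 0 z with hz | hz
    · rw [up z hz]; exact ap z hz
    · rw [un z hz]; exact ap' (-z) (by linarith)

/-! ### From orbits to scalar solutions -/

lemma cont_inv {u : ℝ → ℝ} {p q : ℝ} (hc : ContinuousOn u (Icc p q)) (hi : InjOn u (Icc p q)) :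
    ∃ U : ℝ → ℝ, ContinuousOn U (u '' Icc p q) ∧ ∀ x ∈ Icc p q, U (u x) = x := by
  have hl := hi.leftInvOn_invFunOn
  refine ⟨Function.invFunOn u (Icc p q), ?_, fun x hx => hl hx⟩
  rw [continuousOn_iff_isClosed]
  intro t ht
  refine ⟨u '' (Icc p q ∩ t), ?_, ?_⟩
  · exact ((isCompact_Icc.inter_right ht).image_of_continuousOn
      (hc.mono inter_subset_left)).isClosed
  · ext y
    constructor
    · rintro ⟨h1, ⟨x, hx, rfl⟩⟩
      rw [mem_preimage, hl hx] at h1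
      exact ⟨⟨x, ⟨hx, h1⟩, rfl⟩, ⟨x, hx, rfl⟩⟩
    · rintro ⟨⟨x, ⟨hx, hxt⟩, rfl⟩, h2⟩
      refine ⟨?_, h2⟩
      rw [mem_preimage, hl hx]; exact hxt

/-- If `w z = 0` and `w' z > 0`, then `w > 0` and `u` grows to the right of `z`. -/
lemma incr_right {u w : ℝ → ℝ} {z d : ℝ} (hu : ∀ y, HasDerivAt u (w y) y)
    (hw : HasDerivAt w d z) (h0 : w z = 0) (hd : 0 < d) :
    ∃ ε > 0, ∀ y ∈ Ioo z (z + ε), 0 < w y ∧ u z < u y := by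
  have h1 := hasDerivAt_iff_tendsto_slope.1 hw
  have h2 : ∀ᶠ y in nhdsWithin z {z}ᶜ, 0 < slope w z y := h1.eventually (lt_mem_nhds hd)
  have h3 : ∀ᶠ y in nhdsWithin z (Ioi z), 0 < slope w z y :=
    h2.filter_mono (nhdsWithin_mono _ (fun y hy => ne_of_gt hy))
  obtain ⟨b, hb, hsub⟩ := (mem_nhdsGT_iff_exists_Ioo_subset' (lt_add_one z)).1 h3
  have hb' : z < b := hb
  have hpos : ∀ y ∈ Ioo z b, 0 < w y := by
    intro y hy
    have h4 : 0 < slope w z y := hsub hy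
    rw [slope_def_field, h0, sub_zero] at h4
    have : 0 < y - z := by linarith [hy.1]
    exact (div_pos_iff_of_pos_right this).1 h4
  refine ⟨b - z, by linarith, fun y hy => ?_⟩
  rw [add_sub_cancel] at hy
  refine ⟨hpos y hy, ?_⟩
  obtain ⟨ξ, hξ, he⟩ := exists_hasDerivAt_eq_slope u w hy.1
    (fun x _ => (hu x).continuousAt.continuousWithinAt) (fun x _ => hu x)
  have h5 := hpos ξ ⟨hξ.1, hξ.2.trans hy.2⟩
  rw [he] at h5
  have : 0 < y - z := by linarith [hy.1]
  have := (div_pos_iff_of_pos_right this).1 h5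
  linarith

lemma decr_right {u w : ℝ → ℝ} {z d : ℝ} (hu : ∀ y, HasDerivAt u (w y) y)
    (hw : HasDerivAt w d z) (h0 : w z = 0) (hd : d < 0) :
    ∃ ε > 0, ∀ y ∈ Ioo z (z + ε), w y < 0 ∧ u y < u z := by
  obtain ⟨ε, hε, h⟩ := incr_right (u := fun y => - u y) (w := fun y => - w y) (z := z) (d := -d)
    (fun y => (hu y).neg) hw.neg (by simp [h0]) (by linarith)
  exact ⟨ε, hε, fun y hy => ⟨by linarith [(h y hy).1], by linarith [(h y hy).2]⟩⟩

lemma monotone_of_wpos {u w : ℝ → ℝ} {p q : ℝ} (hu : ∀ y, HasDerivAt u (w y) y)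
    (h : ∀ y ∈ Ioo p q, 0 < w y) : StrictMonoOn u (Icc p q) := by
  apply strictMonoOn_of_deriv_pos (convex_Icc p q)
    (fun x _ => (hu x).continuousAt.continuousWithinAt)
  rw [interior_Icc]
  intro x hx
  rw [(hu x).deriv]; exact h x hx

lemma w_pos_after {G H u w : ℝ → ℝ} {z0 u2 : ℝ} (hu : ∀ z, HasDerivAt u (w z) z)
    (hw : ∀ z, HasDerivAt w (G (u z) + H (u z) * w z) z)
    (hmin : ∀ z, u z0 ≤ u z) (hw0 : w z0 = 0) (hG0 : 0 < G (u z0))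
    (hlt : ∀ z, u z < u2) (hlim : Tendsto u atTop (nhds u2))
    (hinj : ∀ x y, u x = u y → w x = w y → x = y)
    (hne : ∀ z, w z = 0 → G (u z) ≠ 0) : ∀ z, z0 < z → 0 < w z := by
  have huc : Continuous u := continuous_iff_continuousAt.2 fun z => (hu z).continuousAt
  have hwc : Continuous w := continuous_iff_continuousAt.2 fun z => (hw z).continuousAt
  have hd0 : ∀ z, w z = 0 → HasDerivAt w (G (u z)) z := fun z hz => by
    have := hw z
    rwa [hz, mul_zero, add_zero] at this
  by_contra hcon
  push Not at hcon
  obtain ⟨zb, hzb, hwb⟩ := hcon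
  obtain ⟨ε, hε, hr⟩ := incr_right hu (hd0 z0 hw0) hw0 hG0
  -- first zero
  let S := {z : ℝ | z0 + ε / 2 ≤ z ∧ w z ≤ 0}
  have hSc : IsClosed S := isClosed_Ici.inter (isClosed_le hwc continuous_const)
  have hzbε : z0 + ε ≤ zb := by
    by_contra hlt'
    push Not at hlt'
    linarith [(hr zb ⟨hzb, hlt'⟩).1]
  have hSne : S.Nonempty := ⟨zb, by linarith, hwb⟩
  have hSb : BddBelow S := ⟨z0 + ε / 2, fun z hz => hz.1⟩
  set z1 := sInf S with hz1
  have hz1S : z1 ∈ S := hSc.csInf_mem hSne hSb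
  have hz01 : z0 < z1 := by linarith [hz1S.1]
  have hpos : ∀ z ∈ Ioo z0 z1, 0 < w z := by
    intro z hz
    by_contra hle
    push Not at hle
    rcases lt_or_ge z (z0 + ε / 2) with h | h
    · linarith [(hr z ⟨hz.1, by linarith⟩).1]
    · exact absurd (csInf_le hSb (show z ∈ S from ⟨h, hle⟩)) (not_le.2 hz.2)
  have hw1 : w z1 = 0 := by
    refine le_antisymm hz1S.2 ?_
    have : Icc z0 z1 ⊆ {z | 0 ≤ w z} := by
      rw [← closure_Ioo hz01.ne]
      exact closure_minimal (fun z hz => (hpos z hz).le) (isClosed_le continuous_const hwc)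
    exact this (right_mem_Icc.2 hz01.le)
  have hmono := monotone_of_wpos hu hpos
  -- sign of G at the turning point
  have hG1 : G (u z1) < 0 := by
    refine lt_of_le_of_ne ?_ (hne z1 hw1)
    by_contra hp
    push Not at hp
    obtain ⟨y, hy, hy2⟩ := left_lt_of_deriv_pos (hd0 z1 hw1) hp hz01
    linarith [hpos y hy]
  obtain ⟨ε1, hε1, hr1⟩ := decr_right hu (hd0 z1 hw1) hw1 hG1
  set z3 := z1 + ε1 / 2 with hz3
  have hz3m : z3 ∈ Ioo z1 (z1 + ε1) := ⟨by linarith, by linarith⟩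
  -- first return
  let S2 := {z : ℝ | z3 ≤ z ∧ u z1 ≤ u z}
  have hS2c : IsClosed S2 := isClosed_Ici.inter (isClosed_le continuous_const huc)
  have hS2ne : S2.Nonempty := by
    have h1 := hlim.eventually (lt_mem_nhds (hlt z1))
    obtain ⟨z, hz1', hz2'⟩ := (h1.and (eventually_ge_atTop z3)).exists
    exact ⟨z, hz2', hz1'.le⟩
  have hS2b : BddBelow S2 := ⟨z3, fun z hz => hz.1⟩
  set z4 := sInf S2 with hz4
  have hz4S : z4 ∈ S2 := hS2c.csInf_mem hS2ne hS2b
  have hu3 := hr1 z3 hz3m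
  have hz34 : z3 < z4 := by
    refine lt_of_le_of_ne hz4S.1 ?_
    intro he
    have := hz4S.2
    rw [← he] at this
    linarith [hu3.2]
  have hbelow : ∀ z ∈ Ico z3 z4, u z < u z1 := by
    intro z hz
    by_contra hle
    push Not at hle
    exact absurd (csInf_le hS2b (show z ∈ S2 from ⟨hz.1, hle⟩)) (not_le.2 hz.2)
  have hu4 : u z4 = u z1 := by
    refine le_antisymm ?_ hz4S.2
    have : Icc z3 z4 ⊆ {z | u z ≤ u z1} := by
      rw [← closure_Ico hz34.ne]
      exact closure_minimal (fun z hz => (hbelow z hz).le) (isClosed_le huc continuous_const)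
    exact this (right_mem_Icc.2 hz34.le)
  have hw4 : 0 ≤ w z4 := by
    by_contra hn
    push Not at hn
    obtain ⟨y, hy, hy2⟩ := left_lt_of_deriv_pos (f := fun y => - u y) (hu z4).neg
      (by linarith : 0 < - w z4) hz34
    have := hbelow y ⟨hy.1.le, hy.2⟩
    linarith
  obtain ⟨U, hUc, hU⟩ := cont_inv (huc.continuousOn (s := Icc z0 z1)) hmono.injOn
  have himg : ∀ z ∈ Icc z3 z4, u z ∈ u '' Icc z0 z1 := by
    intro z hz
    apply intermediate_value_Icc hz01.le huc.continuousOn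
    refine ⟨hmin z, ?_⟩
    rcases eq_or_lt_of_le hz.2 with rfl | h
    · exact hu4.le
    · exact (hbelow z ⟨hz.1, h⟩).le
  have hwn : ∀ x ∈ Icc z0 z1, 0 ≤ w x := by
    intro x hx
    rcases eq_or_lt_of_le hx.1 with rfl | h1
    · exact hw0.ge
    rcases eq_or_lt_of_le hx.2 with rfl | h2
    · exact hw1.ge
    exact (hpos x ⟨h1, h2⟩).le
  have hqc : ContinuousOn (fun z => w z - w (U (u z))) (Icc z3 z4) :=
    hwc.continuousOn.sub (hwc.comp_continuousOn (hUc.comp huc.continuousOn himg))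
  have hUm : ∀ z ∈ Icc z3 z4, U (u z) ∈ Icc z0 z1 ∧ u (U (u z)) = u z := by
    intro z hz
    obtain ⟨x, hx, hxe⟩ := himg z hz
    rw [← hxe, hU x hx]; exact ⟨hx, rfl⟩
  have h3m : z3 ∈ Icc z3 z4 := left_mem_Icc.2 hz34.le
  have h4m : z4 ∈ Icc z3 z4 := right_mem_Icc.2 hz34.le
  have hz : (0:ℝ) ∈ Icc (w z3 - w (U (u z3))) (w z4 - w (U (u z4))) := by
    constructor
    · linarith [hwn _ (hUm z3 h3m).1, hu3.1]
    · rw [hu4, hU z1 (right_mem_Icc.2 hz01.le), hw1]; linarith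
  obtain ⟨zs, hzs, hzse⟩ := intermediate_value_Icc hz34.le hqc hz
  have hzse' : w zs - w (U (u zs)) = 0 := hzse
  have h1 := hUm zs hzs
  have h2 := hinj zs (U (u zs)) h1.2.symm (by linarith)
  have h3 := h1.1.2
  rw [← h2] at h3
  linarith [hzs.1, hz3m.1]

/-- Orbits in the upper half plane give scalar solutions. -/
lemma upper_sol {G H u w : ℝ → ℝ} {a u2 : ℝ} {I : Set ℝ} {l : Filter ℝ} [l.NeBot]
    (hIo : IsOpen I) (hIc : Convex ℝ I) (hIup : ∀ x ∈ I, ∀ y, x ≤ y → y ∈ I)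
    (hIne : I.Nonempty)
    (hu : ∀ z, HasDerivAt u (w z) z)
    (hw : ∀ z, HasDerivAt w (G (u z) + H (u z) * w z) z) (hpos : ∀ z ∈ I, 0 < w z)
    (hl1 : ∀ x ∈ I, ∀ᶠ y in l, y ∈ I ∧ y < x)
    (hl2 : ∀ S ∈ l, ∃ x ∈ I, ∀ z ∈ I, z < x → z ∈ S)
    (hua : Tendsto u l (nhds a)) (hwa : Tendsto w l (nhds 0))
    (hu2 : Tendsto u atTop (nhds u2)) (hw2 : Tendsto w atTop (nhds 0)) :
    ∃ F, Sol (fun s => -2 * G (u2 - s)) (fun s => -(2 * H (u2 - s))) (u2 - a) F ∧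
      (∀ s ∈ Ioo 0 (u2 - a), 0 < F s) ∧ F (u2 - a) = 0 := by
  have huc : Continuous u := continuous_iff_continuousAt.2 fun z => (hu z).continuousAt
  have hmono : StrictMonoOn u I := strictMonoOn_of_hasDerivAt hIc (fun x _ => hu x) hpos
  have hlt2 : ∀ x ∈ I, u x < u2 := by
    intro x hx
    have hx1 := hIup x hx (x + 1) (by linarith)
    refine (hmono hx hx1 (lt_add_one x)).trans_le ?_
    refine ge_of_tendsto hu2 ?_
    filter_upwards [eventually_ge_atTop (x + 1)] with y hy
    exact hmono.monotoneOn hx1 (hIup _ hx1 y hy) hy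
  have hgta : ∀ x ∈ I, a < u x := by
    intro x hx
    obtain ⟨y, hy, hyx⟩ := (hl1 x hx).exists
    refine lt_of_le_of_lt ?_ (hmono hy hx hyx)
    refine le_of_tendsto hua ?_
    filter_upwards [hl1 y hy] with t ht
    exact (hmono ht.1 hy ht.2).le
  obtain ⟨x0, hx0⟩ := hIne
  have ha2 : a < u2 := (hgta x0 hx0).trans (hlt2 x0 hx0)
  have himg : u '' I = Ioo a u2 := by
    apply Subset.antisymm
    · rintro _ ⟨x, hx, rfl⟩
      exact ⟨hgta x hx, hlt2 x hx⟩
    · intro y hy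
      obtain ⟨x1, h1, hx1, hlt1⟩ :=
        ((hua.eventually (gt_mem_nhds hy.1)).and (hl1 x0 hx0)).exists
      obtain ⟨x2, h2, hx2⟩ :=
        ((hu2.eventually (lt_mem_nhds hy.2)).and (eventually_ge_atTop x0)).exists
      have h12 : x1 ≤ x2 := by linarith
      obtain ⟨x, hx, hxe⟩ := intermediate_value_Icc h12 huc.continuousOn
        (show y ∈ Icc (u x1) (u x2) from ⟨h1.le, h2.le⟩)
      exact ⟨x, hIup x1 hx1 x hx.1, hxe⟩
  obtain ⟨U, hU, hUu, hUm, -⟩ := inverse_fun hIo hIc (fun x _ => hu x) hpos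
  rw [himg] at hU hUm
  classical
  set F : ℝ → ℝ := fun s => if s ∈ Ioo 0 (u2 - a) then (w (U (u2 - s))) ^ 2 else 0 with hF
  have hFin : ∀ s ∈ Ioo 0 (u2 - a), F s = (w (U (u2 - s))) ^ 2 := fun s hs => by
    simp only [hF]; rw [if_pos hs]
  have hmem : ∀ s ∈ Ioo 0 (u2 - a), u2 - s ∈ Ioo a u2 := fun s hs =>
    ⟨by linarith [hs.2], by linarith [hs.1]⟩
  have hF0 : F 0 = 0 := by simp [hF]
  have hFT : F (u2 - a) = 0 := by simp [hF]
  have hderiv : ∀ s ∈ Ioo 0 (u2 - a),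
      HasDerivAt F (-2 * G (u2 - s) + -(2 * H (u2 - s)) * Real.sqrt (F s)) s := by
    intro s hs
    obtain ⟨h1, h2, h3⟩ := hU _ (hmem s hs)
    have hwp := hpos _ h1
    have hsub : HasDerivAt (fun s => u2 - s) (-1) s := by
      simpa using (hasDerivAt_id s).const_sub u2
    have h4 := ((hw (U (u2 - s))).comp s (h3.comp s hsub)).pow 2
    have h5 : HasDerivAt F _ s := h4.congr_of_eventuallyEq (by
      filter_upwards [isOpen_Ioo.mem_nhds hs] with t ht
      rw [hFin t ht]; rfl)
    convert h5 using 1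
    rw [hFin s hs, Real.sqrt_sq hwp.le, h2]
    simp only [Function.comp_def]
    field_simp
    ring
  have hsmall : ∀ ε > (0:ℝ), ∃ δ > (0:ℝ), ∀ x : ℝ, |x| < δ → x ^ 2 < ε := by
    intro ε hε
    refine ⟨min 1 ε, by positivity, fun x hx => ?_⟩
    have h1 := hx.trans_le (min_le_left _ _)
    have h2 := hx.trans_le (min_le_right _ _)
    rw [← sq_abs]
    nlinarith [abs_nonneg x]
  have hFnn : ∀ s, 0 ≤ F s := fun s => by
    simp only [hF]; split_ifs <;> positivity
  refine ⟨F, ⟨?_, hF0, hderiv⟩, fun s hs => ?_, hFT⟩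
  · intro s hs
    rcases eq_or_lt_of_le hs.1 with rfl | hs1
    · apply ContinuousAt.continuousWithinAt
      rw [Metric.continuousAt_iff']
      intro ε hε
      obtain ⟨δ, hδ, hsm⟩ := hsmall ε hε
      have h1 : ∀ᶠ z in atTop, |w z| < δ := by
        have := hw2.abs
        rw [abs_zero] at this
        exact this.eventually (gt_mem_nhds hδ)
      obtain ⟨N, hN⟩ := eventually_atTop.1 h1
      set N' := max N x0 with hN'
      have hN'I : N' ∈ I := hIup x0 hx0 _ (le_max_right _ _)
      have hev : ∀ᶠ s in nhds (0:ℝ), u N' < u2 - s := by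
        have : Tendsto (fun s : ℝ => u2 - s) (nhds 0) (nhds (u2 - 0)) :=
          (continuous_const.sub continuous_id).tendsto 0
        rw [sub_zero] at this
        exact this.eventually (lt_mem_nhds (hlt2 _ hN'I))
      filter_upwards [hev] with s hs
      rw [hF0, Real.dist_eq, sub_zero, abs_of_nonneg (hFnn s)]
      by_cases hm : s ∈ Ioo 0 (u2 - a)
      · rw [hFin s hm]
        apply hsm
        apply hN
        refine (le_max_left N x0).trans ?_
        have := hUm ⟨hgta _ hN'I, hlt2 _ hN'I⟩ (hmem s hm) hs
        rw [hUu _ hN'I] at this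
        exact this.le
      · simp only [hF]; rw [if_neg hm]; exact hε
    rcases eq_or_lt_of_le hs.2 with rfl | hs2
    · apply ContinuousAt.continuousWithinAt
      rw [Metric.continuousAt_iff']
      intro ε hε
      obtain ⟨δ, hδ, hsm⟩ := hsmall ε hε
      have h1 : ∀ᶠ z in l, |w z| < δ := by
        have := hwa.abs
        rw [abs_zero] at this
        exact this.eventually (gt_mem_nhds hδ)
      obtain ⟨x, hx, hxz⟩ := hl2 _ h1
      have hev : ∀ᶠ s in nhds (u2 - a), u2 - s < u x := by
        have : Tendsto (fun s : ℝ => u2 - s) (nhds (u2 - a)) (nhds (u2 - (u2 - a))) :=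
          (continuous_const.sub continuous_id).tendsto _
        rw [sub_sub_cancel] at this
        exact this.eventually (gt_mem_nhds (hgta _ hx))
      filter_upwards [hev] with s hs
      rw [hFT, Real.dist_eq, sub_zero, abs_of_nonneg (hFnn s)]
      by_cases hm : s ∈ Ioo 0 (u2 - a)
      · rw [hFin s hm]
        apply hsm
        apply hxz _ (hU _ (hmem s hm)).1
        have := hUm (hmem s hm) ⟨hgta _ hx, hlt2 _ hx⟩ hs
        rwa [hUu _ hx] at this
      · simp only [hF]; rw [if_neg hm]; exact hε
    exact (hderiv s ⟨hs1, hs2⟩).continuousAt.continuousWithinAt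
  · rw [hFin s hs]
    have := hpos _ (hU _ (hmem s hs)).1
    positivity

lemma attain_min {φ : ℝ → ℝ} {c x0 : ℝ} (hc : Continuous φ) (hb : Tendsto φ atBot (nhds c))
    (ht : Tendsto φ atTop (nhds c)) (hx : φ x0 < c) : ∃ z, φ z < c ∧ ∀ y, φ z ≤ φ y := by
  have h : ∀ᶠ x in cocompact ℝ, φ x0 ≤ φ x := by
    rw [cocompact_eq_atBot_atTop, eventually_sup]
    exact ⟨(hb.eventually (lt_mem_nhds hx)).mono fun _ h => h.le,
      (ht.eventually (lt_mem_nhds hx)).mono fun _ h => h.le⟩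
  obtain ⟨z, hz⟩ := hc.exists_forall_le' x0 h
  exact ⟨z, (hz x0).trans_lt hx, hz⟩

lemma bdd_below {φ : ℝ → ℝ} {c : ℝ} (hc : Continuous φ) (hb : Tendsto φ atBot (nhds c))
    (ht : Tendsto φ atTop (nhds c)) : (∀ y, c ≤ φ y) ∨ ∃ z, ∀ y, φ z ≤ φ y := by
  by_cases h : ∀ y, c ≤ φ y
  · exact Or.inl h
  · push Not at h
    obtain ⟨x0, hx⟩ := h
    obtain ⟨z, -, hz⟩ := attain_min hc hb ht hx
    exact Or.inr ⟨z, hz⟩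

lemma sol_unique {G H : ℝ → ℝ} (hG : ContDiffOn ℝ 1 G (Ioi 0)) (hH : ContDiffOn ℝ 1 H (Ioi 0))
    {α β M : ℝ} (hα : 0 < α) {u w x y : ℝ → ℝ}
    (hu : ∀ z, HasDerivAt u (w z) z) (hw : ∀ z, HasDerivAt w (G (u z) + H (u z) * w z) z)
    (hx : ∀ z, HasDerivAt x (y z) z) (hy : ∀ z, HasDerivAt y (G (x z) + H (x z) * y z) z)
    (hub : ∀ z, u z ∈ Icc α β) (hwb : ∀ z, w z ∈ Icc (-M) M)
    (hxb : ∀ z, x z ∈ Icc α β) (hyb : ∀ z, y z ∈ Icc (-M) M)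
    {t : ℝ} (h1 : u t = x t) (h2 : w t = y t) : ∀ z, u z = x z ∧ w z = y z := by
  set v : ℝ × ℝ → ℝ × ℝ := fun p => (p.2, G p.1 + H p.1 * p.2) with hv
  have hmaps : MapsTo (Prod.fst : ℝ × ℝ → ℝ) (Icc α β ×ˢ Icc (-M) M) (Ioi 0) :=
    fun p hp => hα.trans_le hp.1.1
  have hvc : ContDiffOn ℝ 1 v (Icc α β ×ˢ Icc (-M) M) := by
    apply ContDiffOn.prodMk contDiff_snd.contDiffOn
    exact (hG.comp contDiff_fst.contDiffOn hmaps).add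
      ((hH.comp contDiff_fst.contDiffOn hmaps).mul contDiff_snd.contDiffOn)
  obtain ⟨C, hC⟩ := hvc.exists_lipschitzOnWith one_ne_zero
    ((convex_Icc α β).prod (convex_Icc (-M) M)) (isCompact_Icc.prod isCompact_Icc)
  have := ODE_solution_unique_univ (v := fun _ => v) (s := fun _ => Icc α β ×ˢ Icc (-M) M)
    (f := fun z => (u z, w z)) (g := fun z => (x z, y z)) (t₀ := t) (K := C)
    (fun _ => hC) (fun z => ⟨(hu z).prodMk (hw z), hub z, hwb z⟩)
    (fun z => ⟨(hx z).prodMk (hy z), hxb z, hyb z⟩) (by simp only [h1, h2])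
  intro z
  have hz := congrFun this z
  exact ⟨congrArg Prod.fst hz, congrArg Prod.snd hz⟩

lemma refl_u {u w : ℝ → ℝ} (hu : ∀ z, HasDerivAt u (w z) z) :
    ∀ z, HasDerivAt (fun z => u (-z)) (-w (-z)) z := fun z => by
  have := (hu (-z)).comp z (hasDerivAt_neg z)
  rw [mul_neg, mul_one] at this
  exact this

lemma refl_w {G H u w : ℝ → ℝ} (hw : ∀ z, HasDerivAt w (G (u z) + H (u z) * w z) z) :
    ∀ z, HasDerivAt (fun z => -w (-z)) (G (u (-z)) + (-H (u (-z))) * (-w (-z))) z := fun z => by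
  have := ((hw (-z)).comp z (hasDerivAt_neg z)).neg
  rw [mul_neg, mul_one, neg_neg] at this
  rw [neg_mul_neg]
  exact this

/-- A homoclinic orbit gives a closed pair of scalar solutions. -/
lemma homoclinic_closed {G H u w : ℝ → ℝ} {u2 : ℝ} (hG : ContDiffOn ℝ 1 G (Ioi 0))
    (hH : ContDiffOn ℝ 1 H (Ioi 0)) (hu20 : 0 < u2) (hGu2 : G u2 = 0)
    (hGbig : ∀ x, u2 < x → 0 < G x)
    (hu : ∀ z, HasDerivAt u (w z) z) (hw : ∀ z, HasDerivAt w (G (u z) + H (u z) * w z) z)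
    (hup : ∀ z, 0 < u z) (hub : Tendsto u atBot (nhds u2)) (hut : Tendsto u atTop (nhds u2))
    (hwb : Tendsto w atBot (nhds 0)) (hwt : Tendsto w atTop (nhds 0))
    (hnc : ¬ ∀ z, u z = u2 ∧ w z = 0) :
    ∃ a, 0 < a ∧ a < u2 ∧ 0 < G a ∧
      Closed (fun s => -2 * G (u2 - s)) (fun s => 2 * H (u2 - s)) (u2 - a) := by
  have huc : Continuous u := continuous_iff_continuousAt.2 fun z => (hu z).continuousAt
  have hwc : Continuous w := continuous_iff_continuousAt.2 fun z => (hw z).continuousAt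
  have hd0 : ∀ z, w z = 0 → HasDerivAt w (G (u z)) z := fun z hz => by
    have := hw z
    rwa [hz, mul_zero, add_zero] at this
  -- u ≤ u2
  have hle : ∀ z, u z ≤ u2 := by
    by_contra hcon
    push Not at hcon
    obtain ⟨x, hx⟩ := hcon
    obtain ⟨z, hz, hzm⟩ := attain_min (φ := fun z => - u z) huc.neg hub.neg hut.neg
      (neg_lt_neg hx)
    have hloc : IsLocalMax u z := Eventually.of_forall fun y => by
      have := hzm y; linarith
    have hwz := hloc.hasDerivAt_eq_zero (hu z)
    obtain ⟨ε, hε, hr⟩ := incr_right hu (hd0 z hwz) hwz (hGbig _ (by linarith))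
    have h1 := (hr (z + ε / 2) ⟨by linarith, by linarith⟩).2
    have h2 := hzm (z + ε / 2)
    linarith
  -- some point below
  have hex : ∃ x, u x < u2 := by
    by_contra hcon
    push Not at hcon
    have he : ∀ z, u z = u2 := fun z => le_antisymm (hle z) (hcon z)
    apply hnc
    intro z
    refine ⟨he z, ?_⟩
    have h1 : HasDerivAt u 0 z := by
      have : u = fun _ => u2 := funext he
      rw [this]; exact hasDerivAt_const z u2
    exact (hu z).unique h1
  obtain ⟨x, hx⟩ := hex
  obtain ⟨z0, hz0, hmin⟩ := attain_min huc hub hut hx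
  have hw0 : w z0 = 0 := by
    have hloc : IsLocalMin u z0 := Eventually.of_forall hmin
    exact hloc.hasDerivAt_eq_zero (hu z0)
  -- bounds
  obtain ⟨M, hM0, hM⟩ : ∃ M, 0 ≤ M ∧ ∀ z, w z ∈ Icc (-M) M := by
    obtain ⟨m1, h1⟩ : ∃ m, ∀ y, m ≤ w y := by
      rcases bdd_below hwc hwb hwt with h | ⟨z, h⟩
      exacts [⟨0, h⟩, ⟨_, h⟩]
    obtain ⟨m2, h2⟩ : ∃ m, ∀ y, m ≤ - w y := by
      have hb := hwb.neg
      have ht := hwt.neg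
      rcases bdd_below hwc.neg hb ht with h | ⟨z, h⟩
      · exact ⟨_, h⟩
      · exact ⟨_, h⟩
    refine ⟨max 0 (max (-m1) (-m2)), le_max_left _ _, fun z => ⟨?_, ?_⟩⟩
    · have : -m1 ≤ max 0 (max (-m1) (-m2)) := (le_max_left _ _).trans (le_max_right _ _)
      linarith [h1 z]
    · have : -m2 ≤ max 0 (max (-m1) (-m2)) := (le_max_right _ _).trans (le_max_right _ _)
      linarith [h2 z]
  have hubd : ∀ z, u z ∈ Icc (u z0) u2 := fun z => ⟨hmin z, hle z⟩
  -- no equilibria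
  have hne : ∀ z, w z = 0 → G (u z) ≠ 0 := by
    intro z hz hGz
    have hconst : ∀ t, u t = u z ∧ w t = 0 := by
      apply sol_unique hG hH (hup z0) hu hw (x := fun _ => u z) (y := fun _ => 0)
        (fun t => hasDerivAt_const t (u z)) (fun t => ?_) hubd hM (fun _ => hubd z)
        (fun _ => ⟨by linarith, hM0⟩) (t := z) rfl hz
      rw [hGz, mul_zero, add_zero]; exact hasDerivAt_const t _
    have h1 : u z = u2 := by
      refine tendsto_nhds_unique ?_ hut
      have : u = fun _ => u z := funext fun t => (hconst t).1
      rw [this]; exact tendsto_const_nhds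
    exact hnc fun t => ⟨by rw [(hconst t).1, h1], (hconst t).2⟩
  have hlt : ∀ z, u z < u2 := by
    intro z
    refine lt_of_le_of_ne (hle z) fun he => ?_
    have hloc : IsLocalMax u z := Eventually.of_forall fun y => by
      show u y ≤ u z
      rw [he]; exact hle y
    have hwz := hloc.hasDerivAt_eq_zero (hu z)
    exact hne z hwz (by rw [he, hGu2])
  have hinj : ∀ x y, u x = u y → w x = w y → x = y := by
    have key : ∀ x y, x < y → u x = u y → w x = w y → False := by
      intro x y hxy h1 h2
      set Z := y - x with hZ
      have hsh : ∀ z, HasDerivAt (fun z : ℝ => z + Z) 1 z := fun z => (hasDerivAt_id' z).add_const Z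
      have hper : ∀ t, u t = u (t + Z) ∧ w t = w (t + Z) := by
        apply sol_unique hG hH (hup z0) hu hw (x := fun t => u (t + Z)) (y := fun t => w (t + Z))
          (fun t => ?_) (fun t => ?_) hubd hM (fun t => hubd _) (fun t => hM _) (t := x)
        · show u x = u (x + Z)
          rw [hZ, add_sub_cancel]; exact h1
        · show w x = w (x + Z)
          rw [hZ, add_sub_cancel]; exact h2
        · have := (hu (t + Z)).comp t (hsh t)
          rw [mul_one] at this
          exact this
        · have := (hw (t + Z)).comp t (hsh t)
          rw [mul_one] at this
          exact this
      have hn : ∀ n : ℕ, u (z0 + n * Z) = u z0 := by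
        intro n
        induction n with
        | zero => simp
        | succ k ih =>
          rw [← ih, (hper (z0 + k * Z)).1]
          push_cast
          congr 1; ring
      have hlim : Tendsto (fun n : ℕ => z0 + n * Z) atTop atTop := by
        apply tendsto_atTop_add_const_left
        exact tendsto_natCast_atTop_atTop.atTop_mul_const (by linarith)
      have h3 := hut.comp hlim
      have h4 : (u ∘ fun n : ℕ => z0 + n * Z) = fun _ => u z0 := funext hn
      rw [h4] at h3
      have := tendsto_nhds_unique h3 tendsto_const_nhds
      linarith [hlt z0]
    intro x y h1 h2
    rcases lt_trichotomy x y with h | h | h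
    · exact (key x y h h1 h2).elim
    · exact h
    · exact (key y x h h1.symm h2.symm).elim
  have hG0 : 0 < G (u z0) := by
    refine lt_of_le_of_ne ?_ (hne z0 hw0).symm
    by_contra hn
    push Not at hn
    obtain ⟨ε, hε, hr⟩ := decr_right hu (hd0 z0 hw0) hw0 hn
    have h1 := (hr (z0 + ε / 2) ⟨by linarith, by linarith⟩).2
    linarith [hmin (z0 + ε / 2)]
  have hnegb : Tendsto (fun z : ℝ => -z) atTop atBot := tendsto_neg_atTop_atBot
  -- half orbit
  have half : ∀ (H u w : ℝ → ℝ) (z0 : ℝ), (∀ z, HasDerivAt u (w z) z) →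
      (∀ z, HasDerivAt w (G (u z) + H (u z) * w z) z) → w z0 = 0 → (∀ z, z0 < z → 0 < w z) →
      Tendsto u atTop (nhds u2) → Tendsto w atTop (nhds 0) →
      ∃ F, Sol (fun s => -2 * G (u2 - s)) (fun s => -(2 * H (u2 - s))) (u2 - u z0) F ∧
        (∀ s ∈ Ioo 0 (u2 - u z0), 0 < F s) ∧ F (u2 - u z0) = 0 := by
    intro H u w z0 hu hw h0 hpos h1 h2
    refine upper_sol (I := Ioi z0) (l := nhdsWithin z0 (Ioi z0)) isOpen_Ioi (convex_Ioi z0)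
      (fun x hx y hxy => lt_of_lt_of_le hx hxy) ⟨z0 + 1, lt_add_one z0⟩ hu hw hpos
      ?_ ?_ ?_ ?_ h1 h2
    · intro x hx
      have hx' : z0 < x := hx
      filter_upwards [Ioo_mem_nhdsGT hx'] with y hy
      exact ⟨hy.1, hy.2⟩
    · intro S hS
      obtain ⟨b, hb, hsub⟩ := (mem_nhdsGT_iff_exists_Ioo_subset' (lt_add_one z0)).1 hS
      exact ⟨b, hb, fun z hz hzb => hsub ⟨hz, hzb⟩⟩
    · exact ((hu z0).continuousAt.tendsto).mono_left nhdsWithin_le_nhds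
    · have := ((hw z0).continuousAt.tendsto).mono_left (nhdsWithin_le_nhds (s := Ioi z0))
      rwa [h0] at this
  obtain ⟨F, hF1, hF2, hF3⟩ := half H u w z0 hu hw hw0
    (w_pos_after hu hw hmin hw0 hG0 hlt hut hinj hne) hut hwt
  have hur := refl_u hu
  have hwr := refl_w hw
  have hrt : Tendsto (fun z => u (-z)) atTop (nhds u2) := hub.comp hnegb
  have hrw : Tendsto (fun z => -w (-z)) atTop (nhds 0) := by
    have := (hwb.comp hnegb).neg
    rw [neg_zero] at this
    exact this
  have hposr : ∀ z, -z0 < z → 0 < -w (-z) := by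
    refine w_pos_after (G := G) (H := fun x => - H x) (u := fun z => u (-z))
      (w := fun z => -w (-z)) (z0 := -z0) (u2 := u2) hur hwr ?_ ?_ ?_ ?_ hrt ?_ ?_
    · intro z
      show u (- -z0) ≤ u (-z)
      rw [neg_neg]; exact hmin _
    · show -w (- -z0) = 0
      rw [neg_neg, hw0, neg_zero]
    · show 0 < G (u (- -z0))
      rw [neg_neg]; exact hG0
    · exact fun z => hlt _
    · intro x y h1 h2
      have := hinj (-x) (-y) h1 (neg_inj.1 h2)
      exact neg_inj.1 this
    · intro z h1
      exact hne (-z) (neg_eq_zero.1 h1)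
  obtain ⟨E, hE1, hE2, hE3⟩ := half (fun x => - H x) (fun z => u (-z)) (fun z => -w (-z)) (-z0)
    hur hwr (by simp [hw0]) hposr hrt hrw
  simp only [neg_neg, mul_neg] at hE1 hE2 hE3
  exact ⟨u z0, hup z0, hlt z0, hG0, E, F, hE1, hF1, hE2, hF2, hE3, hF3⟩

/-- A monotone front from `u1` up to `u2`. -/
lemma front_sol {G H u w : ℝ → ℝ} {u1 u2 : ℝ}
    (hu : ∀ z, HasDerivAt u (w z) z) (hw : ∀ z, HasDerivAt w (G (u z) + H (u z) * w z) z)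
    (hub : Tendsto u atBot (nhds u1)) (hut : Tendsto u atTop (nhds u2))
    (hwb : Tendsto w atBot (nhds 0)) (hwt : Tendsto w atTop (nhds 0)) (hpos : ∀ z, 0 < w z) :
    ∃ F, Sol (fun s => -2 * G (u2 - s)) (fun s => -(2 * H (u2 - s))) (u2 - u1) F ∧
      (∀ s ∈ Ioo 0 (u2 - u1), 0 < F s) ∧ F (u2 - u1) = 0 := by
  refine upper_sol (I := univ) (l := atBot) isOpen_univ convex_univ
    (fun x _ y _ => mem_univ y) univ_nonempty hu hw (fun z _ => hpos z) ?_ ?_ hub hwb hut hwt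
  · intro x _
    filter_upwards [eventually_lt_atBot x] with y hy
    exact ⟨mem_univ y, hy⟩
  · intro S hS
    obtain ⟨b, hb⟩ := mem_atBot_sets.1 hS
    exact ⟨b, mem_univ b, fun z _ hz => hb z hz.le⟩

lemma back_sol {G H u w : ℝ → ℝ} {u1 u2 : ℝ}
    (hu : ∀ z, HasDerivAt u (w z) z) (hw : ∀ z, HasDerivAt w (G (u z) + H (u z) * w z) z)
    (hub : Tendsto u atBot (nhds u2)) (hut : Tendsto u atTop (nhds u1))
    (hwb : Tendsto w atBot (nhds 0)) (hwt : Tendsto w atTop (nhds 0)) (hneg : ∀ z, w z < 0) :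
    ∃ F, Sol (fun s => -2 * G (u2 - s)) (fun s => 2 * H (u2 - s)) (u2 - u1) F ∧
      (∀ s ∈ Ioo 0 (u2 - u1), 0 < F s) ∧ F (u2 - u1) = 0 := by
  have h1 : Tendsto (fun z => -w (-z)) atTop (nhds 0) := by
    have := (hwb.comp tendsto_neg_atTop_atBot).neg
    rw [neg_zero] at this
    exact this
  have h2 : Tendsto (fun z => -w (-z)) atBot (nhds 0) := by
    have := (hwt.comp tendsto_neg_atBot_atTop).neg
    rw [neg_zero] at this
    exact this
  have := front_sol (G := G) (H := fun x => - H x) (refl_u hu) (refl_w hw)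
    (hut.comp tendsto_neg_atBot_atTop) (hub.comp tendsto_neg_atTop_atBot) h2 h1
    (fun z => by linarith [hneg (-z)])
  simpa only [neg_neg, mul_neg] using this

/-! ### Abstract form of the main result -/

lemma setup_abs {G : ℝ → ℝ} {ℓ u0 u2 d : ℝ} (hG : ContDiffOn ℝ 1 G (Ioi 0))
    (h2 : u0 < u2)
    (hGneg : ∀ x ∈ Ioo u0 u2, G x < 0) (hGpos : ∀ x ∈ Ioo ℓ u0, 0 < G x)
    (hd : d < 0) (hslope : HasDerivAt G d u0) (hGu0 : G u0 = 0) :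
    ∀ T, u2 - u0 < T → T ≤ u2 - ℓ → T < u2 → Setup (fun s => -2 * G (u2 - s)) (u2 - u0) T := by
  intro T hT1 hT2 hT3
  have hcont : ContinuousOn (fun s => -2 * G (u2 - s)) (Icc 0 T) := by
    apply continuousOn_const.mul
    apply hG.continuousOn.comp (continuous_const.sub continuous_id).continuousOn
    intro s hs
    show 0 < u2 - s
    linarith [hs.2]
  refine ⟨by linarith, hT1, hcont, ?_, ?_, ?_⟩
  · intro s hs
    have := hGneg (u2 - s) ⟨by linarith [hs.2], by linarith [hs.1]⟩
    show 0 < -2 * G (u2 - s)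
    linarith
  · intro s hs
    have := hGpos (u2 - s) ⟨by linarith [hs.2], by linarith [hs.1]⟩
    show -2 * G (u2 - s) < 0
    linarith
  · have h1 := hasDerivAt_iff_tendsto_slope.1 hslope
    have h3 : ∀ᶠ y in nhdsWithin u0 {u0}ᶜ, slope G u0 y < d / 2 :=
      h1.eventually (gt_mem_nhds (by linarith))
    have h4 : ∀ᶠ y in nhdsWithin u0 (Ioi u0), slope G u0 y < d / 2 :=
      h3.filter_mono (nhdsWithin_mono _ (fun y hy => ne_of_gt hy))
    obtain ⟨b, hb, hsub⟩ := (mem_nhdsGT_iff_exists_Ioo_subset' (lt_add_one u0)).1 h4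
    have hb' : u0 < b := hb
    refine ⟨-d, by linarith, b - u0, by linarith, fun s hs => ?_⟩
    have h5 : slope G u0 (u2 - s) < d / 2 :=
      hsub ⟨by linarith [hs.2], by linarith [hs.1]⟩
    rw [slope_def_field, hGu0, sub_zero] at h5
    have h6 : 0 < u2 - s - u0 := by linarith [hs.2]
    rw [div_lt_iff₀ h6] at h5
    show -d * (u2 - u0 - s) ≤ -2 * G (u2 - s)
    nlinarith

lemma main_abs {G g2 fd : ℝ → ℝ} {ℓ u0 u2 d : ℝ} (hG : ContDiffOn ℝ 1 G (Ioi 0))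
    (hg2 : ContDiffOn ℝ 1 g2 (Ioi 0)) (hfd : ContDiffOn ℝ 1 fd (Ioi 0)) (hℓ : 0 ≤ ℓ)
    (h1 : ℓ < u0) (h2 : u0 < u2) (hg2pos : ∀ x, 0 < x → 0 < g2 x) (hGu2 : G u2 = 0)
    (hGbig : ∀ x, u2 < x → 0 < G x)
    (hGneg : ∀ x ∈ Ioo u0 u2, G x < 0) (hGpos : ∀ x ∈ Ioo ℓ u0, 0 < G x)
    (hGlow : ∀ x ∈ Ioc 0 ℓ, G x ≤ 0)
    (hd : d < 0) (hslope : HasDerivAt G d u0) (hGu0 : G u0 = 0)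
    (hex : ∃ μ, ∃ p ∈ Ioo (u2 - u0) (u2 - ℓ), Closed (fun s => -2 * G (u2 - s))
      (fun s => 2 * g2 (u2 - s) * fd (u2 - s) + μ * (2 * g2 (u2 - s))) p) :
    ∃ μp : ℝ, ∀ μ : ℝ, (∃ u w : ℝ → ℝ, (∀ z, HasDerivAt u (w z) z) ∧
      (∀ z, HasDerivAt w (G (u z) + g2 (u z) * (fd (u z) + μ) * w z) z) ∧
      (∀ z, 0 < u z) ∧ HO u2 u w) ↔ μ = μp := by
  have hS := setup_abs hG h2 hGneg hGpos hd hslope hGu0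
  have hu0 : 0 < u0 := by linarith
  have hu2 : 0 < u2 := by linarith
  have hfun : ∀ μ, (fun s => 2 * (g2 (u2 - s) * (fd (u2 - s) + μ))) =
      fun s => 2 * g2 (u2 - s) * fd (u2 - s) + μ * (2 * g2 (u2 - s)) := fun μ => by
    funext s; ring
  have hH : ∀ μ, ContDiffOn ℝ 1 (fun x => g2 x * (fd x + μ)) (Ioi 0) := fun μ =>
    hg2.mul (hfd.add contDiffOn_const)
  have fwd : ∀ μ, (∃ u w : ℝ → ℝ, (∀ z, HasDerivAt u (w z) z) ∧
      (∀ z, HasDerivAt w (G (u z) + g2 (u z) * (fd (u z) + μ) * w z) z) ∧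
      (∀ z, 0 < u z) ∧ HO u2 u w) → ∃ p ∈ Ioo (u2 - u0) (u2 - ℓ),
      Closed (fun s => -2 * G (u2 - s))
        (fun s => 2 * g2 (u2 - s) * fd (u2 - s) + μ * (2 * g2 (u2 - s))) p := by
    rintro μ ⟨u, w, hu, hw, hpos, hb, ht, hwb, hwt, hnc⟩
    obtain ⟨a, ha0, ha2, hGa, hcl⟩ := homoclinic_closed (H := fun x => g2 x * (fd x + μ))
      hG (hH μ) hu2 hGu2 hGbig hu hw hpos hb ht hwb hwt hnc
    have haℓ : ℓ < a := by
      by_contra hn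
      push Not at hn
      linarith [hGlow a ⟨ha0, hn⟩]
    have hau0 : a < u0 := by
      by_contra hn
      push Not at hn
      rcases eq_or_lt_of_le hn with rfl | hn
      · linarith
      · linarith [hGneg a ⟨hn, ha2⟩]
    refine ⟨u2 - a, ⟨by linarith, by linarith⟩, ?_⟩
    rw [← hfun μ]
    exact hcl
  obtain ⟨μp, p, hp, hcl⟩ := hex
  have huniq : ∀ μ1 μ2 p1 p2, p1 ∈ Ioo (u2 - u0) (u2 - ℓ) → p2 ∈ Ioo (u2 - u0) (u2 - ℓ) →
      Closed (fun s => -2 * G (u2 - s))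
        (fun s => 2 * g2 (u2 - s) * fd (u2 - s) + μ1 * (2 * g2 (u2 - s))) p1 →
      Closed (fun s => -2 * G (u2 - s))
        (fun s => 2 * g2 (u2 - s) * fd (u2 - s) + μ2 * (2 * g2 (u2 - s))) p2 → ¬ μ1 < μ2 := by
    intro μ1 μ2 p1 p2 hp1 hp2 hc1 hc2
    refine closed_unique (k := fun s => 2 * g2 (u2 - s))
      (r := fun s => 2 * g2 (u2 - s) * fd (u2 - s)) (s0 := u2 - u0) (L := u2 - ℓ)
      (fun T hT1 hT2 => hS T hT1 hT2.le (by linarith)) ?_ hp1 hp2 hc1 hc2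
    intro s hs
    have := hg2pos (u2 - s) (by linarith [hs.2])
    show 0 < 2 * g2 (u2 - s)
    linarith
  refine ⟨μp, fun μ => ⟨fun h => ?_, ?_⟩⟩
  · obtain ⟨p', hp', hcl'⟩ := fwd μ h
    exact le_antisymm (not_lt.1 (huniq _ _ _ _ hp hp' hcl hcl'))
      (not_lt.1 (huniq _ _ _ _ hp' hp hcl' hcl))
  · rintro rfl
    obtain ⟨E, F, hE, hF, hEp, hFp, hE0, hF0⟩ := hcl
    have hq : u2 - (u2 - p) = p := by ring
    rw [← hfun μ] at hE
    have hF' : Sol (fun s => -2 * G (u2 - s))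
        (fun s => -(2 * (g2 (u2 - s) * (fd (u2 - s) + μ)))) p F := by
      have h3 : (fun s => -(2 * (g2 (u2 - s) * (fd (u2 - s) + μ)))) =
        fun s => -(2 * g2 (u2 - s) * fd (u2 - s) + μ * (2 * g2 (u2 - s))) := by
        funext s; ring
      rw [h3]; exact hF
    have hqpos : 0 < u2 - p := by linarith [hp.2]
    have hsubs : Icc (u2 - p) u2 ⊆ Ioi 0 := fun x hx => hqpos.trans_le hx.1
    -- Lipschitz bound near u2
    have hsubs2 : Icc (u2 / 2) u2 ⊆ Ioi 0 := fun x hx => by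
      have := hx.1
      show 0 < x
      linarith
    obtain ⟨C, hC⟩ := (hG.mono hsubs2).exists_lipschitzOnWith one_ne_zero (convex_Icc _ _)
      isCompact_Icc
    have hPg : ∀ s ∈ Ioc 0 (u2 / 2), -2 * G (u2 - s) ≤ (2 * (C : ℝ) + 1) * s := by
      intro s hs
      have h3 := hC.dist_le_mul (u2 - s) ⟨by linarith [hs.2], by linarith [hs.1]⟩ u2
        ⟨by linarith, le_rfl⟩
      rw [hGu2, Real.dist_eq, Real.dist_eq, sub_zero, sub_sub_cancel_left, abs_neg,
        abs_of_pos hs.1] at h3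
      have h4 := neg_abs_le (G (u2 - s))
      nlinarith [hs.1]
    obtain ⟨u, w, hu, hw, l1, l2, l3, l4, hu00, hpu⟩ := glue_orbit (G := G)
      (H := fun x => g2 x * (fd x + μ)) (E := E) (F := F) (u2 := u2) (p := u2 - p)
      (s0 := u2 - u0) (g := 2 * (C : ℝ) + 1) (r := u2 / 2)
      (by linarith [hp.1]) (hG.continuousOn.mono hsubs) ((hH μ).continuousOn.mono hsubs)
      (by rw [hq]; exact hS p hp.1 hp.2.le (by linarith [hp.2]))
      (by rw [hq]; exact hE) (by rw [hq]; exact hEp) (by rw [hq]; exact hE0)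
      (by rw [hq]; exact hF') (by rw [hq]; exact hFp) (by rw [hq]; exact hF0)
      (hGpos _ ⟨by linarith [hp.2], by linarith [hp.1]⟩)
      (by have := C.2; positivity) (by linarith) hPg
    refine ⟨u, w, hu, hw, fun z => hqpos.trans_le (hpu z), l1, l2, l3, l4, ?_⟩
    intro hcon
    have := (hcon 0).1
    rw [hu00] at this
    linarith [hp.1]

/-! ### Concrete facts about `f`, `g₁`, `g₂` -/

lemma contDiffOn_one_of_hasDerivAt {φ φ' : ℝ → ℝ} {s : Set ℝ} (hs : IsOpen s)
    (h : ∀ x ∈ s, HasDerivAt φ (φ' x) x) (hc : ContinuousOn φ' s) : ContDiffOn ℝ 1 φ s := by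
  rw [contDiffOn_one_iff_derivWithin hs.uniqueDiffOn]
  refine ⟨fun x hx => (h x hx).differentiableAt.differentiableWithinAt, ?_⟩
  refine hc.congr fun x hx => ?_
  rw [derivWithin_of_isOpen hs hx, (h x hx).deriv]

lemma A1.hasDerivAt {V V' V'' : ℝ → ℝ} {UM : ℝ} (h : A1 V V' V'' UM) :
    ∀ u ∈ Ioi (0:ℝ), HasDerivAt V (V' u) u := fun u hu =>
  (h.1 u (mem_Ici.2 (le_of_lt hu))).hasDerivAt (Ici_mem_nhds hu)

lemma A1.contV {V V' V'' : ℝ → ℝ} {UM : ℝ} (h : A1 V V' V'' UM) : ContinuousOn V (Ici 0) :=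
  fun u hu => (h.1 u hu).continuousWithinAt

lemma A1.V'0 {V V' V'' : ℝ → ℝ} {UM : ℝ} (h : A1 V V' V'' UM) : 0 ≤ V' 0 := by
  have h1 : Tendsto V' (nhdsWithin 0 (Ioi 0)) (nhds (V' 0)) :=
    ((h.2.1 0 (mem_Ici.2 le_rfl)).tendsto).mono_left (nhdsWithin_mono _ Ioi_subset_Ici_self)
  refine ge_of_tendsto h1 ?_
  filter_upwards [self_mem_nhdsWithin] with x hx
  exact (h.2.2.2.2.1 x hx).le

lemma sign_const {φ : ℝ → ℝ} {I : Set ℝ} (hI : OrdConnected I) (hc : ContinuousOn φ I)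
    (hne : ∀ x ∈ I, φ x ≠ 0) : (∀ x ∈ I, 0 < φ x) ∨ (∀ x ∈ I, φ x < 0) := by
  by_contra hcon
  push Not at hcon
  obtain ⟨⟨x, hx, hx0⟩, y, hy, hy0⟩ := hcon
  obtain ⟨z, hz, hz0⟩ := hI.isPreconnected.intermediate_value hx hy hc
    (show (0:ℝ) ∈ Icc (φ x) (φ y) from ⟨hx0, hy0⟩)
  exact hne z hz hz0

lemma A1.mono {V V' V'' : ℝ → ℝ} {UM : ℝ} (h : A1 V V' V'' UM) :
    StrictMonoOn V' (Icc 0 UM) := by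
  obtain ⟨-, hc, hd, hcc, -, -, -, hUM, hmax, hz⟩ := h
  have hsub : Ioo 0 UM ⊆ Ioi 0 := fun x hx => hx.1
  have hcI : ContinuousOn V' (Icc 0 UM) := hc.mono fun x hx => hx.1
  rcases sign_const (φ := V'') ordConnected_Ioo (hcc.mono hsub)
    (fun x hx h0 => absurd ((hz x hx.1).1 h0) hx.2.ne) with hs | hs
  · apply strictMonoOn_of_deriv_pos (convex_Icc _ _) hcI
    rw [interior_Icc]
    intro x hx
    rw [(hd x hx.1).deriv]; exact hs x hx
  · exfalso
    have : StrictAntiOn V' (Icc 0 UM) := by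
      apply strictAntiOn_of_deriv_neg (convex_Icc _ _) hcI
      rw [interior_Icc]
      intro x hx
      rw [(hd x hx.1).deriv]; exact hs x hx
    have h1 := this (a := UM / 2) (b := UM) ⟨by linarith, by linarith⟩ ⟨hUM.le, le_rfl⟩
      (by linarith)
    linarith [hmax (UM / 2) (by linarith)]

lemma A1.anti {V V' V'' : ℝ → ℝ} {UM : ℝ} (h : A1 V V' V'' UM) :
    StrictAntiOn V' (Ici UM) := by
  obtain ⟨-, hc, hd, hcc, -, -, -, hUM, hmax, hz⟩ := h
  have hsub : Ioi UM ⊆ Ioi 0 := fun x hx => hUM.trans hx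
  have hcI : ContinuousOn V' (Ici UM) := hc.mono fun x hx => hUM.le.trans hx
  rcases sign_const (φ := V'') ordConnected_Ioi (hcc.mono hsub)
    (fun x hx h0 => absurd ((hz x (hsub hx)).1 h0) (ne_of_gt hx)) with hs | hs
  · exfalso
    have : StrictMonoOn V' (Ici UM) := by
      apply strictMonoOn_of_deriv_pos (convex_Ici _) hcI
      rw [interior_Ici]
      intro x hx
      rw [(hd x (hsub hx)).deriv]; exact hs x hx
    have h1 := this (a := UM) (b := UM + 1) (mem_Ici.2 le_rfl) (mem_Ici.2 (by linarith))
      (by linarith)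
    linarith [hmax (UM + 1) (by linarith)]
  · apply strictAntiOn_of_deriv_neg (convex_Ici _) hcI
    rw [interior_Ici]
    intro x hx
    rw [(hd x (hsub hx)).deriv]; exact hs x hx

lemma fTV_hasDerivAt {V V' V'' : ℝ → ℝ} {UM K c : ℝ} (h : A1 V V' V'' UM) :
    ∀ u ∈ Ioi (0:ℝ), HasDerivAt (fTV V K c) (fdTV V' K u) u := by
  intro u hu
  have h1 := ((((hasDerivAt_id' u).const_mul K).sub (h.hasDerivAt u hu)).sub_const c).div_const K
  rw [mul_one] at h1
  exact h1

lemma fTV_cont {V V' V'' : ℝ → ℝ} {UM K c : ℝ} (h : A1 V V' V'' UM) :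
    ContinuousOn (fTV V K c) (Ici 0) :=
  ((((continuous_const.mul continuous_id).continuousOn).sub h.contV).sub
    continuousOn_const).div_const K

lemma fTV_contDiff {V V' V'' : ℝ → ℝ} {UM K c : ℝ} (h : A1 V V' V'' UM) :
    ContDiffOn ℝ 1 (fTV V K c) (Ioi 0) := by
  refine contDiffOn_one_of_hasDerivAt isOpen_Ioi (fTV_hasDerivAt h) ?_
  exact ((continuousOn_const.sub (h.2.1.mono Ioi_subset_Ici_self))).div_const K

lemma fdTV_contDiff {V V' V'' : ℝ → ℝ} {UM K : ℝ} (h : A1 V V' V'' UM) :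
    ContDiffOn ℝ 1 (fdTV V' K) (Ioi 0) := by
  have := contDiffOn_one_of_hasDerivAt isOpen_Ioi h.2.2.1 h.2.2.2.1
  exact (contDiffOn_const.sub this).div_const K

lemma kap_contDiff {κ : ℝ → ℝ} (h : A2 κ) : ContDiffOn ℝ 1 (fun u => κ (1 / u)) (Ioi 0) := by
  have h1 : ContDiffOn ℝ 1 (fun u : ℝ => 1 / u) (Ioi 0) :=
    contDiffOn_const.div contDiffOn_id fun x (hx : x ∈ Ioi (0:ℝ)) => (ne_of_gt hx : x ≠ 0)
  exact h.1.comp h1 (fun x (hx : 0 < x) => one_div_pos.2 hx)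

lemma kap_pos {κ : ℝ → ℝ} (h : A2 κ) {u : ℝ} (hu : 0 < u) : 0 < κ (1 / u) :=
  h.2 _ (one_div_pos.2 hu)

lemma g1_contDiff {κ : ℝ → ℝ} {τ : ℝ} (h : A2 κ) (hτ : 0 < τ) :
    ContDiffOn ℝ 1 (g1TV κ τ) (Ioi 0) :=
  contDiffOn_const.div (contDiffOn_const.mul (kap_contDiff h))
    fun _ hu => (mul_pos hτ (kap_pos h hu)).ne'

lemma g2_contDiff {κ : ℝ → ℝ} {τ : ℝ} (h : A2 κ) (hτ : 0 < τ) :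
    ContDiffOn ℝ 1 (g2TV κ τ) (Ioi 0) :=
  contDiffOn_id.div (contDiffOn_const.mul (kap_contDiff h))
    fun _ hu => (mul_pos (by linarith) (kap_pos h hu)).ne'

lemma g1_pos {κ : ℝ → ℝ} {τ : ℝ} (h : A2 κ) (hτ : 0 < τ) {u : ℝ} (hu : 0 < u) :
    0 < g1TV κ τ u := one_div_pos.2 (mul_pos hτ (kap_pos h hu))

lemma g2_pos {κ : ℝ → ℝ} {τ : ℝ} (h : A2 κ) (hτ : 0 < τ) {u : ℝ} (hu : 0 < u) :
    0 < g2TV κ τ u := div_pos hu (mul_pos (by linarith) (kap_pos h hu))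

/-- Shape of `f`. -/
lemma f_shape {V V' V'' : ℝ → ℝ} {UM K c p q : ℝ} (h : A1 V V' V'' UM) (hK : 0 < K)
    (hp : p ∈ Ioo 0 UM) (hpK : V' p = K) (hq : UM < q) (hqK : V' q = K) :
    StrictMonoOn (fTV V K c) (Icc 0 p) ∧ StrictAntiOn (fTV V K c) (Icc p q) ∧
      StrictMonoOn (fTV V K c) (Ici q) ∧ ∀ x ∈ Ioo p q, fdTV V' K x < 0 := by
  have hm := h.mono
  have ha := h.anti
  have hUM : 0 < UM := hp.1.trans hp.2
  have hc := fTV_cont (K := K) (c := c) h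
  have hd := fTV_hasDerivAt (K := K) (c := c) h
  have hneg : ∀ x ∈ Ioo p q, fdTV V' K x < 0 := by
    intro x hx
    have : K < V' x := by
      rcases le_total x UM with hxU | hxU
      · rw [← hpK]
        exact hm ⟨hp.1.le, hp.2.le⟩ ⟨(hp.1.trans hx.1).le, hxU⟩ hx.1
      · rw [← hqK]
        exact ha hxU (mem_Ici.2 hq.le) hx.2
    exact div_neg_of_neg_of_pos (by linarith) hK
  refine ⟨?_, ?_, ?_, hneg⟩
  · apply strictMonoOn_of_deriv_pos (convex_Icc _ _) (hc.mono fun x hx => hx.1)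
    rw [interior_Icc]
    intro x hx
    rw [(hd x hx.1).deriv]
    have : V' x < K := by
      rw [← hpK]
      exact hm ⟨hx.1.le, (hx.2.trans hp.2).le⟩ ⟨hp.1.le, hp.2.le⟩ hx.2
    exact div_pos (by linarith) hK
  · apply strictAntiOn_of_deriv_neg (convex_Icc _ _) (hc.mono fun x hx => hp.1.le.trans hx.1)
    rw [interior_Icc]
    intro x hx
    rw [(hd x (hp.1.trans hx.1)).deriv]
    exact hneg x hx
  · apply strictMonoOn_of_deriv_pos (convex_Ici _)
      (hc.mono fun x hx => (hUM.trans hq).le.trans hx)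
    rw [interior_Ici]
    intro x hx
    have hx' : q < x := hx
    rw [(hd x (hUM.trans (hq.trans hx'))).deriv]
    have : V' x < K := by
      rw [← hqK]
      exact ha (mem_Ici.2 hq.le) (mem_Ici.2 (hq.trans hx').le) hx'
    exact div_pos (by linarith) hK

/-- Location of `u₀ < u₂` and signs of `f` to the right of `p`. -/
lemma f_signs {f : ℝ → ℝ} {p q u0 u2 : ℝ}
    (hanti : StrictAntiOn f (Icc p q)) (hmono : StrictMonoOn f (Ici q)) 
    (hpu0 : p < u0) (h02 : u0 < u2) (hf0 : f u0 = 0) (hf2 : f u2 = 0) :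
    u0 < q ∧ q < u2 ∧ (∀ x ∈ Ico p u0, 0 < f x) ∧ (∀ x ∈ Ioo u0 u2, f x < 0) ∧
      (∀ x, u2 < x → 0 < f x) := by
  have h0q : u0 < q := by
    by_contra hn
    push Not at hn
    have := hmono (mem_Ici.2 hn) (mem_Ici.2 (hn.trans h02.le)) h02
    linarith
  have hq2 : q < u2 := by
    by_contra hn
    push Not at hn
    have := hanti ⟨hpu0.le, h0q.le⟩ ⟨(hpu0.trans h02).le, hn⟩ h02
    linarith
  refine ⟨h0q, hq2, ?_, ?_, ?_⟩
  · intro x hx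
    have := hanti ⟨hx.1, (hx.2.trans h0q).le⟩ ⟨hpu0.le, h0q.le⟩ hx.2
    linarith
  · intro x hx
    rcases le_total x q with h | h
    · have := hanti ⟨hpu0.le, h0q.le⟩ ⟨(hpu0.trans hx.1).le, h⟩ hx.1
      linarith
    · have := hmono (mem_Ici.2 h) (mem_Ici.2 hq2.le) hx.2
      linarith
  · intro x hx
    have := hmono (mem_Ici.2 hq2.le) (mem_Ici.2 (hq2.trans hx).le) hx
    linarith

lemma G_contDiff {V V' V'' κ : ℝ → ℝ} {UM K c τ : ℝ} (h : A1 V V' V'' UM) (h2 : A2 κ)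
    (hτ : 0 < τ) : ContDiffOn ℝ 1 (fun u => g1TV κ τ u * fTV V K c u) (Ioi 0) :=
  (g1_contDiff h2 hτ).mul (fTV_contDiff h)

lemma G_deriv {V V' V'' κ : ℝ → ℝ} {UM K c τ u0 : ℝ} (h : A1 V V' V'' UM) (h2 : A2 κ)
    (hτ : 0 < τ) (hu0 : 0 < u0) (hf0 : fTV V K c u0 = 0) :
    HasDerivAt (fun u => g1TV κ τ u * fTV V K c u) (g1TV κ τ u0 * fdTV V' K u0) u0 := by
  have h1 : DifferentiableAt ℝ (g1TV κ τ) u0 :=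
    ((g1_contDiff h2 hτ).differentiableOn one_ne_zero).differentiableAt (Ioi_mem_nhds hu0)
  have h3 := h1.hasDerivAt.mul (fTV_hasDerivAt (K := K) (c := c) h u0 hu0)
  rw [hf0, mul_zero, zero_add] at h3
  exact h3

/-- The comparison function for `D₂`. -/
lemma W_facts {κ : ℝ → ℝ} (h : A2 κ) (hH : CondH κ) {u2 s1 C : ℝ} (hs1 : s1 < u2) (hC : 0 < C) :
    ∃ W : ℝ → ℝ, (∀ s ∈ Ico s1 u2, HasDerivAt W (C * ((u2 - s) / κ (1 / (u2 - s)))) s) ∧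
      ¬ ∃ B, ∀ s ∈ Ioo s1 u2, W s ≤ B := by
  set j : ℝ → ℝ := fun ρ => 1 / (ρ ^ 3 * κ ρ) with hj
  have hjc : ContinuousOn j (Ioi 0) :=
    continuousOn_const.div ((continuous_pow 3).continuousOn.mul h.1.continuousOn)
      fun x hx => (mul_pos (pow_pos hx 3) (h.2 x hx)).ne'
  have hjpos : ∀ ρ, 0 < ρ → 0 < j ρ := fun ρ hρ =>
    one_div_pos.2 (mul_pos (pow_pos hρ 3) (h.2 ρ hρ))
  have hjint : ∀ b, 0 < b → IntervalIntegrable j volume 1 b := fun b hb =>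
    (hjc.mono (fun x hx => (lt_min one_pos hb).trans_le hx.1)).intervalIntegrable
  refine ⟨fun s => C * ∫ ρ in (1:ℝ)..(1 / (u2 - s)), j ρ, ?_, ?_⟩
  · intro s hs
    have hx : 0 < u2 - s := by linarith [hs.2]
    have hb : 0 < 1 / (u2 - s) := one_div_pos.2 hx
    have h1 : HasDerivAt (fun b => ∫ ρ in (1:ℝ)..b, j ρ) (j (1 / (u2 - s))) (1 / (u2 - s)) :=
      intervalIntegral.integral_hasDerivAt_right (hjint _ hb)
        (hjc.stronglyMeasurableAtFilter isOpen_Ioi _ hb) (hjc.continuousAt (Ioi_mem_nhds hb))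
    have h2 : HasDerivAt (fun s => 1 / (u2 - s)) (1 / (u2 - s) ^ 2) s := by
      have h3 : HasDerivAt (fun s => u2 - s) (-1) s := by
        simpa using (hasDerivAt_id s).const_sub u2
      have h4 := h3.inv hx.ne'
      simp only [neg_neg] at h4
      simp only [one_div] at h4 ⊢
      exact h4
    have h5 := (h1.comp s h2).const_mul C
    refine h5.congr_deriv ?_
    have hk := kap_pos h hx
    simp only [hj]
    field_simp
  · rintro ⟨B, hB⟩
    apply hH
    set T := max 1 (1 / (u2 - s1)) + 1 with hT
    have hT1 : 1 ≤ T := by linarith [le_max_left 1 (1 / (u2 - s1))]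
    refine integrableOn_Ioi_of_intervalIntegral_norm_bounded (f := j) (B / C) 1
      (b := fun b : ℝ => max 1 b) (l := atTop) ?_ ?_ ?_
    · intro b
      exact (intervalIntegrable_iff_integrableOn_Ioc_of_le (le_max_left _ _)).1
        (hjint _ (lt_of_lt_of_le one_pos (le_max_left _ _)))
    · exact tendsto_atTop_mono (fun b => le_max_right 1 b) tendsto_id
    · filter_upwards [eventually_ge_atTop T] with b hb
      have hb1 : 1 ≤ b := hT1.trans hb
      have hb0 : 0 < b := by linarith
      rw [max_eq_right hb1]
      have he : ∫ ρ in (1:ℝ)..b, ‖j ρ‖ = ∫ ρ in (1:ℝ)..b, j ρ := by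
        apply intervalIntegral.integral_congr
        intro x hx
        rw [uIcc_of_le hb1] at hx
        exact Real.norm_of_nonneg (hjpos x (by linarith [hx.1])).le
      rw [he, le_div_iff₀ hC]
      have hbi : 1 / b < u2 - s1 := by
        have hpos : 0 < u2 - s1 := by linarith
        rw [div_lt_comm₀ hb0 hpos]
        linarith [le_max_right 1 (1 / (u2 - s1))]
      have hmem : u2 - 1 / b ∈ Ioo s1 u2 := ⟨by linarith, by linarith [one_div_pos.2 hb0]⟩
      have : C * ∫ ρ in (1:ℝ)..(1 / (u2 - (u2 - 1 / b))), j ρ ≤ B := hB _ hmem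
      rw [sub_sub_cancel, one_div_one_div] at this
      linarith

theorem stmt5
    (V V' V'' κ : ℝ → ℝ) (τ UM K c K₁ : ℝ) (uMx umx : ℝ → ℝ)
    (hA1 : A1 V V' V'' UM) (hA2 : A2 κ) (hτ : 0 < τ) (hK : K ≠ 0)
    (huMx : UMaxHyp V' UM uMx) (humx : UMinHyp V' UM umx)
    (hK1 : K1Hyp V V' UM umx K₁)
    (hC : CondC V' κ UM K₁ K) (u0 u2 : ℝ)
    (hcase : ((K, c) ∈ D1 V V' UM uMx umx ∧
        ∃ u1 μb μf, ZerosD1 V K c u1 u0 u2 ∧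
          (∀ μ, HasHE1 V V' κ τ K c μ u1 u2 ↔ μ = μb) ∧
          (∀ μ, HasHE2 V V' κ τ K c μ u1 u2 ↔ μ = μf) ∧ μb < μf) ∨
      ((K, c) ∈ D2 V V' umx K₁ ∧ ZerosD2 V K c u0 u2)) :
    ∃ μp : ℝ, ∀ μ : ℝ, HasHO V V' κ τ K c μ u2 ↔ μ = μp := by
  obtain ⟨hKlt, hKpos0, hqm⟩ : K < V' UM ∧ V' 0 < K ∧ cmf V umx K < c := by
    rcases hcase with ⟨hD, -⟩ | ⟨hD, -⟩
    · exact ⟨hD.2.1, hD.1, (le_max_right _ _).trans_lt hD.2.2.1⟩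
    · have hKK1 : K < K₁ := by
        rcases hD with h | h
        · exact h.2.1
        · exact h.2.1
      have hV0 : V' 0 < K := by
        rcases hC with h | h
        · exact absurd h.1 (not_lt.2 hKK1.le)
        · exact h.2.1
      refine ⟨hKK1.trans hK1.2.1, hV0, ?_⟩
      rcases hD with h | h
      · have h3 : c = c0v V := h.2.2
        rw [h3]
        exact hK1.2.2.1 K (hA1.V'0.trans_lt hV0) hKK1
      · exact h.2.2.1
  have hK0 : 0 < K := hA1.V'0.trans_lt hKpos0
  obtain ⟨hp, hpK⟩ := huMx K hKpos0 hKlt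
  obtain ⟨hq, hqK⟩ := humx K hK0 hKlt
  set p := uMx K with hpdef
  set q := umx K with hqdef
  obtain ⟨hm1, ha2, hm3, hfdneg⟩ := f_shape (c := c) hA1 hK0 hp hpK hq hqK
  have hGc := G_contDiff (K := K) (c := c) hA1 hA2 hτ
  have hg2c := g2_contDiff hA2 hτ
  have hfdc := fdTV_contDiff (K := K) hA1
  have hpq : p ≤ q := (hp.2.trans hq).le
  have h0p : (0:ℝ) ∈ Icc 0 p := ⟨le_rfl, hp.1.le⟩
  have hpp : p ∈ Icc 0 p := ⟨hp.1.le, le_rfl⟩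
  have hf0v : fTV V K c 0 = (c0v V - c) / K := by simp [fTV, c0v]
  -- reduction to the abstract form
  have reduce : ∀ ℓ, 0 ≤ ℓ → ℓ < u0 → u0 < u2 → fTV V K c u0 = 0 → fTV V K c u2 = 0 → p < u0 →
      (∀ x ∈ Ioo ℓ u0, 0 < fTV V K c x) → (∀ x ∈ Ioc 0 ℓ, fTV V K c x ≤ 0) →
      (∃ μ, ∃ r ∈ Ioo (u2 - u0) (u2 - ℓ),
        Closed (fun s => -2 * (g1TV κ τ (u2 - s) * fTV V K c (u2 - s)))
        (fun s => 2 * g2TV κ τ (u2 - s) * fdTV V' K (u2 - s) + μ * (2 * g2TV κ τ (u2 - s))) r) →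
      ∃ μp : ℝ, ∀ μ : ℝ, HasHO V V' κ τ K c μ u2 ↔ μ = μp := by
    intro ℓ hℓ hℓ0 h02 hf0 hf2 hpu0 hpos hlow hex
    obtain ⟨h0q, hq2, -, hneg, hbig⟩ := f_signs ha2 hm3 hpu0 h02 hf0 hf2
    have hu0 : 0 < u0 := hℓ.trans_lt hℓ0
    obtain ⟨μp, hμp⟩ := main_abs (G := fun u => g1TV κ τ u * fTV V K c u) (g2 := g2TV κ τ)
      (fd := fdTV V' K) (ℓ := ℓ) (u0 := u0) (u2 := u2) hGc hg2c hfdc hℓ hℓ0 h02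
      (fun x hx => g2_pos hA2 hτ hx) (by simp only [hf2, mul_zero])
      (fun x hx => mul_pos (g1_pos hA2 hτ (by linarith)) (hbig x hx))
      (fun x hx => mul_neg_of_pos_of_neg (g1_pos hA2 hτ (by linarith [hx.1])) (hneg x hx))
      (fun x hx => mul_pos (g1_pos hA2 hτ (by linarith [hx.1])) (hpos x hx))
      (fun x hx => mul_nonpos_of_nonneg_of_nonpos (g1_pos hA2 hτ hx.1).le (hlow x hx))
      (mul_neg_of_pos_of_neg (g1_pos hA2 hτ hu0) (hfdneg u0 ⟨hpu0, h0q⟩))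
      (G_deriv hA1 hA2 hτ hu0 hf0) (by simp only [hf0, mul_zero]) hex
    refine ⟨μp, fun μ => ?_⟩
    rw [← hμp μ]
    constructor
    · rintro ⟨u, w, ⟨h1, h2⟩, h3, h4⟩
      exact ⟨u, w, h1, h2, h3, h4⟩
    · rintro ⟨u, w, h1, h2, h3, h4⟩
      exact ⟨u, w, ⟨h1, h2⟩, h3, h4⟩
  rcases hcase with ⟨hD, u1, μb, μf, ⟨hu1, h10, h02, hf1, hf0, hf2, -⟩, hb, hf, hlt⟩ |
    ⟨hD, hu0, h02, hf0, hf2, -⟩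
  · -- case D1
    have hpu0 : p < u0 := by
      by_contra hn
      push Not at hn
      have := hm1 ⟨hu1.le, h10.le.trans hn⟩ ⟨(hu1.trans h10).le, hn⟩ h10
      linarith
    obtain ⟨h0q, hq2, hposr, hneg, hbig⟩ := f_signs ha2 hm3 hpu0 h02 hf0 hf2
    have hu1p : u1 < p := by
      by_contra hn
      push Not at hn
      have := hposr u1 ⟨hn, h10⟩
      linarith
    have hpos : ∀ x ∈ Ioo u1 u0, 0 < fTV V K c x := by
      intro x hx
      rcases le_total p x with h | h
      · exact hposr x ⟨h, hx.2⟩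
      · have := hm1 ⟨hu1.le, hu1p.le⟩ ⟨(hu1.trans hx.1).le, h⟩ hx.1
        linarith
    have hlow : ∀ x ∈ Ioc 0 u1, fTV V K c x ≤ 0 := by
      intro x hx
      have := hm1.monotoneOn ⟨hx.1.le, hx.2.trans hu1p.le⟩ ⟨hu1.le, hu1p.le⟩ hx.2
      linarith
    refine reduce u1 hu1.le h10 h02 hf0 hf2 hpu0 hpos hlow ?_
    have hu0 : 0 < u0 := hu1.trans h10
    have hS := setup_abs (ℓ := u1) hGc h02
      (fun x hx => mul_neg_of_pos_of_neg (g1_pos hA2 hτ (by linarith [hx.1])) (hneg x hx))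
      (fun x hx => mul_pos (g1_pos hA2 hτ (by linarith [hx.1])) (hpos x hx))
      (mul_neg_of_pos_of_neg (g1_pos hA2 hτ hu0) (hfdneg u0 ⟨hpu0, h0q⟩))
      (G_deriv hA1 hA2 hτ hu0 hf0) (by simp only [hf0, mul_zero])
      (u2 - u1) (by linarith) le_rfl (by linarith)
    obtain ⟨ub, wb, ⟨b1, b2⟩, -, b3, b4, b5, b6, b7⟩ := (hb μb).2 rfl
    obtain ⟨uf, wf, ⟨e1, e2⟩, -, e3, e4, e5, e6, e7⟩ := (hf μf).2 rfl
    obtain ⟨Eb, hEb, hEbp, hEbL⟩ := front_sol (G := fun u => g1TV κ τ u * fTV V K c u)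
      (H := fun u => g2TV κ τ u * hTV V' K μb u) b1 b2 b3 b4 b5 b6 b7
    obtain ⟨Ef, hEf, hEfp, hEfL⟩ := back_sol (G := fun u => g1TV κ τ u * fTV V K c u)
      (H := fun u => g2TV κ τ u * hTV V' K μf u) e1 e2 e3 e4 e5 e6 e7
    have hmaps : MapsTo (fun s => u2 - s) (Icc 0 (u2 - u1)) (Ioi 0) := fun s hs => by
      show 0 < u2 - s
      linarith [hs.2]
    have hsub : ContinuousOn (fun s => u2 - s) (Icc 0 (u2 - u1)) :=
      (continuous_const.sub continuous_id).continuousOn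
    have hk : ContinuousOn (fun s => 2 * g2TV κ τ (u2 - s)) (Icc 0 (u2 - u1)) :=
      continuousOn_const.mul (hg2c.continuousOn.comp hsub hmaps)
    have hr : ContinuousOn (fun s => 2 * g2TV κ τ (u2 - s) * fdTV V' K (u2 - s))
      (Icc 0 (u2 - u1)) := hk.mul (hfdc.continuousOn.comp hsub hmaps)
    refine existence_D1 (r := fun s => 2 * g2TV κ τ (u2 - s) * fdTV V' K (u2 - s))
      (k := fun s => 2 * g2TV κ τ (u2 - s)) (μb := μb) (μf := μf) (Eb := Eb) (Ef := Ef)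
      hS hr hk ?_ hlt ?_ hEbp hEbL ?_ hEfp hEfL
    · intro s hs
      have := g2_pos hA2 hτ (show 0 < u2 - s by linarith [hs.2])
      show 0 < 2 * g2TV κ τ (u2 - s)
      linarith
    · convert hEb using 2 with s
      simp only [hTV]; ring
    · convert hEf using 2 with s
      simp only [hTV]; ring
  · -- case D2
    have hH : CondH κ := by
      have hKK1 : K < K₁ := by
        rcases hD with h | h
        · exact h.2.1
        · exact h.2.1
      rcases hC with h | h
      · exact absurd h.1 (not_lt.2 hKK1.le)
      · exact h.1
    have hf00 : 0 ≤ fTV V K c 0 := by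
      rw [hf0v]
      apply div_nonneg _ hK0.le
      rcases hD with h | h
      · have : c = c0v V := h.2.2
        linarith
      · have : c < c0v V := h.2.2.2
        linarith
    have hpos1 : ∀ x ∈ Ioc 0 p, 0 < fTV V K c x := by
      intro x hx
      exact hf00.trans_lt (hm1 h0p ⟨hx.1.le, hx.2⟩ hx.1)
    have hpu0 : p < u0 := by
      by_contra hn
      push Not at hn
      linarith [hpos1 u0 ⟨hu0, hn⟩]
    obtain ⟨h0q, hq2, hposr, hneg, hbig⟩ := f_signs ha2 hm3 hpu0 h02 hf0 hf2
    have hpos : ∀ x ∈ Ioo 0 u0, 0 < fTV V K c x := by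
      intro x hx
      rcases le_total p x with h | h
      · exact hposr x ⟨h, hx.2⟩
      · exact hpos1 x ⟨hx.1, h⟩
    have hlow : ∀ x ∈ Ioc (0:ℝ) 0, fTV V K c x ≤ 0 := fun x hx => by linarith [hx.1, hx.2]
    refine reduce 0 le_rfl hu0 h02 hf0 hf2 hpu0 hpos hlow ?_
    have hS := setup_abs (ℓ := 0) hGc h02
      (fun x hx => mul_neg_of_pos_of_neg (g1_pos hA2 hτ (by linarith [hx.1])) (hneg x hx))
      (fun x hx => mul_pos (g1_pos hA2 hτ (by linarith [hx.1])) (hpos x hx))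
      (mul_neg_of_pos_of_neg (g1_pos hA2 hτ hu0) (hfdneg u0 ⟨hpu0, h0q⟩))
      (G_deriv hA1 hA2 hτ hu0 hf0) (by simp only [hf0, mul_zero])
    -- linear lower bound near 0
    obtain ⟨m, hm, δ, hδ, hlin⟩ : ∃ m > 0, ∃ δ > 0, ∀ x ∈ Ioc 0 δ, m * x ≤ fTV V K c x := by
      have h1 : ContinuousOn (fdTV V' K) (Ici 0) := (continuousOn_const.sub hA1.2.1).div_const K
      have h0 : 0 < fdTV V' K 0 := div_pos (by linarith) hK0
      have h2 : ∀ᶠ x in nhdsWithin 0 (Ici 0), fdTV V' K 0 / 2 < fdTV V' K x :=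
        (h1 0 (mem_Ici.2 le_rfl)).eventually (lt_mem_nhds (by linarith))
      have h3 : ∀ᶠ x in nhdsWithin 0 (Ioi 0), fdTV V' K 0 / 2 < fdTV V' K x :=
        h2.filter_mono (nhdsWithin_mono _ Ioi_subset_Ici_self)
      obtain ⟨b, hb, hsub⟩ := (mem_nhdsGT_iff_exists_Ioo_subset' one_pos).1 h3
      have hb' : 0 < b := hb
      refine ⟨fdTV V' K 0 / 2, by linarith, b, hb', fun x hx => ?_⟩
      obtain ⟨ξ, hξ, he⟩ := exists_hasDerivAt_eq_slope (fTV V K c) (fdTV V' K) hx.1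
        ((fTV_cont hA1).mono fun y hy => hy.1) (fun y hy => fTV_hasDerivAt hA1 y hy.1)
      have h4 : fdTV V' K 0 / 2 < fdTV V' K ξ := hsub ⟨hξ.1, hξ.2.trans_le hx.2⟩
      rw [he, sub_zero, lt_div_iff₀ hx.1] at h4
      linarith
    set s1 := u2 - min δ (u0 / 2) with hs1
    have hmin : 0 < min δ (u0 / 2) := lt_min hδ (by linarith)
    have hmin2 : min δ (u0 / 2) ≤ u0 / 2 := min_le_right _ _
    have hmin1 : min δ (u0 / 2) ≤ δ := min_le_left _ _
    obtain ⟨W, hW, hunb⟩ := W_facts hA2 hH (u2 := u2) (s1 := s1) (C := 2 * m / τ)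
      (by linarith) (by positivity)
    have hmaps : MapsTo (fun s => u2 - s) (Ico 0 (u2 - 0)) (Ioi 0) := fun s hs => by
      show 0 < u2 - s
      linarith [hs.2]
    have hsub : ContinuousOn (fun s => u2 - s) (Ico 0 (u2 - 0)) :=
      (continuous_const.sub continuous_id).continuousOn
    have hk : ContinuousOn (fun s => 2 * g2TV κ τ (u2 - s)) (Ico 0 (u2 - 0)) :=
      continuousOn_const.mul (hg2c.continuousOn.comp hsub hmaps)
    have hr : ContinuousOn (fun s => 2 * g2TV κ τ (u2 - s) * fdTV V' K (u2 - s))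
      (Ico 0 (u2 - 0)) := hk.mul (hfdc.continuousOn.comp hsub hmaps)
    refine existence_D2 (r := fun s => 2 * g2TV κ τ (u2 - s) * fdTV V' K (u2 - s))
      (k := fun s => 2 * g2TV κ τ (u2 - s)) (W := W)
      (W' := fun s => 2 * m / τ * ((u2 - s) / κ (1 / (u2 - s)))) (s1 := s1)
      (fun T hT1 hT2 => hS T hT1 hT2.le (by linarith)) (by linarith) ?_ hr hk ?_
      ⟨by linarith, by linarith⟩ ?_ ?_ ?_
    · intro s hs
      have h1 := hpos (u2 - s) ⟨by linarith [hs.2], by linarith [hs.1]⟩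
      have h2 := g1_pos hA2 hτ (show 0 < u2 - s by linarith [hs.2])
      have h3 := mul_pos h2 h1
      show -2 * (g1TV κ τ (u2 - s) * fTV V K c (u2 - s)) < 0
      linarith
    · intro s hs
      have := g2_pos hA2 hτ (show 0 < u2 - s by linarith [hs.2])
      show 0 < 2 * g2TV κ τ (u2 - s)
      linarith
    · intro s hs
      exact hW s ⟨hs.1, by linarith [hs.2]⟩
    · intro s hs
      have hx : 0 < u2 - s := by linarith [hs.2]
      have h1 := hlin (u2 - s) ⟨hx, by linarith [hs.1]⟩
      have h2 := g1_pos hA2 hτ hx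
      have h3 := mul_le_mul_of_nonneg_left h1 h2.le
      have hkp := kap_pos hA2 hx
      have h4 : 2 * m / τ * ((u2 - s) / κ (1 / (u2 - s))) =
          2 * (g1TV κ τ (u2 - s) * (m * (u2 - s))) := by
        simp only [g1TV]
        field_simp
      show 2 * m / τ * ((u2 - s) / κ (1 / (u2 - s))) ≤
        -(-2 * (g1TV κ τ (u2 - s) * fTV V K c (u2 - s)))
      rw [h4]
      linarith
    · rw [sub_zero]; exact hunb

end TrafficTW
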